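/- Let n, m, r, s be positive integers with 1 ≤ m < n, gcd(m, n) = 1 and s(n-m) - rn = 1, and let F_q be a finite field of order q and characteristic p, with p not dividing mn(n-m) and q ≥ (6·n!)². Then there exists t ∈ F_q such that the trinomial Y^n - t^r·Y^m + t^s is irreducible in F_q[Y] (hence the extension F_{q^n}/F_q is realized by this trinomial). -/

import Mathlib

/-!
After a substitution exchanging `m` and `n - m` one may assume `2 m ≤ n`. It suffices to find a
nonzero `t` in `F` and a root `a` of `f_t = Y ^ n - t ^ r Y ^ m + t ^ s` in the algebraic closure
`K` having `n` distinct conjugates under the `q`-power Frobenius, for then `f_t` is the minimal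
polynomial of `a` (`irreducible_of_hasRoot`). Such a root is found by bounding, for each `k < n`,
the number `A_k` of pairs `(t, a)` where `a` has exactly `k` conjugates.

*Monodromy.* Over `K(t)` the trinomial has Galois group `S_n` (`exists_aut_perm`). The parameter
and two distinct roots are rational functions of the ratio of the roots (`root_param`), which gives
double transitivity. The only nonzero value of `t` with a multiple root is given by
`n ^ n t = m ^ m (n - m) ^ (n - m)`; there is a single double root there, whose inertia group
contains a transposition. Consequently, for `k < n`, the ring `R = K[t, x₀, …, x_{k-1}]` generated
by `k` roots has the staircase monomials `∏ x_j ^ I_j`, `I_j < n - j`, as a basis over `K[t]`, so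
that its rank is `d = n (n - 1) ⋯ (n - k + 1)`, and for all but two values `t₀` of `t` its points
over `t₀` are the `k`-tuples of distinct roots of `f_{t₀}` (`exists_hom`).

*Point count.* The ring `R` has an endomorphism `Φ` with `t ↦ t ^ q` and `x_j ↦ x_{j'} ^ q`, where
`j ↦ j'` is a cyclic permutation (`exists_Phi`). A root `a` with exactly `k` conjugates gives a
point of `R`, namely the tuple of its conjugates, which is fixed by `Φ`. The fixed points are
counted by Stepanov's method (`Datum.stepanov`): a dimension count produces a nonzero element of
`R ⊗ R` of bounded degree which vanishes to order `M` along the diagonal (`Datum.exists_aux`); its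
pullback to the graph of `Φ` is nonzero and vanishes to order `M` at each fixed point, whereas the
number of zeros is bounded by the degree (`Datum.zero_bound`). All degrees are measured by the
explicit filtration `Fil` of `R` by weights of monomials, so that no theory of curves is needed.

*Conclusion.* A suitable choice of parameters gives `A_k ≤ q + (3 d + 1) (√q + 2)`
(`numeric_bound`). For `q ≥ (6 n!) ^ 2` the sum over `k < n` is smaller than `n (q - 2)`, which is a
lower bound for the number of all pairs (`hasRoot_of_le`).
-/

open Polynomial
open scoped TensorProduct

namespace Trinomial

universe u

/-! ### Weighted monomials and the filtration -/

section Filtration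

variable {F R : Type*} [Field F] [CommRing R] [Algebra F R]

/-- The monomial `t ^ i * x₀ ^ I₀ * ⋯ * x_{k-1} ^ I_{k-1}`. -/
def mon (t : R) (x : ℕ → R) (k i : ℕ) (I : ℕ → ℕ) : R :=
  t ^ i * ∏ j ∈ Finset.range k, x j ^ I j

/-- The total degree `I₀ + ⋯ + I_{k-1}`. -/
def wt (k : ℕ) (I : ℕ → ℕ) : ℕ := ∑ j ∈ Finset.range k, I j

/-- The span of the monomials `t ^ i * x ^ I` with `B ≤ N i + β |I|` and
`N i + (β + 1) |I| ≤ A`. With `N = n (n - m)` and `β = r n` the first inequality bounds the order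
of vanishing at `t = 0` from below, the second one the order of the pole at `t = ∞` from above. -/
def Fil (F : Type*) {R : Type*} [Field F] [CommRing R] [Algebra F R]
    (N β : ℕ) (t : R) (x : ℕ → R) (k : ℕ) (B A : ℤ) : Submodule F R :=
  Submodule.span F {y | ∃ (i : ℕ) (I : ℕ → ℕ), y = mon t x k i I ∧
    B ≤ N * i + β * wt k I ∧ (N * i + (β + 1) * wt k I : ℤ) ≤ A}

variable {N β : ℕ} {t : R} {x : ℕ → R} {k : ℕ}

lemma mon_mem_Fil {i : ℕ} {I : ℕ → ℕ} {B A : ℤ} (h1 : B ≤ N * i + β * wt k I)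
    (h2 : (N * i + (β + 1) * wt k I : ℤ) ≤ A) : mon t x k i I ∈ Fil F N β t x k B A :=
  Submodule.subset_span ⟨i, I, rfl, h1, h2⟩

lemma mon_mul (i i' : ℕ) (I I' : ℕ → ℕ) :
    mon t x k i I * mon t x k i' I' = mon t x k (i + i') (I + I') := by
  simp only [mon, Pi.add_apply, pow_add, Finset.prod_mul_distrib]; ring

lemma wt_add (I I' : ℕ → ℕ) : wt k (I + I') = wt k I + wt k I' := by
  simp [wt, Finset.sum_add_distrib]

lemma Fil_mul {B A B' A' : ℤ} {a b : R} (ha : a ∈ Fil F N β t x k B A)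
    (hb : b ∈ Fil F N β t x k B' A') : a * b ∈ Fil F N β t x k (B + B') (A + A') := by
  have h := Submodule.mul_mem_mul ha hb
  rw [Fil, Fil, Submodule.span_mul_span] at h
  refine Submodule.span_mono ?_ h
  rintro _ ⟨_, ⟨i, I, rfl, h1, h2⟩, _, ⟨i', I', rfl, h1', h2'⟩, rfl⟩
  refine ⟨i + i', I + I', mon_mul _ _ _ _, ?_, ?_⟩ <;> rw [wt_add] <;> push_cast <;> linarith

lemma Fil_mono {B A B' A' : ℤ} (hB : B' ≤ B) (hA : A ≤ A') :
    Fil F N β t x k B A ≤ Fil F N β t x k B' A' := by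
  refine Submodule.span_mono ?_
  rintro _ ⟨i, I, rfl, h1, h2⟩
  exact ⟨i, I, rfl, hB.trans h1, h2.trans hA⟩

lemma Fil_mono_k {k' : ℕ} (hk : k ≤ k') {B A : ℤ} :
    Fil F N β t x k B A ≤ Fil F N β t x k' B A := by
  refine Submodule.span_mono ?_
  rintro _ ⟨i, I, rfl, h1, h2⟩
  have hw : wt k' (fun j => if j < k then I j else 0) = wt k I := by
    unfold wt
    rw [← Finset.sum_subset (Finset.range_subset_range.2 hk)]
    · refine Finset.sum_congr rfl fun j hj => ?_
      exact if_pos (Finset.mem_range.1 hj)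
    · intro j _ hj
      exact if_neg (by simpa using hj)
  refine ⟨i, fun j => if j < k then I j else 0, ?_, by rwa [hw], by rwa [hw]⟩
  unfold mon
  congr 1
  rw [← Finset.prod_subset (Finset.range_subset_range.2 hk)]
  · refine Finset.prod_congr rfl fun j hj => ?_
    simp [Finset.mem_range.1 hj]
  · intro j _ hj
    simp [show ¬ j < k by simpa using hj]

lemma t_pow_mem_Fil (i : ℕ) : t ^ i ∈ Fil F N β t x k (N * i) (N * i) := by
  have : mon t x k i 0 = t ^ i := by simp [mon]
  rw [← this]
  exact mon_mem_Fil (by simp [wt]) (by simp [wt])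

lemma one_mem_Fil : (1 : R) ∈ Fil F N β t x k 0 0 := by
  simpa using t_pow_mem_Fil (F := F) (N := N) (β := β) (t := t) (x := x) (k := k) 0

lemma x_mem_Fil {j : ℕ} (hj : j < k) : x j ∈ Fil F N β t x k β (β + 1) := by
  have h1 : mon t x k 0 (Pi.single j 1) = x j := by
    simp only [mon, pow_zero, one_mul]
    rw [Finset.prod_eq_single_of_mem j (Finset.mem_range.2 hj)]
    · simp
    · intro b _ hb; simp [hb]
  have h2 : wt k (Pi.single j 1) = 1 := by
    unfold wt
    rw [Finset.sum_eq_single_of_mem j (Finset.mem_range.2 hj)]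
    · simp
    · intro b _ hb; simp [hb]
  rw [← h1]
  exact mon_mem_Fil (by rw [h2]; simp) (by rw [h2]; simp)

lemma Fil_pow {B A : ℤ} {a : R} (ha : a ∈ Fil F N β t x k B A) (e : ℕ) :
    a ^ e ∈ Fil F N β t x k (e * B) (e * A) := by
  induction e with
  | zero => simpa using one_mem_Fil
  | succ e ih =>
    rw [pow_succ]
    have e1 : ∀ C : ℤ, ((e + 1 : ℕ) : ℤ) * C = e * C + C := fun C => by push_cast; ring
    rw [e1, e1]
    exact Fil_mul ih ha

/-- Exponents of staircase monomials: `k`-tuples `I` with `I_j < n - j`. -/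
def St (n : ℕ) : ℕ → Type
  | 0 => Unit
  | k + 1 => St n k × Fin (n - k)

instance St.fintype (n : ℕ) : ∀ k, Fintype (St n k)
  | 0 => inferInstanceAs (Fintype Unit)
  | k + 1 => letI := St.fintype n k; inferInstanceAs (Fintype (St n k × Fin (n - k)))

instance St.decEq (n : ℕ) : ∀ k, DecidableEq (St n k)
  | 0 => inferInstanceAs (DecidableEq Unit)
  | k + 1 => letI := St.decEq n k; inferInstanceAs (DecidableEq (St n k × Fin (n - k)))

lemma St.card (n k : ℕ) : Fintype.card (St n k) = n.descFactorial k := by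
  induction k with
  | zero => rfl
  | succ k ih =>
    rw [Nat.descFactorial_succ, ← ih, mul_comm]
    exact (Fintype.card_prod (St n k) (Fin (n - k))).trans (by simp)

/-- The exponent vector of a staircase index, extended by zero. -/
def St.exp {n : ℕ} : ∀ {k : ℕ}, St n k → ℕ → ℕ
  | 0, _ => fun _ => 0
  | k + 1, p => fun j => if j = k then (p.2 : ℕ) else St.exp (k := k) p.1 j

/-- The degree of the largest staircase monomial. -/
def topDeg (n k : ℕ) : ℕ := ∑ j ∈ Finset.range k, (n - 1 - j)

lemma wt_congr {I I' : ℕ → ℕ} (h : ∀ j < k, I j = I' j) : wt k I = wt k I' :=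
  Finset.sum_congr rfl fun j hj => h j (Finset.mem_range.1 hj)

lemma mon_congr {i : ℕ} {I I' : ℕ → ℕ} (h : ∀ j < k, I j = I' j) :
    mon t x k i I = mon t x k i I' := by
  unfold mon
  congr 1
  exact Finset.prod_congr rfl fun j hj => by rw [h j (Finset.mem_range.1 hj)]

/-- Append an exponent to a staircase index. -/
def St.snoc {n : ℕ} (I : St n k) (e : Fin (n - k)) : St n (k + 1) := (I, e)

lemma St.wt_succ {n : ℕ} (p : St n (k + 1)) :
    wt (k + 1) p.exp = wt k (St.exp p.1) + (p.2 : ℕ) := by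
  rw [wt, Finset.sum_range_succ]
  congr 1
  · exact wt_congr fun j hj => by simp [St.exp, hj.ne]
  · simp [St.exp]

lemma St.mon_succ {n i : ℕ} (p : St n (k + 1)) :
    mon t x (k + 1) i p.exp = mon t x k i (St.exp p.1) * x k ^ (p.2 : ℕ) := by
  rw [mon, Finset.prod_range_succ, ← mul_assoc]
  congr 1
  · exact mon_congr fun j hj => by simp [St.exp, hj.ne]
  · simp [St.exp]

lemma St.wt_le {n : ℕ} (p : St n k) : wt k p.exp ≤ topDeg n k := by
  induction k with
  | zero => simp [wt, topDeg]
  | succ k ih =>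
    rw [St.wt_succ, topDeg, Finset.sum_range_succ]
    have := p.2.2
    exact add_le_add (ih p.1) (by omega)

/-- The span of the staircase monomials in `Fil`. -/
def FilS (F : Type*) {R : Type*} [Field F] [CommRing R] [Algebra F R]
    (n N β : ℕ) (t : R) (x : ℕ → R) (k : ℕ) (B A : ℤ) : Submodule F R :=
  Submodule.span F {y | ∃ (i : ℕ) (I : St n k), y = mon t x k i I.exp ∧
    B ≤ N * i + β * wt k I.exp ∧ (N * i + (β + 1) * wt k I.exp : ℤ) ≤ A}

lemma FilS_mul_pow {n e : ℕ} {B A : ℤ} {v : R} (he : e < n - k)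
    (hv : v ∈ FilS F n N β t x k B A) :
    v * x k ^ e ∈ FilS F n N β t x (k + 1) (B + β * e) (A + (β + 1) * e) := by
  induction hv using Submodule.span_induction with
  | mem y hy =>
    obtain ⟨i, I, rfl, h1, h2⟩ := hy
    have hw : wt (k + 1) (I.snoc ⟨e, he⟩).exp = wt k I.exp + e := St.wt_succ _
    refine Submodule.subset_span ⟨i, I.snoc ⟨e, he⟩, (St.mon_succ (I.snoc ⟨e, he⟩)).symm, ?_, ?_⟩
    · rw [hw]; push_cast; linarith
    · rw [hw]; push_cast; linarith
  | zero => simp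
  | add a b _ _ ha hb => rw [add_mul a b]; exact add_mem ha hb
  | smul c a _ ha => rw [smul_mul_assoc]; exact Submodule.smul_mem _ _ ha

/-- If each `x_j` is a root of a monic polynomial of degree `n - j` whose coefficients are
homogeneous polynomials in `t, x₀, …, x_{j-1}`, then `Fil` is spanned by staircase monomials. -/
lemma Fil_le_FilS {n : ℕ} (hx : ∀ j < k, ∃ c : ℕ → R,
      (∀ l < n - j, c l ∈ Fil F N β t x j (β * (n - j - l : ℕ)) ((β + 1) * (n - j - l : ℕ))) ∧
      x j ^ (n - j) = ∑ l ∈ Finset.range (n - j), c l * x j ^ l) (B A : ℤ) :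
    Fil F N β t x k B A ≤ FilS F n N β t x k B A := by
  induction k generalizing B A with
  | zero =>
    refine Submodule.span_mono ?_
    rintro _ ⟨i, I, rfl, h1, h2⟩
    exact ⟨i, (), by simp [mon], by simpa [wt] using h1, by simpa [wt] using h2⟩
  | succ k ih =>
    have ih := ih fun j hj => hx j (hj.trans (Nat.lt_succ_self k))
    obtain ⟨c, hc, hck⟩ := hx k (Nat.lt_succ_self k)
    have key : ∀ (e : ℕ) (B A : ℤ) (v : R), v ∈ Fil F N β t x k B A →
        v * x k ^ e ∈ FilS F n N β t x (k + 1) (B + β * e) (A + (β + 1) * e) := by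
      intro e
      induction e using Nat.strong_induction_on with
      | _ e ihe =>
      intro B A v hv
      by_cases he : e < n - k
      · exact FilS_mul_pow he (ih B A hv)
      · push Not at he
        have : v * x k ^ e
            = ∑ l ∈ Finset.range (n - k), (v * c l) * x k ^ (e - (n - k) + l) := by
          conv_lhs => rw [← Nat.sub_add_cancel he, pow_add, hck]
          rw [Finset.mul_sum, Finset.mul_sum]
          refine Finset.sum_congr rfl fun l _ => ?_
          rw [pow_add]; ring
        rw [this]
        refine Submodule.sum_mem _ fun l hl => ?_
        have hl := Finset.mem_range.1 hl
        have h := ihe (e - (n - k) + l) (by omega) _ _ _ (Fil_mul hv (hc l hl))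
        have e1 : ((n - k - l : ℕ) : ℤ) + ((e - (n - k) + l : ℕ) : ℤ) = e := by omega
        rwa [add_assoc, ← mul_add, e1, add_assoc, ← mul_add, e1] at h
    rw [Fil, Submodule.span_le]
    rintro _ ⟨i, I, rfl, h1, h2⟩
    have h := key (I k) _ _ _ (mon_mem_Fil (F := F) (N := N) (β := β) (t := t) (x := x)
      (i := i) (I := I) (k := k) le_rfl le_rfl)
    have hm : mon t x (k + 1) i I = mon t x k i I * x k ^ I k := by
      rw [mon, Finset.prod_range_succ, ← mul_assoc]; rfl
    have hw : wt (k + 1) I = wt k I + I k := Finset.sum_range_succ _ _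
    rw [hw] at h1 h2
    rw [SetLike.mem_coe, hm]
    refine Submodule.span_mono ?_ h
    rintro _ ⟨i', I', rfl, h1', h2'⟩
    push_cast at h1 h2
    exact ⟨i', I', rfl, by linarith, by linarith⟩

end Filtration

/-! ### The data of the point count -/

section Datum

variable {F R : Type*} [Field F] [CommRing R] [Algebra F R]

/-- The situation in which the point count takes place: `R` is generated by `t, x₀, …, x_{k-1}`,
and the monic polynomials `g j` of degree `n - j` satisfy `g j = (X - x_j) * g (j + 1)`. The
coefficients are homogeneous with respect to `Fil`, and the staircase monomials are linearly
independent. -/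
structure Datum (F : Type*) {R : Type*} [Field F] [CommRing R] [Algebra F R]
    (n N β k : ℕ) (t : R) (x : ℕ → R) (g : ℕ → R[X]) : Prop where
  gen : Algebra.adjoin F (insert t (x '' Set.Iio k)) = ⊤
  g_succ : ∀ j < k, g j = (X - C (x j)) * g (j + 1)
  monic : ∀ j ≤ k, (g j).Monic
  natDegree : ∀ j ≤ k, (g j).natDegree = n - j
  coeff : ∀ j ≤ k, ∀ i ≤ n - j, (g j).coeff i ∈
    Fil F N β t x j (β * (n - j - i : ℕ)) ((β + 1) * (n - j - i : ℕ))
  indep : LinearIndependent F (fun p : ℕ × St n k => mon t x k p.1 p.2.exp)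
  k_le : k ≤ n
  N_pos : 0 < N
  top_le : topDeg n k ≤ N

variable {n N β k : ℕ} {t : R} {x : ℕ → R} {g : ℕ → R[X]}

lemma Datum.rel (D : Datum F n N β k t x g) : ∀ j < k, ∃ c : ℕ → R,
      (∀ l < n - j, c l ∈ Fil F N β t x j (β * (n - j - l : ℕ)) ((β + 1) * (n - j - l : ℕ))) ∧
      x j ^ (n - j) = ∑ l ∈ Finset.range (n - j), c l * x j ^ l := by
  intro j hj
  refine ⟨fun l => - (g j).coeff l, fun l hl => neg_mem (D.coeff j hj.le l hl.le), ?_⟩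
  have h0 : (g j).eval (x j) = 0 := by rw [D.g_succ j hj]; simp
  have hm := (D.monic j hj.le).coeff_natDegree
  rw [eval_eq_sum_range, Finset.sum_range_succ, hm, D.natDegree j hj.le] at h0
  simp only [neg_mul, Finset.sum_neg_distrib]
  linear_combination h0

lemma Datum.exists_mem_Fil (D : Datum F n N β k t x g) (a : R) :
    ∃ A₀ : ℤ, ∀ A ≥ A₀, a ∈ Fil F N β t x k 0 A := by
  have ha : a ∈ Algebra.adjoin F (insert t (x '' Set.Iio k)) := by rw [D.gen]; trivial
  induction ha using Algebra.adjoin_induction with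
  | mem y hy =>
    rcases hy with rfl | ⟨j, hj, rfl⟩
    · refine ⟨N, fun A hA => ?_⟩
      have := t_pow_mem_Fil (F := F) (N := N) (β := β) (t := y) (x := x) (k := k) 1
      rw [pow_one] at this
      exact Fil_mono (by positivity) (by simpa using hA) this
    · exact ⟨β + 1, fun A hA => Fil_mono (by positivity) hA (x_mem_Fil hj)⟩
  | algebraMap c =>
    refine ⟨0, fun A hA => ?_⟩
    rw [Algebra.algebraMap_eq_smul_one]
    exact Submodule.smul_mem _ _ (Fil_mono le_rfl hA one_mem_Fil)
  | add a b _ _ ha hb =>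
    obtain ⟨A, hA⟩ := ha; obtain ⟨B, hB⟩ := hb
    exact ⟨max A B, fun C hC => add_mem (hA _ (le_trans (le_max_left _ _) hC))
      (hB _ (le_trans (le_max_right _ _) hC))⟩
  | mul a b _ _ ha hb =>
    obtain ⟨A, hA⟩ := ha; obtain ⟨B, hB⟩ := hb
    refine ⟨A + B, fun C hC => ?_⟩
    have := Fil_mul (hA A le_rfl) (hB B le_rfl)
    exact Fil_mono (by simp) hC this

/-- The basis of `R` formed by the staircase monomials. -/
noncomputable def Datum.basis (D : Datum F n N β k t x g) : Module.Basis (ℕ × St n k) F R :=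
  Module.Basis.mk D.indep (by
    intro a _
    obtain ⟨A, hA⟩ := D.exists_mem_Fil a
    have h := Fil_le_FilS D.rel _ _ (hA A le_rfl)
    refine Submodule.span_mono ?_ h
    rintro _ ⟨i, I, rfl, -, -⟩
    exact ⟨(i, I), rfl⟩)

lemma Datum.basis_apply (D : Datum F n N β k t x g) (p : ℕ × St n k) :
    D.basis p = mon t x k p.1 p.2.exp := by simp [Datum.basis]

/-- Exponents `i` of `t` allowed in `Fil` next to a monomial of degree `w` in the `x_j`. -/
def slice (N β w : ℕ) (B A : ℤ) : Finset ℕ :=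
  (Finset.range (A.toNat + 1)).filter fun i => B ≤ N * i + β * w ∧ (N * i + (β + 1) * w : ℤ) ≤ A

lemma mem_slice {N β w i : ℕ} (hN : 0 < N) {B A : ℤ} : i ∈ slice N β w B A ↔
    B ≤ N * i + β * w ∧ (N * i + (β + 1) * w : ℤ) ≤ A := by
  rw [slice, Finset.mem_filter, and_iff_right_iff_imp]
  rintro ⟨-, h⟩
  rw [Finset.mem_range]
  have h1 : (i : ℤ) ≤ N * i := by nlinarith
  have h2 : (0 : ℤ) ≤ (β + 1) * w := by positivity
  omega

/-- The indices of the staircase monomials in `Fil`. -/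
def idx (n N β k : ℕ) (B A : ℤ) : Finset (ℕ × St n k) :=
  Finset.univ.biUnion fun I : St n k => (slice N β (wt k I.exp) B A).image fun i => (i, I)

lemma mem_idx (hN : 0 < N) {B A : ℤ} {p : ℕ × St n k} : p ∈ idx n N β k B A ↔
    B ≤ N * p.1 + β * wt k p.2.exp ∧ (N * p.1 + (β + 1) * wt k p.2.exp : ℤ) ≤ A := by
  rw [← mem_slice hN]
  simp only [idx, Finset.mem_biUnion, Finset.mem_univ, true_and, Finset.mem_image]
  constructor
  · rintro ⟨I, i, hi, rfl⟩; exact hi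
  · intro h; exact ⟨p.2, p.1, h, rfl⟩

lemma card_idx (B A : ℤ) :
    (idx n N β k B A).card = ∑ I : St n k, (slice N β (wt k I.exp) B A).card := by
  rw [idx, Finset.card_biUnion]
  · refine Finset.sum_congr rfl fun I _ => Finset.card_image_of_injective _ fun a b h => ?_
    exact congrArg Prod.fst h
  · intro I _ J _ hIJ
    rw [Function.onFun, Finset.disjoint_left]
    intro p hp hp'
    obtain ⟨i, -, rfl⟩ := Finset.mem_image.1 hp
    obtain ⟨j, -, h⟩ := Finset.mem_image.1 hp'
    exact hIJ (congrArg Prod.snd h).symm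

lemma Datum.Fil_eq (D : Datum F n N β k t x g) (B A : ℤ) :
    Fil F N β t x k B A = Submodule.span F (D.basis '' (idx n N β k B A : Set (ℕ × St n k))) := by
  apply le_antisymm
  · refine (Fil_le_FilS D.rel _ _).trans (Submodule.span_mono ?_)
    rintro _ ⟨i, I, rfl, h⟩
    exact ⟨(i, I), by simpa [mem_idx D.N_pos] using h, D.basis_apply _⟩
  · rw [Submodule.span_le]
    rintro _ ⟨p, hp, rfl⟩
    rw [D.basis_apply]
    have := (mem_idx D.N_pos).1 hp
    exact mon_mem_Fil this.1 this.2

lemma Datum.finite_Fil (D : Datum F n N β k t x g) (B A : ℤ) :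
    Module.Finite F (Fil F N β t x k B A) := by
  rw [D.Fil_eq]
  exact FiniteDimensional.span_of_finite F ((Finset.finite_toSet _).image _)

lemma Datum.finrank_Fil (D : Datum F n N β k t x g) (B A : ℤ) :
    Module.finrank F (Fil F N β t x k B A) = (idx n N β k B A).card := by
  classical
  rw [D.Fil_eq, ← Finset.coe_image, finrank_span_finset_eq_card,
    Finset.card_image_of_injective _ D.basis.injective]
  have := D.basis.linearIndependent.linearIndepOn_id.mono
    (t := ((idx n N β k B A).image D.basis : Set R)) (by rw [Finset.coe_image]; exact Set.image_subset_range _ _)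
  exact this

/-- Up to a constant `κ ≥ -1` depending only on the degree `w`, the slice for `N b, N a` has
`a - b` elements. -/
lemma exists_card_slice {N β w T : ℕ} (hN : 0 < N) (hw : w ≤ T) (hT : T ≤ N) :
    ∃ κ : ℤ, -1 ≤ κ ∧ ∀ b a : ℕ, β * T ≤ b → b + 1 ≤ a →
      ((slice N β w (N * b) (N * a)).card : ℤ) = a - b + κ := by
  have hN' : (0 : ℤ) < N := by exact_mod_cast hN
  -- The allowed `i` run from `b - u` to `a - v`.
  obtain ⟨u, hu⟩ : ∃ u : ℤ, u = (β * w : ℤ) / N := ⟨_, rfl⟩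
  obtain ⟨v, hv⟩ : ∃ v : ℤ, v = -((-((β + 1) * w : ℤ)) / N) := ⟨_, rfl⟩
  have u1 : (N : ℤ) * u ≤ β * w := by rw [hu]; exact Int.mul_ediv_self_le hN'.ne'
  have u2 : (β * w : ℤ) < N * u + N := by rw [hu]; exact Int.lt_mul_ediv_self_add hN'
  have v1 : ((β + 1) * w : ℤ) ≤ N * v := by
    have := Int.mul_ediv_self_le (x := (-((β + 1) * w : ℤ))) hN'.ne'
    rw [hv]; linarith
  have v2 : (N : ℤ) * v < (β + 1) * w + N := by
    have := Int.lt_mul_ediv_self_add (x := (-((β + 1) * w : ℤ))) hN'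
    rw [hv]; linarith
  have hwN : (w : ℤ) ≤ N := by exact_mod_cast hw.trans hT
  have huv : v - u ≤ 2 := by
    by_contra! h
    have : (N : ℤ) * 3 ≤ N * (v - u) := by gcongr; omega
    nlinarith
  refine ⟨u - v + 1, by omega, fun b a hb ha => ?_⟩
  have hub : u ≤ b := by
    have h1 : (N : ℤ) * u ≤ N * b := by
      have h2 : (β * w : ℤ) ≤ β * T := by gcongr
      have h3 : (β * T : ℤ) ≤ b := by exact_mod_cast hb
      have h4 : (b : ℤ) ≤ N * b := by nlinarith
      linarith
    exact le_of_mul_le_mul_left h1 hN'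
  have key : slice N β w (N * b) (N * a) = Finset.Ico (b - u).toNat ((a : ℤ) - v + 1).toNat := by
    ext i
    rw [mem_slice hN, Finset.mem_Ico]
    constructor
    · rintro ⟨h1, h2⟩
      have h3 : (b : ℤ) - u < i + 1 := lt_of_mul_lt_mul_left (a := (N : ℤ)) (by linarith) hN'.le
      have h4 : (i : ℤ) + v < a + 1 := lt_of_mul_lt_mul_left (a := (N : ℤ)) (by linarith) hN'.le
      omega
    · rintro ⟨h1, h2⟩
      have h3 : (b : ℤ) - u ≤ i := by omega
      have h4 : (i : ℤ) ≤ a - v := by omega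
      have h5 := mul_le_mul_of_nonneg_left h3 hN'.le
      have h6 := mul_le_mul_of_nonneg_left h4 hN'.le
      constructor <;> linarith
  rw [key, Nat.card_Ico]
  omega

lemma card_slice_le {N β w L : ℕ} (hN : 0 < N) {B A : ℤ} (h : A - B ≤ N * L) :
    (slice N β w B A).card ≤ L + 1 := by
  rcases (slice N β w B A).eq_empty_or_nonempty with h0 | h0
  · simp [h0]
  · have hsub : slice N β w B A ⊆ Finset.Icc ((slice N β w B A).min' h0)
        ((slice N β w B A).min' h0 + L) := by
      intro i hi
      rw [Finset.mem_Icc]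
      refine ⟨Finset.min'_le _ _ hi, ?_⟩
      have h1 := ((mem_slice hN).1 ((slice N β w B A).min'_mem h0)).1
      have h2 := ((mem_slice hN).1 hi).2
      have hN' : (0 : ℤ) < N := by exact_mod_cast hN
      have hw : (0 : ℤ) ≤ w := by positivity
      have : (N : ℤ) * i ≤ N * ((slice N β w B A).min' h0 + L : ℕ) := by push_cast; linarith
      exact_mod_cast le_of_mul_le_mul_left this hN'
    refine (Finset.card_le_card hsub).trans ?_
    rw [Nat.card_Icc]; omega

lemma exists_card_idx (hN : 0 < N) (hT : topDeg n k ≤ N) :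
    ∃ κ : ℤ, -(n.descFactorial k : ℤ) ≤ κ ∧ ∀ b a : ℕ, β * topDeg n k ≤ b → b + 1 ≤ a →
      ((idx n N β k (N * b) (N * a)).card : ℤ) = n.descFactorial k * (a - b) + κ := by
  choose κ h1 h2 using fun I : St n k => exists_card_slice (β := β) hN I.wt_le hT
  have hd : ((Finset.univ : Finset (St n k)).card : ℤ) = n.descFactorial k := by
    rw [Finset.card_univ, St.card]
  refine ⟨∑ I, κ I, ?_, fun b a hb ha => ?_⟩
  · have := Finset.sum_le_sum fun (I : St n k) (_ : I ∈ Finset.univ) => h1 I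
    rw [Finset.sum_const, nsmul_eq_mul, hd] at this
    linarith
  · rw [card_idx]
    push_cast
    rw [Finset.sum_congr rfl fun I _ => h2 I b a hb ha, Finset.sum_add_distrib, Finset.sum_const,
      nsmul_eq_mul, hd]

lemma card_idx_le {L : ℕ} (hN : 0 < N) {B A : ℤ} (h : A - B ≤ N * L) :
    (idx n N β k B A).card ≤ n.descFactorial k * (L + 1) := by
  rw [card_idx]
  refine (Finset.sum_le_card_nsmul _ _ _ fun I _ => card_slice_le hN h).trans ?_
  rw [Finset.card_univ, St.card, smul_eq_mul]

lemma le_card_idx {b c : ℕ} (hN : 0 < N) (hT : topDeg n k ≤ N) (hb : β * topDeg n k ≤ b) :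
    n.descFactorial k * (c - 1) ≤ (idx n N β k (N * b) (N * (b + c : ℕ))).card := by
  rcases Nat.eq_zero_or_pos c with rfl | hc
  · simp
  obtain ⟨κ, h1, h2⟩ := exists_card_idx (β := β) hN hT
  have := h2 b (b + c) hb (by omega)
  rw [← Nat.cast_le (α := ℤ), this]
  push_cast [Nat.cast_sub hc]
  linarith

end Datum

/-! ### Zeros of elements of the filtration -/

section ZeroBound

variable {F R : Type*} [Field F] [CommRing R] [Algebra F R]

lemma ker_isMaximal (π : R →ₐ[F] F) : (RingHom.ker π).IsMaximal :=
  RingHom.ker_isMaximal_of_surjective _ fun c => ⟨algebraMap F R c, by simp⟩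

lemma ker_isCoprime {π ρ : R →ₐ[F] F} (h : π ≠ ρ) :
    IsCoprime (RingHom.ker π) (RingHom.ker ρ) := by
  have h1 := ker_isMaximal π
  have h2 := ker_isMaximal ρ
  refine Ideal.isCoprime_of_isMaximal fun hk => h ?_
  ext a
  have : a - algebraMap F R (π a) ∈ RingHom.ker ρ := by
    rw [← hk, RingHom.mem_ker]; simp
  rw [RingHom.mem_ker] at this
  simp only [map_sub, AlgHom.commutes, Algebra.algebraMap_self, RingHom.id_apply] at this
  exact (sub_eq_zero.1 this).symm

/-- Distinct points taken with multiplicity `M` impose independent conditions: there are elements indexed by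
pairs (point, order) no nontrivial combination of which vanishes to order `M` everywhere. -/
lemma exists_indep_mod [IsDomain R] [IsNoetherianRing R] {ι : Type*} [Fintype ι] (M : ℕ)
    (π : ι → R →ₐ[F] F) (hπ : Function.Injective π) (hne : ∀ i, RingHom.ker (π i) ≠ ⊥) :
    ∃ z : ι × Fin M → R, ∀ a : ι × Fin M → F,
      (∀ i, ∑ p, a p • z p ∈ RingHom.ker (π i) ^ M) → a = 0 := by
  classical
  have hcop : Pairwise fun i j => IsCoprime (RingHom.ker (π i) ^ M) (RingHom.ker (π j) ^ M) :=
    fun i j hij => (ker_isCoprime (hπ.ne hij)).pow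
  have hstrict : ∀ i (c : ℕ), ∃ y ∈ RingHom.ker (π i) ^ c, y ∉ RingHom.ker (π i) ^ (c + 1) := by
    intro i c
    have hm := ker_isMaximal (π i)
    have hle : RingHom.ker (π i) ^ (c + 1) ≤ RingHom.ker (π i) ^ c :=
      Ideal.pow_le_pow_right c.le_succ
    refine SetLike.exists_of_lt (lt_of_le_of_ne hle fun heq => hne i ?_)
    have hst : ∀ j, RingHom.ker (π i) ^ c ≤ RingHom.ker (π i) ^ j := by
      intro j
      rcases le_total j c with h | h
      · exact Ideal.pow_le_pow_right h
      · obtain ⟨e, rfl⟩ := Nat.exists_eq_add_of_le h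
        clear h
        induction e with
        | zero => exact le_rfl
        | succ e ih =>
          calc RingHom.ker (π i) ^ c = RingHom.ker (π i) ^ c * RingHom.ker (π i) := by
                rw [← pow_succ, heq]
            _ ≤ RingHom.ker (π i) ^ (c + e) * RingHom.ker (π i) := Ideal.mul_mono_left ih
            _ = _ := by rw [← pow_succ, add_assoc]
    have h0 := le_iInf hst
    rw [Ideal.iInf_pow_eq_bot_of_isDomain _ hm.ne_top, le_bot_iff] at h0
    exact pow_eq_zero_iff (M₀ := Ideal R) (n := c) (by rintro rfl; simp at h0) |>.1 h0
  have hE : ∀ i, ∃ e : R, e - 1 ∈ RingHom.ker (π i) ^ M ∧ ∀ j ≠ i, e ∈ RingHom.ker (π j) ^ M := by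
    intro i
    obtain ⟨e, he⟩ := Ideal.exists_forall_sub_mem_ideal
      (I := fun i => RingHom.ker (π i) ^ M) (fun a b hab => hcop hab)
      (fun j => if j = i then 1 else 0)
    refine ⟨e, by simpa using he i, fun j hj => ?_⟩
    simpa [hj] using he j
  choose y hy1 hy2 using hstrict
  choose e he1 he2 using hE
  refine ⟨fun p => e p.1 * y p.1 p.2, fun a ha => ?_⟩
  by_contra hne0
  obtain ⟨⟨i, c⟩, hic⟩ := Function.ne_iff.1 hne0
  -- Reduce modulo `(ker π_i) ^ M`, then look at the lowest order that occurs.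
  have hi : ∑ c : Fin M, a (i, c) • y i c ∈ RingHom.ker (π i) ^ M := by
    have h := ha i
    rw [Fintype.sum_prod_type, ← Finset.add_sum_erase _ _ (Finset.mem_univ i)] at h
    have h2 : ∑ j ∈ Finset.univ.erase i, ∑ c : Fin M, a (j, c) • (e j * y j c)
        ∈ RingHom.ker (π i) ^ M := by
      refine Ideal.sum_mem _ fun j hj => Ideal.sum_mem _ fun c _ => ?_
      refine Submodule.smul_of_tower_mem _ _ (Ideal.mul_mem_right _ _ (he2 j i ?_))
      exact (Finset.ne_of_mem_erase hj).symm
    have h3 := (Ideal.add_mem_iff_left _ h2).1 h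
    have h4 : ∑ c : Fin M, a (i, c) • y i c = ∑ c : Fin M, a (i, c) • (e i * y i c)
        - (e i - 1) * ∑ c : Fin M, a (i, c) • y i c := by
      rw [Finset.mul_sum, ← Finset.sum_sub_distrib]
      refine Finset.sum_congr rfl fun c _ => ?_
      simp only [Algebra.smul_def]; ring
    rw [h4]
    exact sub_mem h3 (Ideal.mul_mem_right _ _ (he1 i))
  obtain ⟨c0, hc0, hmin⟩ := (Finset.univ.filter fun c : Fin M => a (i, c) ≠ 0).exists_min_image
    (fun c => (c : ℕ)) ⟨c, by simpa using hic⟩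
  simp only [Finset.mem_filter, Finset.mem_univ, true_and] at hc0 hmin
  apply hy2 i c0
  have h1 : a (i, c0) • y i c0 ∈ RingHom.ker (π i) ^ ((c0 : ℕ) + 1) := by
    rw [← Finset.add_sum_erase _ _ (Finset.mem_univ c0)] at hi
    have h2 : ∑ c ∈ Finset.univ.erase c0, a (i, c) • y i c
        ∈ RingHom.ker (π i) ^ ((c0 : ℕ) + 1) := by
      refine Ideal.sum_mem _ fun c hc => ?_
      by_cases hac : a (i, c) = 0
      · simp [hac]
      · have hlt : (c0 : ℕ) < c := lt_of_le_of_ne (hmin c hac) fun h =>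
          Finset.ne_of_mem_erase hc (Fin.ext h.symm)
        exact Submodule.smul_of_tower_mem _ _ (Ideal.pow_le_pow_right hlt (hy1 i c))
    exact (Ideal.add_mem_iff_left _ h2).1 (Ideal.pow_le_pow_right c0.2 hi)
  have := Submodule.smul_of_tower_mem (RingHom.ker (π i) ^ ((c0 : ℕ) + 1)) (a (i, c0))⁻¹ h1
  rwa [smul_smul, inv_mul_cancel₀ hc0, one_smul] at this

variable {n N β k : ℕ} {t : R} {x : ℕ → R} {g : ℕ → R[X]}

lemma Datum.noetherian (D : Datum F n N β k t x g) : IsNoetherianRing R := by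
  have : Algebra.FiniteType F R := ⟨by
    rw [← D.gen]
    exact Subalgebra.fg_def.2 ⟨_, ((Set.finite_Iio k).image x).insert t, rfl⟩⟩
  exact Algebra.FiniteType.isNoetherianRing F R

/-- The element `t - π t` of the kernel is nonzero, since `t` is transcendental. -/
lemma Datum.ker_ne_bot (D : Datum F n N β k t x g) (hk : k < n) (π : R →ₐ[F] F) :
    RingHom.ker π ≠ ⊥ := by
  intro h
  have h1 : t - algebraMap F R (π t) ∈ RingHom.ker π := by rw [RingHom.mem_ker]; simp
  rw [h, Ideal.mem_bot, sub_eq_zero] at h1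
  have hS : Nonempty (St n k) := by
    rw [← Fintype.card_pos_iff, St.card]
    exact Nat.descFactorial_pos.2 hk.le
  obtain ⟨I⟩ := hS
  have h2 : D.basis (1, I) = π t • D.basis (0, I) := by
    rw [D.basis_apply, D.basis_apply, mon, mon, pow_one, pow_zero, one_mul, Algebra.smul_def, ← h1]
  have h3 := congrArg (fun y => D.basis.repr y (1, I)) h2
  simp at h3

lemma mem_ker_pow_of_mul_mem {π : R →ₐ[F] F} {a b : R} {M : ℕ} (ha : π a ≠ 0)
    (h : a * b ∈ RingHom.ker π ^ M) : b ∈ RingHom.ker π ^ M := by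
  have hm := ker_isMaximal π
  have h1 : IsCoprime (Ideal.span {a}) (RingHom.ker π) := by
    rw [Ideal.isCoprime_iff_sup_eq, sup_comm]
    refine hm.out.2 _ (lt_of_le_of_ne le_sup_left fun he => ha ?_)
    rw [← RingHom.mem_ker, he]
    exact Ideal.mem_sup_right (Ideal.mem_span_singleton_self a)
  obtain ⟨i, hi, j, hj, hij⟩ := (h1.pow_right (n := M)).exists
  obtain ⟨c, rfl⟩ := Ideal.mem_span_singleton.1 hi
  have : b = c * (a * b) + b * j := by linear_combination -b * hij
  rw [this]
  exact add_mem (Ideal.mul_mem_left _ _ h) (Ideal.mul_mem_left _ _ hj)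

/-- A nonzero element of `Fil (N b) (N a)` has at most `d (a - b)` zeros, counted with
multiplicity, outside `t = 0`. Here `d = n.descFactorial k` is the rank of `R` over `F[t]`. -/
lemma Datum.zero_bound [IsDomain R] (D : Datum F n N β k t x g) (hk : k < n) {ι : Type*}
    [Fintype ι] (M : ℕ) (π : ι → R →ₐ[F] F) (hπ : Function.Injective π) (ht : ∀ i, π i t ≠ 0)
    {u : R} (hu0 : u ≠ 0) {b a : ℕ} (hu : u ∈ Fil F N β t x k (N * b) (N * a))
    (huM : ∀ i, u ∈ RingHom.ker (π i) ^ M) :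
    M * Fintype.card ι + n.descFactorial k * b ≤ n.descFactorial k * a := by
  have := D.noetherian
  obtain ⟨z, hz⟩ := exists_indep_mod M π hπ fun i => D.ker_ne_bot hk (π i)
  -- nonzero elements only occur if `b ≤ a`
  have hba : b ≤ a := by
    by_contra! h
    apply hu0
    have h0 : idx n N β k (N * b) (N * a) = ∅ := by
      rw [Finset.eq_empty_iff_forall_notMem]
      intro p hp
      rw [mem_idx D.N_pos] at hp
      have h1 : (N * a : ℤ) < N * b := by
        have := D.N_pos
        gcongr
      have h2 : (0 : ℤ) ≤ wt k p.2.exp := by positivity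
      linarith [hp.1, hp.2]
    rw [D.Fil_eq, h0] at hu
    simpa using hu
  set b' := β * topDeg n k with hb'
  choose A₀ hA₀ using fun p => D.exists_mem_Fil (z p)
  obtain ⟨c, hc⟩ : ∃ c : ℕ, ∀ p, A₀ p ≤ c := by
    refine ⟨∑ p, (A₀ p).toNat, fun p => (Int.self_le_toNat _).trans ?_⟩
    exact_mod_cast Finset.single_le_sum (f := fun p => (A₀ p).toNat) (fun _ _ => Nat.zero_le _)
      (Finset.mem_univ p)
  obtain ⟨κ, -, hκ⟩ := exists_card_idx (n := n) (k := k) (β := β) D.N_pos D.top_le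
  have hW := D.finite_Fil (N * b') (N * (b' + (c + 1) : ℕ))
  have hW' := D.finite_Fil (N * (b + b' : ℕ)) (N * (a + (b' + (c + 1)) : ℕ))
  set W := Fil F N β t x k (N * b') (N * (b' + (c + 1) : ℕ)) with hWdef
  set W' := Fil F N β t x k (N * (b + b' : ℕ)) (N * (a + (b' + (c + 1)) : ℕ)) with hWdef'
  have hdW : (Module.finrank F W : ℤ) = n.descFactorial k * (c + 1) + κ := by
    rw [hWdef, D.finrank_Fil, hκ b' _ hb'.ge (by omega)]; push_cast; ring
  have hdW' : (Module.finrank F W' : ℤ) = n.descFactorial k * (a - b + (c + 1)) + κ := by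
    rw [hWdef', D.finrank_Fil, hκ _ _ (by omega) (by omega)]; push_cast; ring
  -- multiplying by a power of `t` moves the `z p` into `W'`
  let z' : ι × Fin M → R := fun p => t ^ (b + b') * z p
  have hz' : ∀ w : ι × Fin M → F, (∀ i, ∑ p, w p • z' p ∈ RingHom.ker (π i) ^ M) → w = 0 := by
    intro w hw
    refine hz w fun i => ?_
    have h1 : ∑ p, w p • z' p = t ^ (b + b') * ∑ p, w p • z p := by
      rw [Finset.mul_sum]
      exact Finset.sum_congr rfl fun p _ => by rw [mul_smul_comm]
    have h2 := hw i
    rw [h1] at h2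
    exact mem_ker_pow_of_mul_mem (by rw [map_pow]; exact pow_ne_zero _ (ht i)) h2
  have hzW : ∀ p, z' p ∈ W' := by
    intro p
    have h1 := Fil_mul (t_pow_mem_Fil (F := F) (N := N) (β := β) (t := t) (x := x) (k := k)
      (b + b')) (hA₀ p c (hc p))
    refine Fil_mono (by simp) ?_ h1
    have hN : (1 : ℤ) ≤ N := by exact_mod_cast D.N_pos
    push_cast
    have : (b : ℤ) ≤ a := by exact_mod_cast hba
    nlinarith
  have hlin : LinearIndependent F z' := by
    rw [Fintype.linearIndependent_iff]
    intro w hw p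
    rw [hz' w fun i => by rw [hw]; exact zero_mem _]; rfl
  let U : Submodule F R := W.map (LinearMap.mulLeft F u)
  have hU : Module.finrank F U = Module.finrank F W :=
    (LinearEquiv.finrank_eq (Submodule.equivMapOfInjective (LinearMap.mulLeft F u)
      (fun y z h => mul_left_cancel₀ hu0 h) W)).symm
  have hUW : U ≤ W' := by
    rintro _ ⟨w, hw, rfl⟩
    have := Fil_mul hu hw
    rw [LinearMap.mulLeft_apply]
    convert this using 2 <;> push_cast <;> ring
  have hZ : Module.finrank F (Submodule.span F (Set.range z')) = M * Fintype.card ι := by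
    rw [finrank_span_eq_card hlin, Fintype.card_prod, Fintype.card_fin, mul_comm]
  have hdis : U ⊓ Submodule.span F (Set.range z') = ⊥ := by
    rw [eq_bot_iff]
    rintro y ⟨⟨w, -, rfl⟩, hy2⟩
    obtain ⟨c, hc⟩ := (Submodule.mem_span_range_iff_exists_fun F).1 hy2
    have : c = 0 := hz' c fun i => by
      rw [hc, LinearMap.mulLeft_apply]
      exact Ideal.mul_mem_right _ _ (huM i)
    rw [Submodule.mem_bot, ← hc, this]
    simp
  have : Module.Finite F U := Module.Finite.map _ _
  have : Module.Finite F (Submodule.span F (Set.range z')) :=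
    FiniteDimensional.span_of_finite F (Set.finite_range z')
  have hsum := Submodule.finrank_sup_add_finrank_inf_eq U (Submodule.span F (Set.range z'))
  have hle : Module.finrank F (U ⊔ Submodule.span F (Set.range z') : Submodule F R)
      ≤ Module.finrank F W' :=
    Submodule.finrank_mono (sup_le hUW (Submodule.span_le.2 (by rintro _ ⟨p, rfl⟩; exact hzW p)))
  rw [hdis, finrank_bot, hU, hZ] at hsum
  zify
  zify at hsum hle
  linarith

end ZeroBound

/-! ### The diagonal and division -/

section Tensor

variable {F R : Type*} [Field F] [CommRing R] [Algebra F R]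

/-- `ε = 1 ⊗ t - t ⊗ 1`. -/
noncomputable def eps (F : Type*) {R : Type*} [Field F] [CommRing R] [Algebra F R] (t : R) :
    R ⊗[F] R := 1 ⊗ₜ t - t ⊗ₜ 1

/-- The product over `i < j` of `g_{i+1}` evaluated at `1 ⊗ x_i`, the coefficients being put in the
left tensor factor. -/
noncomputable def Theta (F : Type*) {R : Type*} [Field F] [CommRing R] [Algebra F R]
    (x : ℕ → R) (g : ℕ → R[X]) (j : ℕ) : R ⊗[F] R :=
  ∏ i ∈ Finset.range j, (g (i + 1)).eval₂
    (Algebra.TensorProduct.includeLeft : R →ₐ[F] R ⊗[F] R).toRingHom (1 ⊗ₜ x i)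

/-- The elements `c` for which `θ (1 ⊗ c - c ⊗ 1)` is divisible by `ε`. -/
def diagSub (F : Type*) {R : Type*} [Field F] [CommRing R] [Algebra F R] (t : R)
    (θ : R ⊗[F] R) : Subalgebra F R where
  carrier := {c | eps F t ∣ θ * (1 ⊗ₜ c - c ⊗ₜ 1)}
  mul_mem' := by
    intro a b ha hb
    have h : θ * ((1 : R) ⊗ₜ[F] (a * b) - (a * b) ⊗ₜ 1)
        = (1 ⊗ₜ b) * (θ * (1 ⊗ₜ a - a ⊗ₜ 1)) + (a ⊗ₜ 1) * (θ * (1 ⊗ₜ b - b ⊗ₜ 1)) := by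
      have h1 : (1 : R) ⊗ₜ[F] (a * b) = (1 ⊗ₜ a) * (1 ⊗ₜ b) := by simp
      have h2 : (a * b) ⊗ₜ[F] (1 : R) = (a ⊗ₜ 1) * (b ⊗ₜ 1) := by simp
      rw [h1, h2]; ring
    rw [Set.mem_ofPred_eq, h]
    exact dvd_add (Dvd.dvd.mul_left ha _) (Dvd.dvd.mul_left hb _)
  add_mem' := by
    intro a b ha hb
    have h : θ * ((1 : R) ⊗ₜ[F] (a + b) - (a + b) ⊗ₜ 1)
        = (θ * (1 ⊗ₜ a - a ⊗ₜ 1)) + (θ * (1 ⊗ₜ b - b ⊗ₜ 1)) := by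
      rw [TensorProduct.tmul_add, TensorProduct.add_tmul]; ring
    rw [Set.mem_ofPred_eq, h]
    exact dvd_add ha hb
  algebraMap_mem' := by
    intro c
    have : (1 : R) ⊗ₜ[F] algebraMap F R c - algebraMap F R c ⊗ₜ 1 = 0 := by
      rw [Algebra.algebraMap_eq_smul_one, TensorProduct.tmul_smul, TensorProduct.smul_tmul', sub_self]
    rw [Set.mem_ofPred_eq, this, mul_zero]
    exact dvd_zero _

lemma mem_diagSub {t c : R} {θ : R ⊗[F] R} :
    c ∈ diagSub F t θ ↔ eps F t ∣ θ * (1 ⊗ₜ c - c ⊗ₜ 1) := Iff.rfl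

variable {n N β k : ℕ} {t : R} {x : ℕ → R} {g : ℕ → R[X]}

lemma mon_mem {S : Subalgebra F R} {j : ℕ} (ht : t ∈ S) (hx : ∀ l < j, x l ∈ S) (i : ℕ)
    (I : ℕ → ℕ) : mon t x j i I ∈ S := by
  unfold mon
  refine S.mul_mem (S.pow_mem ht _) (S.prod_mem fun l hl => ?_)
  exact S.pow_mem (hx l (Finset.mem_range.1 hl)) _

lemma Fil_le_adjoin {j : ℕ} {B A : ℤ} {a : R} (ha : a ∈ Fil F N β t x j B A) :
    a ∈ Algebra.adjoin F (insert t (x '' Set.Iio j)) := by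
  have hle : Fil F N β t x j B A
      ≤ Subalgebra.toSubmodule (Algebra.adjoin F (insert t (x '' Set.Iio j))) := by
    rw [Fil, Submodule.span_le]
    rintro _ ⟨i, I, rfl, -, -⟩
    rw [SetLike.mem_coe, Subalgebra.mem_toSubmodule]
    refine mon_mem (Algebra.subset_adjoin (Set.mem_insert _ _)) (fun l hl => ?_) _ _
    exact Algebra.subset_adjoin (Set.mem_insert_of_mem _ (Set.mem_image_of_mem x hl))
  exact hle ha

lemma Datum.adjoin_le_diagSub (D : Datum F n N β k t x g) (j : ℕ) (hj : j ≤ k) :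
    Algebra.adjoin F (insert t (x '' Set.Iio j)) ≤ diagSub F t (Theta F x g j) := by
  induction j with
  | zero =>
    rw [Algebra.adjoin_le_iff]
    rintro _ (rfl | ⟨i, hi, rfl⟩)
    · exact Dvd.intro_left _ rfl
    · simp at hi
  | succ j ih =>
    have ih := ih (by omega)
    have hle : diagSub F t (Theta F x g j) ≤ diagSub F t (Theta F x g (j + 1)) := by
      intro c hc
      rw [mem_diagSub] at hc ⊢
      rw [Theta, Finset.prod_range_succ, mul_right_comm]
      exact Dvd.dvd.mul_right hc _
    rw [Algebra.adjoin_le_iff]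
    rintro _ (rfl | ⟨i, hi, rfl⟩)
    · exact hle (ih (Algebra.subset_adjoin (Set.mem_insert _ _)))
    · rcases (Nat.lt_succ_iff_lt_or_eq.1 hi) with hi | rfl
      · exact hle (ih (Algebra.subset_adjoin (Set.mem_insert_of_mem _ ⟨i, hi, rfl⟩)))
      · rw [SetLike.mem_coe, mem_diagSub, Theta, Finset.prod_range_succ]
        set ι : R →+* R ⊗[F] R :=
          (Algebra.TensorProduct.includeLeft : R →ₐ[F] R ⊗[F] R).toRingHom with hι
        have hιa : ∀ a, ι a = a ⊗ₜ 1 := fun a => rfl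
        -- `g_{i+1}(x') (x' - x) = g_i(x')`, and `g_i(x) = 0`
        have h1 : (g (i + 1)).eval₂ ι (1 ⊗ₜ x i) * (1 ⊗ₜ x i - x i ⊗ₜ 1)
            = (g i).eval₂ ι (1 ⊗ₜ x i) := by
          rw [D.g_succ i hj, eval₂_mul, eval₂_sub, eval₂_X, eval₂_C, hιa, mul_comm]
        have h2 : (g i).eval₂ ι (1 ⊗ₜ x i) = - ∑ l ∈ Finset.range ((g i).natDegree + 1),
            (1 ⊗ₜ (g i).coeff l - (g i).coeff l ⊗ₜ 1) * (1 ⊗ₜ x i) ^ l := by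
          have h0 : (g i).eval (x i) = 0 := by rw [D.g_succ i hj]; simp
          have h3 : (1 : R) ⊗ₜ[F] (g i).eval (x i) = 0 := by rw [h0, TensorProduct.tmul_zero]
          rw [eval_eq_sum_range, TensorProduct.tmul_sum] at h3
          rw [eval₂_eq_sum_range, ← sub_eq_zero, sub_neg_eq_add, ← Finset.sum_add_distrib, ← h3]
          refine Finset.sum_congr rfl fun l _ => ?_
          rw [hιa, ← add_mul]
          simp [Algebra.TensorProduct.tmul_pow]
        rw [mul_assoc, h1, h2, mul_neg, Finset.mul_sum, dvd_neg]
        refine Finset.dvd_sum fun l hl => ?_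
        rw [← mul_assoc]
        refine Dvd.dvd.mul_right ?_ _
        rw [Finset.mem_range, D.natDegree i (by omega)] at hl
        exact ih (Fil_le_adjoin (D.coeff i (by omega) l (by omega)))

/-- `Θ` times the diagonal ideal is contained in the ideal generated by `ε`: since `Θ` does not
vanish at good diagonal points, `ε` is a local equation of the diagonal there. -/
lemma Datum.dvd_of_mu_eq_zero (D : Datum F n N β k t x g) {z : R ⊗[F] R}
    (hz : Algebra.TensorProduct.lmul' F (S := R) z = 0) : eps F t ∣ Theta F x g k * z := by
  have h : z ∈ KaehlerDifferential.ideal F R := hz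
  rw [← KaehlerDifferential.span_range_eq_ideal] at h
  rw [← Ideal.mem_span_singleton]
  have hle : Ideal.span (Set.range fun s : R => (1 : R) ⊗ₜ[F] s - s ⊗ₜ[F] (1 : R))
      ≤ (Ideal.span {eps F t}).colon {Theta F x g k} := by
    rw [Ideal.span_le]
    rintro _ ⟨c, rfl⟩
    have hc : c ∈ Algebra.adjoin F (insert t (x '' Set.Iio k)) := by rw [D.gen]; trivial
    have := D.adjoin_le_diagSub k le_rfl hc
    rw [SetLike.mem_coe, Submodule.mem_colon_singleton, smul_eq_mul, mul_comm, Ideal.mem_span_singleton]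
    exact this
  have := hle h
  rwa [Submodule.mem_colon_singleton, smul_eq_mul, mul_comm] at this

/-- The filtration of `R ⊗ R` induced by `Fil`. -/
def QF (F : Type*) {R : Type*} [Field F] [CommRing R] [Algebra F R]
    (N β : ℕ) (t : R) (x : ℕ → R) (k : ℕ) (B A : ℤ) : Submodule F (R ⊗[F] R) :=
  Submodule.span F {z | ∃ (B₁ A₁ B₂ A₂ : ℤ) (u v : R), z = u ⊗ₜ v ∧ u ∈ Fil F N β t x k B₁ A₁ ∧
    v ∈ Fil F N β t x k B₂ A₂ ∧ B ≤ B₁ + B₂ ∧ A₁ + A₂ ≤ A}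

lemma tmul_mem_QF {B₁ A₁ B₂ A₂ B A : ℤ} {u v : R} (hu : u ∈ Fil F N β t x k B₁ A₁)
    (hv : v ∈ Fil F N β t x k B₂ A₂) (hB : B ≤ B₁ + B₂) (hA : A₁ + A₂ ≤ A) :
    u ⊗ₜ v ∈ QF F N β t x k B A :=
  Submodule.subset_span ⟨_, _, _, _, _, _, rfl, hu, hv, hB, hA⟩

lemma QF_mul {B A B' A' : ℤ} {a b : R ⊗[F] R} (ha : a ∈ QF F N β t x k B A)
    (hb : b ∈ QF F N β t x k B' A') : a * b ∈ QF F N β t x k (B + B') (A + A') := by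
  have h := Submodule.mul_mem_mul ha hb
  rw [QF, QF, Submodule.span_mul_span] at h
  refine Submodule.span_mono ?_ h
  rintro _ ⟨_, ⟨B₁, A₁, B₂, A₂, u, v, rfl, h1, h2, h3, h4⟩, _,
    ⟨B₁', A₁', B₂', A₂', u', v', rfl, h1', h2', h3', h4'⟩, rfl⟩
  exact ⟨_, _, _, _, _, _, Algebra.TensorProduct.tmul_mul_tmul _ _ _ _, Fil_mul h1 h1',
    Fil_mul h2 h2', by linarith, by linarith⟩

lemma mu_mem_Fil {B A : ℤ} {z : R ⊗[F] R} (hz : z ∈ QF F N β t x k B A) :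
    Algebra.TensorProduct.lmul' F (S := R) z ∈ Fil F N β t x k B A := by
  induction hz using Submodule.span_induction with
  | mem y hy =>
    obtain ⟨B₁, A₁, B₂, A₂, u, v, rfl, h1, h2, h3, h4⟩ := hy
    rw [Algebra.TensorProduct.lmul'_apply_tmul]
    exact Fil_mono h3 h4 (Fil_mul h1 h2)
  | zero => rw [map_zero]; exact zero_mem _
  | add a b _ _ ha hb => rw [map_add]; exact add_mem ha hb
  | smul c a _ ha => rw [map_smul]; exact Submodule.smul_mem _ _ ha

lemma Datum.Theta_mem_QF (D : Datum F n N β k t x g) (j : ℕ) (hj : j ≤ k) :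
    Theta F x g j ∈ QF F N β t x k (β * topDeg n j) ((β + 1) * topDeg n j) := by
  induction j with
  | zero =>
    have := tmul_mem_QF (F := F) (N := N) (β := β) (t := t) (x := x) (k := k) (B := 0) (A := 0)
      one_mem_Fil one_mem_Fil (by simp) (by simp)
    simpa [Theta, topDeg, Algebra.TensorProduct.one_def] using this
  | succ j ih =>
    rw [Theta, topDeg, Finset.prod_range_succ, Finset.sum_range_succ]
    push_cast
    rw [mul_add, mul_add]
    have h := ih (by omega)
    rw [topDeg] at h
    push_cast at h
    refine QF_mul h ?_
    rw [eval₂_eq_sum_range]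
    refine Submodule.sum_mem _ fun l hl => ?_
    rw [Finset.mem_range, D.natDegree (j + 1) hj] at hl
    have h1 := Fil_mono_k hj (D.coeff (j + 1) hj l (by omega))
    have h2 := Fil_pow (F := F) (N := N) (β := β) (t := t) (x := x) (x_mem_Fil (k := k) (j := j) hj) l
    have h3 : ((n - (j + 1) - l : ℕ) : ℤ) + l = (n - 1 - j : ℕ) := by omega
    have h4 := tmul_mem_QF h1 h2 (B := β * (n - 1 - j : ℕ)) (A := (β + 1) * (n - 1 - j : ℕ))
      (by rw [← h3]; linarith) (by rw [← h3]; linarith)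
    convert h4 using 1
    simp [Algebra.TensorProduct.tmul_pow]

end Tensor

section Division

variable {F R : Type*} [Field F] [CommRing R] [Algebra F R]
variable {n N β k : ℕ} {t : R} {x : ℕ → R} {g : ℕ → R[X]}

/-- Products of two staircase monomials. -/
noncomputable def Datum.bb (D : Datum F n N β k t x g) :
    Module.Basis ((ℕ × St n k) × (ℕ × St n k)) F (R ⊗[F] R) := D.basis.tensorProduct D.basis

lemma Datum.bb_apply (D : Datum F n N β k t x g) (p q : ℕ × St n k) :
    D.bb (p, q) = D.basis p ⊗ₜ D.basis q := by
  simp [Datum.bb]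

lemma Datum.t_mul_basis (D : Datum F n N β k t x g) (i : ℕ) (I : St n k) :
    t * D.basis (i, I) = D.basis (i + 1, I) := by
  rw [D.basis_apply, D.basis_apply, mon, mon, pow_succ]; ring

lemma Datum.mem_QF_iff (D : Datum F n N β k t x g) {B A : ℤ} {z : R ⊗[F] R} :
    z ∈ QF F N β t x k B A ↔ ∀ p q, D.bb.repr z (p, q) ≠ 0 →
      B ≤ (N * p.1 + β * wt k p.2.exp) + (N * q.1 + β * wt k q.2.exp) ∧
      (N * p.1 + (β + 1) * wt k p.2.exp) + (N * q.1 + (β + 1) * wt k q.2.exp) ≤ A := by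
  constructor
  · intro hz
    induction hz using Submodule.span_induction with
    | mem y hy =>
      obtain ⟨B₁, A₁, B₂, A₂, u, v, rfl, h1, h2, h3, h4⟩ := hy
      intro p q hpq
      rw [Datum.bb, Module.Basis.tensorProduct_repr_tmul_apply] at hpq
      rw [D.Fil_eq, Module.Basis.mem_span_image] at h1 h2
      have hp := h1 (Finsupp.mem_support_iff.2 (left_ne_zero_of_mul (b := D.basis.repr v q) (by
        simpa [mul_comm] using hpq)))
      have hq := h2 (Finsupp.mem_support_iff.2 (right_ne_zero_of_mul (a := D.basis.repr u p) (by
        simpa [mul_comm] using hpq)))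
      rw [Finset.mem_coe, mem_idx D.N_pos] at hp hq
      constructor <;> linarith [hp.1, hp.2, hq.1, hq.2]
    | zero => simp
    | add a b _ _ ha hb =>
      intro p q hpq
      by_cases h : D.bb.repr a (p, q) = 0
      · refine hb p q fun h' => hpq ?_
        rw [map_add, Finsupp.add_apply, h, h', add_zero]
      · exact ha p q h
    | smul c a _ ha =>
      intro p q hpq
      refine ha p q fun h' => hpq ?_
      rw [map_smul, Finsupp.smul_apply, h', smul_zero]
  · intro h
    rw [← D.bb.linearCombination_repr z, Finsupp.linearCombination_apply]
    refine Submodule.sum_mem _ fun pq hpq => Submodule.smul_mem _ _ ?_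
    obtain ⟨p, q⟩ := pq
    have := h p q (Finsupp.mem_support_iff.1 hpq)
    rw [D.bb_apply, D.basis_apply, D.basis_apply]
    exact tmul_mem_QF (mon_mem_Fil le_rfl le_rfl) (mon_mem_Fil le_rfl le_rfl) this.1 this.2

/-- Coordinates of `ε z`. -/
lemma Datum.repr_eps_mul (D : Datum F n N β k t x g) (z : R ⊗[F] R) (i j : ℕ) (I J : St n k) :
    D.bb.repr (eps F t * z) ((i, I), (j + 1, J)) = D.bb.repr z ((i, I), (j, J))
      - (if i = 0 then 0 else D.bb.repr z ((i - 1, I), (j + 1, J))) := by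
  classical
  let φ : R ⊗[F] R →ₗ[F] F := D.bb.coord ((i, I), (j + 1, J)) ∘ₗ LinearMap.mulLeft F (eps F t)
  let ψ : R ⊗[F] R →ₗ[F] F := D.bb.coord ((i, I), (j, J))
    - (if i = 0 then 0 else D.bb.coord ((i - 1, I), (j + 1, J)))
  have h : φ = ψ := by
    refine D.bb.ext ?_
    rintro ⟨⟨a, I'⟩, ⟨b, J'⟩⟩
    have h1 : eps F t * D.bb ((a, I'), (b, J'))
        = D.bb ((a, I'), (b + 1, J')) - D.bb ((a + 1, I'), (b, J')) := by
      simp only [D.bb_apply, eps, sub_mul, Algebra.TensorProduct.tmul_mul_tmul, one_mul,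
        D.t_mul_basis]
    simp only [φ, ψ, LinearMap.comp_apply, LinearMap.mulLeft_apply, h1, map_sub,
      LinearMap.sub_apply, Module.Basis.coord_apply, Module.Basis.repr_self]
    rcases i with _ | i
    · simp [Finsupp.single_apply]
    · simp [Finsupp.single_apply]
  have h2 := LinearMap.congr_fun h z
  simp only [φ, ψ, LinearMap.comp_apply, LinearMap.mulLeft_apply, LinearMap.sub_apply,
    Module.Basis.coord_apply] at h2
  rw [h2]
  split_ifs <;> simp

/-- Division by `ε` respects the filtration. -/
lemma Datum.mem_QF_of_eps_mul (D : Datum F n N β k t x g) {B A : ℤ} {z : R ⊗[F] R}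
    (h : eps F t * z ∈ QF F N β t x k (B + N) (A + N)) : z ∈ QF F N β t x k B A := by
  rw [D.mem_QF_iff] at h ⊢
  suffices H : ∀ (i : ℕ) (I : St n k) (j : ℕ) (J : St n k), D.bb.repr z ((i, I), (j, J)) ≠ 0 →
      B ≤ (N * i + β * wt k I.exp) + (N * j + β * wt k J.exp) ∧
      (N * i + (β + 1) * wt k I.exp) + (N * j + (β + 1) * wt k J.exp : ℤ) ≤ A from
    fun p q => H p.1 p.2 q.1 q.2
  intro i I
  induction i with
  | zero =>
    intro j J hz
    have h1 := h (0, I) (j + 1, J) (by rw [D.repr_eps_mul]; simpa using hz)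
    push_cast at h1 ⊢
    constructor <;> linarith [h1.1, h1.2]
  | succ i ih =>
    intro j J hz
    by_cases h0 : D.bb.repr z ((i, I), (j + 1, J)) = 0
    · have h1 := h (i + 1, I) (j + 1, J) (by rw [D.repr_eps_mul]; simpa [h0] using hz)
      push_cast at h1 ⊢
      constructor <;> linarith [h1.1, h1.2]
    · have h1 := ih (j + 1) J h0
      push_cast at h1 ⊢
      constructor <;> linarith [h1.1, h1.2]

lemma Datum.eps_mul_injective (D : Datum F n N β k t x g) :
    Function.Injective (LinearMap.mulLeft F (eps F t)) := by
  rw [← LinearMap.ker_eq_bot, eq_bot_iff]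
  intro z hz
  rw [LinearMap.mem_ker, LinearMap.mulLeft_apply] at hz
  -- `ε z = 0` lies in the zero space `QF 1 0`
  have h := D.mem_QF_of_eps_mul (B := 1) (A := 0) (z := z) (by rw [hz]; exact zero_mem _)
  rw [D.mem_QF_iff] at h
  rw [Submodule.mem_bot, ← D.bb.repr.map_eq_zero_iff]
  ext ⟨p, q⟩
  by_contra hne
  have := h p q hne
  have h1 : (0 : ℤ) ≤ wt k p.2.exp := by positivity
  have h2 : (0 : ℤ) ≤ wt k q.2.exp := by positivity
  linarith [this.1, this.2]

end Division

/-! ### The auxiliary function in Stepanov's method -/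

section Stepanov

variable {F R : Type*} [Field F] [CommRing R] [Algebra F R]
variable {n N β k : ℕ} {t : R} {x : ℕ → R} {g : ℕ → R[X]}

/-- If the restrictions to the diagonal of `L 0, …, L (M - 1)` vanish, where `L 0 = s` and
`L (j + 1) = Θ L j / ε`, then `Θ ^ M s` is divisible by `ε ^ M`. The filtration is tracked along
the way, so that each restriction lies in a space of known dimension. -/
lemma Datum.QF_chain (D : Datum F n N β k t x g) (δ : R ⊗[F] R →ₗ[F] R ⊗[F] R)
    (hδ : ∀ z, δ (eps F t * z) = z) {B A : ℤ} {s : R ⊗[F] R} (hs : s ∈ QF F N β t x k B A) (M : ℕ)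
    (L : ℕ → R ⊗[F] R) (hL0 : L 0 = s) (hL : ∀ j, L (j + 1) = δ (Theta F x g k * L j))
    (h0 : ∀ j < M, L j ∈ QF F N β t x k (B + j * (β * topDeg n k - N))
        (A + j * ((β + 1) * topDeg n k - N)) → Algebra.TensorProduct.lmul' F (S := R) (L j) = 0) :
    ∀ j ≤ M, L j ∈ QF F N β t x k (B + j * (β * topDeg n k - N))
        (A + j * ((β + 1) * topDeg n k - N)) ∧
      Theta F x g k ^ j * s = eps F t ^ j * L j := by
  intro j
  induction j with
  | zero => intro _; simpa [hL0] using hs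
  | succ j ih =>
    intro hj
    obtain ⟨h1, h2⟩ := ih (by omega)
    obtain ⟨z, hz⟩ := D.dvd_of_mu_eq_zero (h0 j hj h1)
    have hLz : L (j + 1) = z := by rw [hL, hz, hδ]
    rw [hLz]
    refine ⟨D.mem_QF_of_eps_mul ?_, ?_⟩
    · rw [← hz]
      have h3 := QF_mul (D.Theta_mem_QF k le_rfl) h1
      have e1 : (B + ((j + 1 : ℕ) : ℤ) * (β * topDeg n k - N) + N : ℤ)
        = β * topDeg n k + (B + j * (β * topDeg n k - N)) := by push_cast; ring
      have e2 : (A + ((j + 1 : ℕ) : ℤ) * ((β + 1) * topDeg n k - N) + N : ℤ)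
        = (β + 1) * topDeg n k + (A + j * ((β + 1) * topDeg n k - N)) := by push_cast; ring
      rwa [e1, e2]
    · rw [pow_succ', mul_assoc, h2, mul_left_comm, hz, pow_succ, mul_assoc]

/-- The auxiliary element of `R ⊗ R` vanishing to high order along the diagonal, found by
comparing dimensions. -/
lemma Datum.exists_aux (D : Datum F n N β k t x g) (M l₁ l₂ b : ℕ) (hb : β * topDeg n k ≤ b)
    (hdim : ∑ j ∈ Finset.range M, n.descFactorial k * (l₁ + l₂ + j + 1)
      < n.descFactorial k * (l₁ - 1) * (n.descFactorial k * (l₂ - 1))) :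
    ∃ c : (idx n N β k (N * b) (N * (b + l₁ : ℕ))) × (idx n N β k (N * b) (N * (b + l₂ : ℕ))) → F,
      c ≠ 0 ∧ ∃ w : R ⊗[F] R, Theta F x g k ^ M *
        (∑ p, c p • (D.basis p.1 ⊗ₜ[F] D.basis p.2)) = eps F t ^ M * w := by
  classical
  obtain ⟨δ, hδ⟩ := LinearMap.exists_leftInverse_of_injective _
    (LinearMap.ker_eq_bot.2 D.eps_mul_injective)
  have hδ : ∀ z, δ (eps F t * z) = z := fun z => LinearMap.congr_fun hδ z
  set U := idx n N β k (N * b) (N * (b + l₁ : ℕ)) with hU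
  set V := idx n N β k (N * b) (N * (b + l₂ : ℕ)) with hV
  let Ξ : (U × V → F) →ₗ[F] R ⊗[F] R :=
    Fintype.linearCombination F fun p : U × V => D.basis p.1 ⊗ₜ[F] D.basis p.2
  have hΞ : ∀ c, Ξ c = ∑ p, c p • (D.basis p.1 ⊗ₜ[F] D.basis p.2) := fun c => rfl
  let L : ℕ → R ⊗[F] R →ₗ[F] R ⊗[F] R :=
    fun j => (δ ∘ₗ LinearMap.mulLeft F (Theta F x g k)) ^ j
  let B : ℤ := N * b + N * b
  let A : ℤ := N * (b + l₁ : ℕ) + N * (b + l₂ : ℕ)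
  let W : ℕ → Submodule F R := fun j => Fil F N β t x k (B + j * (β * topDeg n k - N))
        (A + j * ((β + 1) * topDeg n k - N))
  have hW : ∀ j, Module.Finite F (W j) := fun j => D.finite_Fil _ _
  have hpr : ∀ j, ∃ pr : R →ₗ[F] W j, ∀ w : W j, pr w = w := by
    intro j
    obtain ⟨pr, h⟩ := LinearMap.exists_leftInverse_of_injective (W j).subtype (Submodule.ker_subtype _)
    exact ⟨pr, fun w => LinearMap.congr_fun h w⟩
  choose pr hpr using hpr
  let Ω : (U × V → F) →ₗ[F] (∀ j : Fin M, W j) := LinearMap.pi fun j =>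
    pr j ∘ₗ (Algebra.TensorProduct.lmul' F (S := R)).toLinearMap ∘ₗ L j ∘ₗ Ξ
  have hdom : Module.finrank F (U × V → F) = U.card * V.card := by
    rw [Module.finrank_fintype_fun_eq_card, Fintype.card_prod, Fintype.card_coe, Fintype.card_coe]
  have hcod : Module.finrank F (∀ j : Fin M, W j)
      ≤ ∑ j ∈ Finset.range M, n.descFactorial k * (l₁ + l₂ + j + 1) := by
    rw [Module.finrank_pi_fintype, Finset.sum_range]
    refine Finset.sum_le_sum fun j _ => ?_
    rw [D.finrank_Fil]
    refine card_idx_le D.N_pos ?_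
    have hT : (topDeg n k : ℤ) ≤ N := by exact_mod_cast D.top_le
    have := mul_le_mul_of_nonneg_left hT (Int.natCast_nonneg (j : ℕ))
    simp only [A, B]
    push_cast
    linarith
  have hker := LinearMap.ker_ne_bot_of_finrank_lt (f := Ω) (by
    rw [hdom]
    refine hcod.trans_lt (hdim.trans_le ?_)
    exact Nat.mul_le_mul (le_card_idx D.N_pos D.top_le hb) (le_card_idx D.N_pos D.top_le hb))
  obtain ⟨c, hc, hc0⟩ := Submodule.exists_mem_ne_zero_of_ne_bot hker
  refine ⟨c, hc0, L M (Ξ c), ?_⟩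
  have hs : Ξ c ∈ QF F N β t x k B A := by
    rw [hΞ]
    refine Submodule.sum_mem _ fun p _ => Submodule.smul_mem _ _ ?_
    have h1 := (mem_idx D.N_pos).1 p.1.2
    have h2 := (mem_idx D.N_pos).1 p.2.2
    rw [D.basis_apply, D.basis_apply]
    exact tmul_mem_QF (mon_mem_Fil h1.1 h1.2) (mon_mem_Fil h2.1 h2.2) le_rfl le_rfl
  refine (D.QF_chain δ hδ hs M (fun j => L j (Ξ c)) (by simp [L]) (fun j => ?_)
    (fun j hj hmem => ?_) M le_rfl).2
  · simp only [L, pow_succ']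
    rfl
  · have h1 := congrFun (LinearMap.mem_ker.1 hc) ⟨j, hj⟩
    have h2 : pr j (Algebra.TensorProduct.lmul' F (S := R) (L j (Ξ c))) = 0 := h1
    have h3 := hpr j ⟨_, mu_mem_Fil hmem⟩
    rw [h2] at h3
    exact (congrArg Subtype.val h3).symm

lemma Fil_prod {ι : Type*} (s : Finset ι) (f : ι → R) (B A : ι → ℤ)
    (h : ∀ i ∈ s, f i ∈ Fil F N β t x k (B i) (A i)) :
    ∏ i ∈ s, f i ∈ Fil F N β t x k (∑ i ∈ s, B i) (∑ i ∈ s, A i) := by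
  classical
  induction s using Finset.induction_on with
  | empty => simpa using one_mem_Fil
  | insert a s ha ih =>
    rw [Finset.prod_insert ha, Finset.sum_insert ha, Finset.sum_insert ha]
    exact Fil_mul (h a (Finset.mem_insert_self _ _))
      (ih fun i hi => h i (Finset.mem_insert_of_mem hi))

/-- A map multiplying all weights by `q` multiplies the filtration by `q`. -/
lemma map_mem_Fil (q : ℕ) (Φ : R →ₐ[F] R) (hΦt : Φ t = t ^ q)
    (hΦx : ∀ j < k, ∃ j' < k, Φ (x j) = x j' ^ q) {B A : ℤ} {a : R}
    (ha : a ∈ Fil F N β t x k B A) : Φ a ∈ Fil F N β t x k (q * B) (q * A) := by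
  induction ha using Submodule.span_induction with
  | mem y hy =>
    obtain ⟨i, I, rfl, h1, h2⟩ := hy
    have h3 : Φ (mon t x k i I) = t ^ (q * i) * ∏ j ∈ Finset.range k, Φ (x j) ^ I j := by
      rw [mon, map_mul, map_pow, hΦt, ← pow_mul, map_prod]
      simp only [map_pow]
    rw [h3]
    have h4 := Fil_mul (t_pow_mem_Fil (F := F) (N := N) (β := β) (t := t) (x := x) (k := k) (q * i))
      (Fil_prod (F := F) (N := N) (β := β) (t := t) (x := x) (k := k) (Finset.range k)
        (fun j => Φ (x j) ^ I j) (fun j => (I j : ℤ) * (q * β)) (fun j => (I j : ℤ) * (q * (β + 1)))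
        (fun j hj => by
          obtain ⟨j', hj', h5⟩ := hΦx j (Finset.mem_range.1 hj)
          rw [h5]
          exact Fil_pow (Fil_pow (x_mem_Fil hj') q) (I j)))
    rw [← Finset.sum_mul, ← Finset.sum_mul] at h4
    have hw : ∑ j ∈ Finset.range k, (I j : ℤ) = wt k I := by rw [wt]; push_cast; rfl
    rw [hw] at h4
    refine Fil_mono ?_ ?_ h4
    · have := mul_le_mul_of_nonneg_left h1 (Int.natCast_nonneg q)
      push_cast; linarith
    · have := mul_le_mul_of_nonneg_left h2 (Int.natCast_nonneg q)
      push_cast; linarith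
  | zero => rw [map_zero]; exact zero_mem _
  | add a b _ _ ha hb => rw [map_add]; exact add_mem ha hb
  | smul c a _ ha => rw [map_smul]; exact Submodule.smul_mem _ _ ha

/-- Stepanov's method: a bound for the number of points fixed by the Frobenius lift `Φ`. The
auxiliary element `∑ c (u ⊗ v)` is pulled back along `a ⊗ b ↦ a * Φ b`. The result is nonzero
because `Φ v` is a `q`-th power, and it vanishes to order `M` at each of the points, because the
fixed points of `Φ` lie on the diagonal. -/
lemma Datum.stepanov [IsDomain R] (D : Datum F n N β k t x g) (hk : k < n) (q M l₁ l₂ : ℕ)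
    (Φ : R →ₐ[F] R) (hΦt : Φ t = t ^ q) (hΦx : ∀ j < k, ∃ j' < k, Φ (x j) = x j' ^ q)
    (hpow : ∀ v, ∃ y, Φ v = y ^ q) (hq : q ≠ 0)
    (hpts : ∀ w ≠ 0, ∃ π : R →ₐ[F] F, π (Φ w) ≠ 0 ∧ π t ≠ 0)
    (hdim : ∑ j ∈ Finset.range M, n.descFactorial k * (l₁ + l₂ + j + 1)
      < n.descFactorial k * (l₁ - 1) * (n.descFactorial k * (l₂ - 1)))
    (hl : n.descFactorial k * l₁ < q) {ι : Type*} [Fintype ι] (π : ι → R →ₐ[F] F)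
    (hπ : Function.Injective π) (hfix : ∀ i a, π i (Φ a) = π i a) (ht : ∀ i, π i t ≠ 0)
    (hΘ : ∀ i, ∀ j < k, π i ((g (j + 1)).eval (x j)) ≠ 0) :
    M * Fintype.card ι ≤ n.descFactorial k * (l₁ + q * l₂) := by
  classical
  set b := β * topDeg n k with hb
  set U := idx n N β k (N * b) (N * (b + l₁ : ℕ)) with hU
  set V := idx n N β k (N * b) (N * (b + l₂ : ℕ)) with hV
  obtain ⟨c, hc, w, hw⟩ : ∃ c : U × V → F, c ≠ 0 ∧ ∃ w : R ⊗[F] R, Theta F x g k ^ M *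
      (∑ p, c p • (D.basis p.1 ⊗ₜ[F] D.basis p.2)) = eps F t ^ M * w :=
    D.exists_aux M l₁ l₂ b hb.ge hdim
  have hUF : ∀ p : U, D.basis p ∈ Fil F N β t x k (N * b) (N * (b + l₁ : ℕ)) := fun p => by
    rw [D.Fil_eq]; exact Submodule.subset_span ⟨_, p.2, rfl⟩
  have hVF : ∀ p : V, D.basis p ∈ Fil F N β t x k (N * b) (N * (b + l₂ : ℕ)) := fun p => by
    rw [D.Fil_eq]; exact Submodule.subset_span ⟨_, p.2, rfl⟩
  set s := ∑ p : U × V, c p • (D.basis p.1 ⊗ₜ[F] D.basis p.2) with hs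
  let Ψ : R ⊗[F] R →ₐ[F] R := Algebra.TensorProduct.productMap (AlgHom.id F R) Φ
  have hΨ : ∀ u v, Ψ (u ⊗ₜ v) = u * Φ v := fun u v =>
    Algebra.TensorProduct.productMap_apply_tmul _ _ _ _
  have hΨs : Ψ s = ∑ p : U × V, c p • (D.basis p.1 * Φ (D.basis p.2)) := by
    rw [hs, map_sum]
    exact Finset.sum_congr rfl fun p _ => by rw [map_smul, hΨ]
  -- `Ψ s` is nonzero: modulo the `q`-th power of the kernel of a point it is a nonzero linear
  -- combination of basis elements, of degree too small to vanish to order `q` at the point.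
  have hne : Ψ s ≠ 0 := by
    intro h0
    obtain ⟨⟨p₀, q₀⟩, hp₀⟩ := Function.ne_iff.1 hc
    let W : U → R := fun p => ∑ p' : V, c (p, p') • D.basis p'
    have hW0 : W p₀ ≠ 0 := by
      intro h
      have := Fintype.linearIndependent_iff.1
        (D.basis.linearIndependent.comp (fun p' : V => (p' : ℕ × St n k)) Subtype.val_injective)
        (fun p' => c (p₀, p')) h q₀
      exact hp₀ this
    obtain ⟨ρ, hρ1, hρt⟩ := hpts _ hW0
    let u : R := ∑ p : U, ρ (Φ (W p)) • D.basis p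
    have hu0 : u ≠ 0 := by
      intro h
      have := Fintype.linearIndependent_iff.1
        (D.basis.linearIndependent.comp (fun p' : U => (p' : ℕ × St n k)) Subtype.val_injective)
        (fun p => ρ (Φ (W p))) h p₀
      exact hρ1 this
    have huF : u ∈ Fil F N β t x k (N * b) (N * (b + l₁ : ℕ)) :=
      Submodule.sum_mem _ fun p _ => Submodule.smul_mem _ _ (hUF p)
    have hΨs' : Ψ s = ∑ p : U, D.basis p * Φ (W p) := by
      rw [hΨs, Fintype.sum_prod_type]
      refine Finset.sum_congr rfl fun p _ => ?_
      simp only [W, map_sum, map_smul, Finset.mul_sum, mul_smul_comm]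
    have huq : u ∈ RingHom.ker ρ ^ q := by
      have : u = - ∑ p : U, D.basis p * Φ (W p - algebraMap F R (ρ (Φ (W p)))) := by
        simp only [map_sub, mul_sub, Finset.sum_sub_distrib, ← hΨs', h0, zero_sub, neg_neg,
          AlgHom.commutes]
        exact Finset.sum_congr rfl fun p _ => by rw [Algebra.smul_def, mul_comm]
      rw [this]
      refine neg_mem (Ideal.sum_mem _ fun p _ => Ideal.mul_mem_left _ _ ?_)
      obtain ⟨y, hy⟩ := hpow (W p - algebraMap F R (ρ (Φ (W p))))
      rw [hy]
      refine Ideal.pow_mem_pow ?_ _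
      have h1 := congrArg ρ hy
      rw [map_sub, map_sub, AlgHom.commutes, AlgHom.commutes, map_pow] at h1
      rw [RingHom.mem_ker]
      exact pow_eq_zero_iff hq |>.1 (by rw [← h1]; simp)
    have := D.zero_bound hk q (fun _ : Unit => ρ) (fun _ _ _ => rfl) (fun _ => hρt) hu0 huF
      (fun _ => huq)
    rw [Fintype.card_unit, mul_one, mul_add] at this
    omega
  have hF : Ψ s ∈ Fil F N β t x k (N * (b + q * b : ℕ)) (N * (b + l₁ + q * (b + l₂) : ℕ)) := by
    rw [hΨs]
    refine Submodule.sum_mem _ fun p _ => Submodule.smul_mem _ _ ?_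
    have := Fil_mul (hUF p.1) (map_mem_Fil q Φ hΦt hΦx (hVF p.2))
    have e1 : (N * (b + q * b : ℕ) : ℤ) = N * b + q * (N * b) := by push_cast; ring
    have e2 : (N * (b + l₁ + q * (b + l₂) : ℕ) : ℤ)
      = N * (b + l₁ : ℕ) + q * (N * (b + l₂ : ℕ)) := by push_cast; ring
    rwa [e1, e2]
  have hM : ∀ i, Ψ s ∈ RingHom.ker (π i) ^ M := by
    intro i
    have h1 := congrArg Ψ hw
    rw [map_mul, map_mul, map_pow, map_pow] at h1
    refine mem_ker_pow_of_mul_mem (a := Ψ (Theta F x g k) ^ M) ?_ ?_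
    · rw [map_pow]
      refine pow_ne_zero _ ?_
      rw [Theta, map_prod, map_prod, Finset.prod_ne_zero_iff]
      intro j hj
      have h2 : π i (Ψ ((g (j + 1)).eval₂
          (Algebra.TensorProduct.includeLeft : R →ₐ[F] R ⊗[F] R).toRingHom (1 ⊗ₜ x j)))
          = π i ((g (j + 1)).eval (x j)) := by
        rw [eval₂_eq_sum_range, eval_eq_sum_range, map_sum, map_sum, map_sum]
        refine Finset.sum_congr rfl fun l _ => ?_
        rw [map_mul, map_mul, map_pow, map_pow, map_mul, map_pow, hΨ, one_mul, hfix]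
        congr 2
        exact (hΨ _ _).trans (by rw [map_one, mul_one])
      rw [h2]
      exact hΘ i j (Finset.mem_range.1 hj)
    · rw [h1]
      refine Ideal.mul_mem_right _ _ (Ideal.pow_mem_pow ?_ _)
      rw [RingHom.mem_ker, eps, map_sub, hΨ, hΨ, map_one, mul_one, one_mul, map_sub, hfix, sub_self]
  have := D.zero_bound hk M π hπ ht hne hF hM
  have h3 : n.descFactorial k * (b + l₁ + q * (b + l₂))
    = n.descFactorial k * (l₁ + q * l₂) + n.descFactorial k * (b + q * b) := by ring
  omega

end Stepanov

/-! ### The trinomial and its double roots -/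

/-- The trinomial `Y ^ n - t ^ r * Y ^ m + t ^ s`. -/
noncomputable def tri {R : Type*} [CommRing R] (n m r s : ℕ) (t : R) : R[X] :=
  X ^ n - C (t ^ r) * X ^ m + C (t ^ s)

/-- The numerical hypotheses, written with `l = n - m`. -/
structure Num (n m l r s : ℕ) : Prop where
  m_pos : 0 < m
  l_pos : 0 < l
  r_pos : 0 < r
  add : n = m + l
  cop : Nat.Coprime m l
  bez : s * l = r * n + 1

section
variable {n m l r s : ℕ} (h : Num n m l r s)
include h

theorem Num.r_lt_s : r < s := by
  have := h.bez; have := h.add; have := h.m_pos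
  by_contra hc
  push Not at hc
  nlinarith [Nat.mul_le_mul_right l hc, h.l_pos]

theorem Num.s_pos : 0 < s := lt_of_le_of_lt (Nat.zero_le _) h.r_lt_s

theorem Num.n_pos : 0 < n := by have := h.add; have := h.m_pos; omega

theorem Num.bez' : (s - r) * l = r * m + 1 := by
  obtain ⟨c, rfl⟩ := Nat.exists_eq_add_of_lt h.r_lt_s
  have := h.bez; have := h.add
  subst this
  have h2 : r + c + 1 - r = c + 1 := by omega
  rw [h2]; nlinarith

end

section ring
variable {R R' : Type*} [CommRing R] [CommRing R'] (n m r s : ℕ)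

theorem tri_eval (t x : R) : (tri n m r s t).eval x = x ^ n - t ^ r * x ^ m + t ^ s := by
  simp [tri]

theorem tri_map (φ : R →+* R') (t : R) : (tri n m r s t).map φ = tri n m r s (φ t) := by
  simp [tri]

theorem tri_eq (t : R) : tri n m r s t = X ^ n + (-(C (t ^ r) * X ^ m) + C (t ^ s)) := by
  unfold tri; ring

theorem tri_aux (hmn : m < n) (t : R) : (-(C (t ^ r) * X ^ m) + C (t ^ s)).degree < (n : WithBot ℕ) := by
  refine lt_of_le_of_lt (degree_le_of_natDegree_le (n := m) ?_) (WithBot.coe_lt_coe.2 hmn)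
  generalize t ^ r = a
  generalize t ^ s = b
  compute_degree

theorem tri_monic (hmn : m < n) (t : R) : (tri n m r s t).Monic := by
  rw [tri_eq]
  exact monic_X_pow_add (tri_aux n m r s hmn t)

theorem tri_natDegree [Nontrivial R] (hmn : m < n) (t : R) : (tri n m r s t).natDegree = n := by
  apply natDegree_eq_of_degree_eq_some
  rw [tri_eq, degree_add_eq_left_of_degree_lt, degree_X_pow]
  rw [degree_X_pow]
  exact tri_aux n m r s hmn t
end ring

section field
variable {E : Type*} [Field E] {n m l r s : ℕ} (h : Num n m l r s)
  (hn : (n : E) ≠ 0) (hm : (m : E) ≠ 0) (hl : (l : E) ≠ 0) {t x : E} (ht : t ≠ 0)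

include h ht in
theorem root_ne_zero (hx : (tri n m r s t).eval x = 0) : x ≠ 0 := by
  rintro rfl
  rw [tri_eval, zero_pow h.n_pos.ne', zero_pow h.m_pos.ne'] at hx
  exact pow_ne_zero s ht (by simpa using hx)

include h in
theorem mul_deriv (t x : E) : x * (derivative (tri n m r s t)).eval x
    = n * x ^ n - m * t ^ r * x ^ m := by
  obtain ⟨n', rfl⟩ := Nat.exists_eq_succ_of_ne_zero h.n_pos.ne'
  obtain ⟨m', rfl⟩ := Nat.exists_eq_succ_of_ne_zero h.m_pos.ne'
  unfold tri
  generalize t ^ r = a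
  generalize t ^ s = b
  simp
  ring

include h ht in
/-- The relations satisfied by a double root. -/
theorem double_root_rel (hx : (tri n m r s t).eval x = 0)
    (hx' : (derivative (tri n m r s t)).eval x = 0) :
    (n : E) * x ^ l = m * t ^ r ∧ (l : E) * x ^ m = n * t ^ (s - r) := by
  have x0 := root_ne_zero h ht hx
  have h1 := mul_deriv h t x
  rw [hx', mul_zero] at h1
  rw [tri_eval] at hx
  have hnE : (n : E) = m + l := by rw [h.add]; push_cast; rfl
  have e1 : x ^ n = x ^ m * x ^ l := by rw [h.add, pow_add]
  have e2 : t ^ s = t ^ r * t ^ (s - r) := by rw [← pow_add]; congr 1; have := h.r_lt_s; omega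
  constructor
  · apply mul_left_cancel₀ (pow_ne_zero m x0)
    rw [e1] at h1
    linear_combination -h1
  · apply mul_left_cancel₀ (pow_ne_zero r ht)
    rw [e2] at hx
    linear_combination -(t ^ r * x ^ m) * hnE - h1 - (n : E) * hx

include h hn ht in
/-- A multiple root can only occur at one nonzero value of `t`. -/
theorem double_root_t (hx : (tri n m r s t).eval x = 0)
    (hx' : (derivative (tri n m r s t)).eval x = 0) :
    (n : E) ^ n * t = (m : E) ^ m * (l : E) ^ l := by
  obtain ⟨h1, h2⟩ := double_root_rel h ht hx hx'
  have e1 : ((n : E) * x ^ l) ^ m * ((l : E) ^ l * n ^ l)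
      = ((l : E) * x ^ m) ^ l * (n ^ m * n ^ l) := by
    rw [mul_pow, mul_pow, ← pow_mul, ← pow_mul, mul_comm l m]; ring
  rw [h1, h2, mul_pow, mul_pow, ← pow_mul, ← pow_mul, h.bez', pow_succ] at e1
  have e2 : (n : E) ^ n = n ^ m * n ^ l := by rw [h.add, pow_add]
  rw [e2]
  apply mul_left_cancel₀ (mul_ne_zero (pow_ne_zero (r * m) ht) (pow_ne_zero l hn))
  linear_combination -e1

include h in
theorem eq_of_pow_eq {x y : E} (hy : y ≠ 0) (h1 : x ^ l = y ^ l) (h2 : x ^ m = y ^ m) : x = y := by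
  have a1 : (x / y) ^ l = 1 := by rw [div_pow, h1, div_self (pow_ne_zero _ hy)]
  have a2 : (x / y) ^ m = 1 := by rw [div_pow, h2, div_self (pow_ne_zero _ hy)]
  have := pow_gcd_eq_one.2 ⟨a2, a1⟩
  rw [h.cop.gcd_eq_one, pow_one] at this
  exact (div_eq_one_iff_eq hy).1 this

include h hn hl ht in
theorem double_root_unique {y : E} (hx : (tri n m r s t).eval x = 0)
    (hx' : (derivative (tri n m r s t)).eval x = 0) (hy : (tri n m r s t).eval y = 0)
    (hy' : (derivative (tri n m r s t)).eval y = 0) : x = y := by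
  obtain ⟨h1, h2⟩ := double_root_rel h ht hx hx'
  obtain ⟨h3, h4⟩ := double_root_rel h ht hy hy'
  exact eq_of_pow_eq h (root_ne_zero h ht hy) (mul_left_cancel₀ hn (h1.trans h3.symm))
    (mul_left_cancel₀ hl (h2.trans h4.symm))

include h hn hl ht in
/-- A multiple root has multiplicity exactly two. -/
theorem double_root_snd (hx : (tri n m r s t).eval x = 0)
    (hx' : (derivative (tri n m r s t)).eval x = 0) :
    (derivative (derivative (tri n m r s t))).eval x ≠ 0 := by
  intro hx2
  have x0 := root_ne_zero h ht hx
  obtain ⟨h1, -⟩ := double_root_rel h ht hx hx'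
  have key : x * (x * (derivative (derivative (tri n m r s t))).eval x)
      = n * n * x ^ n - m * m * t ^ r * x ^ m := by
    have hd : X * derivative (tri n m r s t)
        = C (n : E) * X ^ n - C ((m : E) * t ^ r) * X ^ m := by
      obtain ⟨n', rfl⟩ := Nat.exists_eq_succ_of_ne_zero h.n_pos.ne'
      obtain ⟨m', rfl⟩ := Nat.exists_eq_succ_of_ne_zero h.m_pos.ne'
      unfold tri
      generalize t ^ r = a
      generalize t ^ s = b
      simp
      ring
    have := congrArg (fun p => x * eval x (derivative p)) hd
    obtain ⟨n', rfl⟩ := Nat.exists_eq_succ_of_ne_zero h.n_pos.ne'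
    obtain ⟨m', rfl⟩ := Nat.exists_eq_succ_of_ne_zero h.m_pos.ne'
    simp only [derivative_mul, derivative_X, one_mul, eval_add, eval_mul, eval_X, hx', zero_add] at this
    rw [this]
    generalize t ^ r = a
    simp
    ring
  rw [hx2, mul_zero, mul_zero] at key
  have hnE : (n : E) = m + l := by rw [h.add]; push_cast; rfl
  have e1 : x ^ n = x ^ m * x ^ l := by rw [h.add, pow_add]
  have : (n : E) * l * x ^ n = 0 := by
    rw [e1] at key ⊢
    linear_combination -key - m * x ^ m * h1 - (n * x ^ m * x ^ l) * hnE
  exact mul_ne_zero (mul_ne_zero hn hl) (pow_ne_zero n x0) this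

include h hn hm hl in
/-- The double root exists. -/
theorem exists_double_root : ∃ t x : E, t ≠ 0 ∧ (tri n m r s t).eval x = 0 ∧
    (derivative (tri n m r s t)).eval x = 0 := by
  set v : E := n / m with hv
  set w : E := l / m with hw
  have v0 : v ≠ 0 := div_ne_zero hn hm
  have w0 : w ≠ 0 := div_ne_zero hl hm
  have hvw : v = 1 + w := by
    rw [hv, hw]; field_simp; rw [h.add]; push_cast; ring
  refine ⟨w ^ l / v ^ n, w ^ r / v ^ s, by positivity, ?_, ?_⟩
  all_goals
    have hx0 : w ^ r / v ^ s ≠ 0 := by positivity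
    have e1 : (w ^ l / v ^ n) ^ r * (w ^ r / v ^ s) ^ m = v * (w ^ r / v ^ s) ^ n := by
      have : (w ^ r / v ^ s) ^ n = (w ^ r / v ^ s) ^ m * (w ^ r / v ^ s) ^ l := by
        rw [← pow_add, h.add]
      rw [this]
      have : (w ^ l / v ^ n) ^ r = v * (w ^ r / v ^ s) ^ l := by
        simp only [div_pow, ← pow_mul]
        rw [h.bez, pow_succ, mul_comm l r, mul_comm n r]; field_simp
      rw [this]; ring
    have e2 : (w ^ l / v ^ n) ^ s = w * (w ^ r / v ^ s) ^ n := by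
      simp only [div_pow, ← pow_mul]
      rw [mul_comm l s, h.bez, pow_succ, mul_comm n s]; field_simp
  · rw [tri_eval, e1, e2]
    linear_combination - (w ^ r / v ^ s) ^ n * hvw
  · apply (mul_eq_zero.1 ((mul_deriv h _ _).trans ?_)).resolve_left hx0
    rw [mul_assoc, e1, hv]; field_simp; ring

include h in
/-- The parameter and a pair of distinct roots are rational functions of the ratio of the roots. -/
theorem root_param {y : E} (ht : t ≠ 0) (hx : (tri n m r s t).eval x = 0)
    (hy : (tri n m r s t).eval y = 0) (hxy : x ≠ y) :
    (y / x) ^ m - 1 ≠ 0 ∧ (y / x) ^ n - 1 ≠ 0 ∧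
    t = (((y / x) ^ n - (y / x) ^ m) / ((y / x) ^ m - 1)) ^ l /
      (((y / x) ^ n - 1) / ((y / x) ^ m - 1)) ^ n ∧
    x = (((y / x) ^ n - (y / x) ^ m) / ((y / x) ^ m - 1)) ^ r /
      (((y / x) ^ n - 1) / ((y / x) ^ m - 1)) ^ s := by
  have x0 := root_ne_zero h ht hx
  have y0 := root_ne_zero h ht hy
  set z := y / x with hz
  have hyz : y = z * x := by rw [hz]; field_simp
  set v := t ^ r / x ^ l with hv
  set w := t ^ s / x ^ n with hw
  have v0 : v ≠ 0 := by positivity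
  have w0 : w ≠ 0 := by positivity
  have e1 : x ^ n = x ^ m * x ^ l := by rw [h.add, pow_add]
  have f1 : 1 - v + w = 0 := by
    rw [tri_eval] at hx
    have : x ^ n * (1 - v + w) = 0 := by
      rw [← hx, hv, hw, e1]; field_simp
    exact (mul_eq_zero.1 this).resolve_left (by positivity)
  have f2 : z ^ n - v * z ^ m + w = 0 := by
    rw [tri_eval, hyz] at hy
    have : x ^ n * (z ^ n - v * z ^ m + w) = 0 := by
      rw [← hy, hv, hw, mul_pow, mul_pow, e1]; field_simp
    exact (mul_eq_zero.1 this).resolve_left (by positivity)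
  have f3 : z ^ n - 1 = v * (z ^ m - 1) := by linear_combination f2 - f1
  have g1 : z ^ m - 1 ≠ 0 := by
    intro hc
    rw [hc, mul_zero] at f3
    have hm1 : z ^ m = 1 := sub_eq_zero.1 hc
    have hn1 : z ^ n = 1 := sub_eq_zero.1 f3
    have hl1 : z ^ l = 1 := by
      rw [h.add, pow_add, hm1, one_mul] at hn1; exact hn1
    have := eq_of_pow_eq h (x := z) (y := 1) one_ne_zero (by simpa using hl1) (by simpa using hm1)
    exact hxy (by rw [hyz, this, one_mul])
  have hve : (z ^ n - 1) / (z ^ m - 1) = v := by rw [f3]; field_simp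
  have hwe : (z ^ n - z ^ m) / (z ^ m - 1) = w := by
    have : z ^ n - z ^ m = w * (z ^ m - 1) := by linear_combination f3 - (z ^ m - 1) * f1
    rw [this]; field_simp
  rw [hve, hwe]
  refine ⟨g1, ?_, ?_, ?_⟩
  · rw [f3]; exact mul_ne_zero v0 g1
  · rw [hv, hw]
    simp only [div_pow, ← pow_mul]
    rw [h.bez, pow_succ, mul_comm l n]; field_simp
  · rw [hv, hw]
    simp only [div_pow, ← pow_mul]
    rw [mul_comm l s, h.bez, pow_succ, mul_comm s r, mul_comm n r]; field_simp

end field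

/-! ### Specialization points and inertia -/

section mono
variable {K L E : Type*} [Field K] [Field L] [Field E] [Algebra K[X] L]
  [IsFractionRing K[X] L] [Algebra L E] [Algebra K[X] E] [IsScalarTower K[X] L E] [Algebra K E]
  [IsScalarTower K K[X] E]

theorem aeval_algebraMap_X (p : K[X]) : aeval (algebraMap K[X] E X) p = algebraMap K[X] E p := by
  have : aeval (algebraMap K[X] E X) = IsScalarTower.toAlgHom K K[X] E := by
    ext; simp
  rw [this]; rfl

variable (L) in
include L in
theorem t_transcendental : Transcendental K (algebraMap K[X] E X) := by
  have hi : Function.Injective (algebraMap K[X] E) := by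
    rw [IsScalarTower.algebraMap_eq K[X] L E]
    exact (algebraMap L E).injective.comp (IsFractionRing.injective K[X] L)
  rw [transcendental_iff]
  intro p hp
  rw [aeval_algebraMap_X] at hp
  exact hi (by simpa using hp)

variable {n m l r s : ℕ} (h : Num n m l r s)

variable (K) in
omit [Algebra K[X] E] [IsScalarTower K K[X] E] in
include h in
theorem ratio_transcendental {t x y : E} (ht : Transcendental K t)
    (hx : (tri n m r s t).eval x = 0) (hy : (tri n m r s t).eval y = 0) (hxy : x ≠ y) :
    Transcendental K (y / x) := by
  intro hz
  have t0 : t ≠ 0 := by rintro rfl; exact ht isAlgebraic_zero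
  obtain ⟨-, -, h3, -⟩ := root_param h t0 hx hy hxy
  generalize y / x = z at h3 hz
  apply ht
  rw [← mem_algebraicClosure_iff] at hz ⊢
  rw [h3]
  have h1 := one_mem (algebraicClosure K E)
  exact div_mem (pow_mem (div_mem (sub_mem (pow_mem hz _) (pow_mem hz _))
    (sub_mem (pow_mem hz _) h1)) _) (pow_mem (div_mem (sub_mem (pow_mem hz _) h1)
    (sub_mem (pow_mem hz _) h1)) _)

variable [FiniteDimensional L E] [IsGalois L E]

variable (L) in
include h in
/-- The Galois group is doubly transitive on the roots, because both `t` and the two roots are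
fixed rational functions of the ratio of the roots, which is transcendental. -/
theorem exists_aut_pair {x y x' y' : E}
    (hx : (tri n m r s (algebraMap K[X] E X)).eval x = 0)
    (hy : (tri n m r s (algebraMap K[X] E X)).eval y = 0) (hxy : x ≠ y)
    (hx' : (tri n m r s (algebraMap K[X] E X)).eval x' = 0)
    (hy' : (tri n m r s (algebraMap K[X] E X)).eval y' = 0) (hxy' : x' ≠ y') :
    ∃ σ : E ≃ₐ[L] E, σ x = x' ∧ σ y = y' := by
  set t : E := algebraMap K[X] E X with ht_def
  have ht : Transcendental K t := t_transcendental L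
  have t0 : t ≠ 0 := by intro h0; rw [h0] at ht; exact ht isAlgebraic_zero
  have hz := ratio_transcendental K h ht hx hy hxy
  have hz' := ratio_transcendental K h ht hx' hy' hxy'
  obtain ⟨-, -, h3, h4⟩ := root_param h t0 hx hy hxy
  obtain ⟨-, -, h3', h4'⟩ := root_param h t0 hx' hy' hxy'
  have x0 := root_ne_zero h t0 hx
  have x0' := root_ne_zero h t0 hx'
  have hyx : y = (y / x) * x := by field_simp
  have hyx' : y' = (y' / x') * x' := by field_simp
  generalize y / x = z at h3 h4 hz hyx
  generalize y' / x' = z' at h3' h4' hz' hyx'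
  let T : L := algebraMap K[X] L X
  let τ : L := ((T ^ n - T ^ m) / (T ^ m - 1)) ^ l / ((T ^ n - 1) / (T ^ m - 1)) ^ n
  have hinj : ∀ {w : E}, Transcendental K w → Function.Injective (aeval w : K[X] →ₐ[K] E).toRingHom :=
    fun hw => transcendental_iff_injective.1 hw
  let ψ : ∀ {w : E}, Transcendental K w → (L →+* E) := fun hw => IsFractionRing.lift (hinj hw)
  have hψT : ∀ {w : E} (hw : Transcendental K w), ψ hw T = w := by
    intro w hw
    simp [ψ, T, IsFractionRing.lift_algebraMap]
  have hψC : ∀ {w : E} (hw : Transcendental K w) (a : K),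
      ψ hw (algebraMap K[X] L (C a)) = algebraMap K E a := by
    intro w hw a
    simp [ψ, IsFractionRing.lift_algebraMap]
  have hτ : ψ hz τ = t := by rw [h3]; simp [τ, hψT]
  have hτ' : ψ hz' τ = t := by rw [h3']; simp [τ, hψT]
  let ι0 : K[X] →+* L := eval₂RingHom ((algebraMap K[X] L).comp C) τ
  have hcomp : ∀ {w : E} (hw : Transcendental K w), ψ hw τ = t →
      (ψ hw).comp ι0 = algebraMap K[X] E := by
    intro w hw hwt
    ext a
    · simp only [ι0, RingHom.comp_apply, coe_eval₂RingHom, eval₂_C]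
      rw [hψC hw, IsScalarTower.algebraMap_apply K K[X] E]; rfl
    · simp only [ι0, RingHom.comp_apply, coe_eval₂RingHom, eval₂_X]
      rw [hwt]
  have hιinj : Function.Injective ι0 := by
    have : Function.Injective ((ψ hz).comp ι0) := by
      rw [hcomp hz hτ, IsScalarTower.algebraMap_eq K[X] L E]
      exact (algebraMap L E).injective.comp (IsFractionRing.injective K[X] L)
    exact Function.Injective.of_comp (f := ψ hz) (by simpa using this)
  let ι : L →+* L := IsFractionRing.lift hιinj
  have hcomp2 : ∀ {w : E} (hw : Transcendental K w), ψ hw τ = t →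
      (ψ hw).comp ι = algebraMap L E := by
    intro w hw hwt
    apply IsLocalization.ringHom_ext (nonZeroDivisors K[X])
    rw [← IsScalarTower.algebraMap_eq K[X] L E, ← hcomp hw hwt]
    ext a <;> simp [ι, IsFractionRing.lift_algebraMap]
  have key : aeval z' (minpoly L z) = 0 := by
    have h1 : ψ hz (eval₂ ι T (minpoly L z)) = 0 := by
      rw [hom_eval₂, hcomp2 hz hτ, hψT hz]
      exact minpoly.aeval L z
    have h2 : eval₂ ι T (minpoly L z) = 0 := (map_eq_zero (ψ hz)).1 h1
    have h3 := congrArg (ψ hz') h2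
    rw [hom_eval₂, hcomp2 hz' hτ', hψT hz', map_zero] at h3
    exact h3
  have hzi : IsIntegral L z := IsIntegral.of_finite L z
  have hconj : IsConjRoot L z z' := isConjRoot_of_aeval_eq_zero hzi key
  obtain ⟨σ, hσ⟩ := hconj.exists_algEquiv
  refine ⟨σ.symm, ?_, ?_⟩
  all_goals
    have hσz : σ.symm z = z' := by rw [← hσ]; simp
    have hσx : σ.symm x = x' := by
      rw [h4, h4']; simp [hσz]
  · exact hσx
  · rw [hyx, hyx', map_mul, hσx, hσz]

end mono

section inertia
variable {K L E : Type*} [Field K] [Field L] [Field E] [Algebra K[X] L]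
  [IsFractionRing K[X] L] [Algebra L E] [Algebra K[X] E] [IsScalarTower K[X] L E] [Algebra K E]
  [IsScalarTower K K[X] E]

variable (L) in
omit [Algebra K E] [IsScalarTower K K[X] E] in
include L in
theorem algebraMap_S_injective :
    Function.Injective (algebraMap K[X] (integralClosure K[X] E)) := by
  have hi : Function.Injective (algebraMap K[X] E) := by
    rw [IsScalarTower.algebraMap_eq K[X] L E]
    exact (algebraMap L E).injective.comp (IsFractionRing.injective K[X] L)
  intro a b hab
  exact hi (congrArg Subtype.val hab)

variable (L) in
include L in
/-- Every value of the parameter lifts to a point of the integral closure of `K[t]`. -/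
theorem exists_point [IsAlgClosed K] (t₀ : K) : ∃ ψ : integralClosure K[X] E →ₐ[K] K,
    ψ (algebraMap K[X] (integralClosure K[X] E) X) = t₀ := by
  let S := integralClosure K[X] E
  let ev : K[X] →+* K := evalRingHom t₀
  have hmax : (RingHom.ker ev).IsMaximal :=
    RingHom.ker_isMaximal_of_surjective _ fun c => ⟨C c, by simp [ev]⟩
  have hinteg : Algebra.IsIntegral K[X] S := integralClosure.AlgebraIsIntegral
  obtain ⟨Q, hQ, hQc⟩ := Ideal.exists_ideal_over_maximal_of_isIntegral (S := S) (RingHom.ker ev)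
    (by rw [(RingHom.injective_iff_ker_eq_bot _).1 (algebraMap_S_injective L)]; exact bot_le)
  have hQX : ∀ p : K[X], Ideal.Quotient.mk Q (algebraMap K[X] S p)
      = algebraMap K (S ⧸ Q) (p.eval t₀) := by
    intro p
    have : p - C (p.eval t₀) ∈ Q.comap (algebraMap K[X] S) := by
      rw [hQc, RingHom.mem_ker]; simp [ev]
    rw [Ideal.mem_comap, ← Ideal.Quotient.eq_zero_iff_mem, map_sub, map_sub, sub_eq_zero] at this
    rw [this, IsScalarTower.algebraMap_apply K S (S ⧸ Q), IsScalarTower.algebraMap_apply K K[X] S]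
    rfl
  have hI : Algebra.IsIntegral K (S ⧸ Q) := by
    constructor
    intro a
    obtain ⟨a, rfl⟩ := Ideal.Quotient.mk_surjective a
    obtain ⟨p, hp, hpa⟩ := hinteg.isIntegral a
    refine ⟨p.map ev, hp.map ev, ?_⟩
    rw [eval₂_map]
    have h2 := congrArg (Ideal.Quotient.mk Q) hpa
    rw [hom_eval₂, map_zero] at h2
    have : (algebraMap K (S ⧸ Q)).comp ev = (Ideal.Quotient.mk Q).comp (algebraMap K[X] S) := by
      refine RingHom.ext fun q => ?_
      exact (hQX q).symm
    rw [this]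
    exact h2
  have hb : Function.Bijective (algebraMap K (S ⧸ Q)) :=
    IsAlgClosed.algebraMap_bijective_of_isIntegral
  let e := AlgEquiv.ofBijective (Algebra.ofId K (S ⧸ Q)) hb
  refine ⟨e.symm.toAlgHom.comp (Ideal.Quotient.mkₐ K Q), ?_⟩
  change e.symm (Ideal.Quotient.mk Q (algebraMap K[X] S X)) = t₀
  rw [hQX, AlgEquiv.symm_apply_eq]
  simp [e]

variable [FiniteDimensional L E] [IsGalois L E]

variable (L) in
/-- If `t - t₁` vanishes to second order at a point, then the inertia group there is not trivial.
Otherwise one could find an element vanishing to first order at that point only, and to second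
order at all conjugate points; its trace would then be a polynomial in `t` vanishing to first
order. -/
theorem exists_inertia (t₁ : K) (ψ : integralClosure K[X] E →ₐ[K] K)
    (hψ : ψ (algebraMap K[X] (integralClosure K[X] E) X) = t₁)
    (hsq : algebraMap K[X] (integralClosure K[X] E) (X - C t₁) ∈ RingHom.ker ψ ^ 2) :
    ∃ σ : E ≃ₐ[L] E, σ ≠ 1 ∧
      ∀ a, ψ (galRestrict K[X] L E (integralClosure K[X] E) σ a) = ψ a := by
  classical
  let S := integralClosure K[X] E
  let g := galRestrict K[X] L E S
  by_contra hcon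
  push Not at hcon
  let ψσ : (E ≃ₐ[L] E) → (S →ₐ[K] K) := fun σ => ψ.comp ((g σ).toAlgHom.restrictScalars K)
  have hne : ∀ σ, σ ≠ 1 → ψ ≠ ψσ σ := by
    intro σ hσ heq
    obtain ⟨a, ha⟩ := hcon σ hσ
    exact ha (congrArg (fun φ : S →ₐ[K] K => φ a) heq).symm
  have hcop : IsCoprime (RingHom.ker ψ ^ 2)
      (∏ σ ∈ Finset.univ.erase (1 : E ≃ₐ[L] E), RingHom.ker (ψσ σ) ^ 2) := by
    apply IsCoprime.prod_right
    intro σ hσ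
    exact (ker_isCoprime (hne σ (Finset.ne_of_mem_erase hσ))).pow
  obtain ⟨p, hp, e, he, hpe⟩ := Ideal.isCoprime_iff_exists.1 hcop
  have he' : ∀ σ, σ ≠ 1 → g σ e ∈ RingHom.ker ψ ^ 2 := by
    intro σ hσ
    have h1 : e ∈ RingHom.ker (ψσ σ) ^ 2 :=
      Ideal.le_of_dvd (Finset.dvd_prod_of_mem _ (Finset.mem_erase.2 ⟨hσ, Finset.mem_univ _⟩)) he
    have h2 : RingHom.ker (ψσ σ) = (RingHom.ker ψ).comap (g σ : S →+* S) := rfl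
    rw [h2] at h1
    exact Ideal.le_comap_pow (g σ : S →+* S) 2 h1
  have hN : IsNoetherianRing S := IsIntegralClosure.isNoetherianRing K[X] L E S
  have hmax := ker_isMaximal ψ
  obtain ⟨y, hy, hy2⟩ : ∃ y ∈ RingHom.ker ψ, y ∉ RingHom.ker ψ ^ 2 := by
    refine SetLike.exists_of_lt (lt_of_le_of_ne (Ideal.pow_le_self two_ne_zero) fun heq => ?_)
    have hid : IsIdempotentElem (RingHom.ker ψ) := by
      unfold IsIdempotentElem; rw [← pow_two]; exact heq
    rcases (Ideal.isIdempotentElem_iff_eq_bot_or_top _ (IsNoetherian.noetherian _)).1 hid with h | h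
    · rw [heq, h, Ideal.mem_bot] at hsq
      have := algebraMap_S_injective L (hsq.trans (map_zero _).symm)
      exact X_sub_C_ne_zero t₁ this
    · exact hmax.ne_top h
  let τ : S := ∑ σ : E ≃ₐ[L] E, g σ (e * y)
  have hτy : τ - y ∈ RingHom.ker ψ ^ 2 := by
    have hsplit : τ = e * y + ∑ σ ∈ Finset.univ.erase (1 : E ≃ₐ[L] E), g σ (e * y) := by
      simp only [τ]
      rw [← Finset.add_sum_erase _ _ (Finset.mem_univ (1 : E ≃ₐ[L] E))]
      simp [g]
    have : τ - y = (∑ σ ∈ Finset.univ.erase (1 : E ≃ₐ[L] E), g σ (e * y)) - p * y := by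
      rw [hsplit]; linear_combination y * hpe
    rw [this]
    refine sub_mem (sum_mem fun σ hσ => ?_) (Ideal.mul_mem_right _ _ hp)
    rw [map_mul]
    exact Ideal.mul_mem_right _ _ (he' σ (Finset.ne_of_mem_erase hσ))
  have hτP : τ ∈ RingHom.ker ψ := by
    have := add_mem (Ideal.pow_le_self two_ne_zero hτy) hy
    simpa using this
  obtain ⟨a, ha⟩ : ∃ a : K[X], algebraMap K[X] S a = τ := by
    have h1 : algebraMap L E (Algebra.trace L E ((e * y : S) : E)) = (τ : E) := by
      rw [trace_eq_sum_automorphisms]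
      simp only [τ, AddSubmonoidClass.coe_finsetSum]
      refine Finset.sum_congr rfl fun σ _ => ?_
      exact (algebraMap_galRestrict_apply K[X] σ (e * y)).symm
    have h2 : IsIntegral K[X] (Algebra.trace L E ((e * y : S) : E)) :=
      Algebra.isIntegral_trace (e * y : S).2
    obtain ⟨a, ha⟩ := IsIntegrallyClosed.isIntegral_iff.1 h2
    refine ⟨a, Subtype.ext ?_⟩
    rw [← h1, ← ha, ← IsScalarTower.algebraMap_apply]
    rfl
  have hat : a.eval t₁ = 0 := by
    rw [← ha, RingHom.mem_ker] at hτP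
    have hφ : ∀ q : K[X], ψ (algebraMap K[X] S q) = q.eval t₁ := by
      intro q
      have : (ψ.comp (IsScalarTower.toAlgHom K K[X] S)) = aeval t₁ := by
        ext; simpa using hψ
      have := congrArg (fun φ : K[X] →ₐ[K] K => φ q) this
      simpa [aeval_def, eval₂_eq_eval_map] using this
    rwa [hφ] at hτP
  obtain ⟨b, hb⟩ := dvd_iff_isRoot.2 hat
  apply hy2
  have h3 : τ ∈ RingHom.ker ψ ^ 2 := by
    rw [← ha, hb, map_mul]
    exact Ideal.mul_mem_right _ _ hsq
  have := sub_mem h3 hτy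
  simpa using this

end inertia

/-! ### The monodromy group is the symmetric group -/

section prodroots
variable {R ι : Type*} [CommRing R] [Fintype ι] [DecidableEq ι] {f : R[X]} {x : ι → R}

omit [DecidableEq ι] in
theorem prod_dvd (hf : f = ∏ i, (X - C (x i))) (I : Finset ι) {a : R}
    (hI : ∀ i ∈ I, x i = a) : (X - C a) ^ I.card ∣ f := by
  rw [hf, ← Finset.prod_const]
  rw [Finset.prod_congr rfl fun i hi => by rw [← hI i hi]]
  exact Finset.prod_dvd_prod_of_subset _ _ _ (Finset.subset_univ I)

theorem deriv_eq_zero_of_eq (hf : f = ∏ i, (X - C (x i))) {i j : ι} (hij : i ≠ j)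
    (h : x i = x j) : (derivative f).eval (x i) = 0 := by
  obtain ⟨g, hg⟩ := prod_dvd hf {i, j} (a := x i) (by simp [h])
  rw [Finset.card_pair hij] at hg
  rw [hg]; simp [derivative_pow]

theorem deriv2_eq_zero_of_eq (hf : f = ∏ i, (X - C (x i))) {i j k : ι} (hij : i ≠ j)
    (hik : i ≠ k) (hjk : j ≠ k) (h : x j = x i) (h' : x k = x i) :
    (derivative (derivative f)).eval (x i) = 0 := by
  obtain ⟨g, hg⟩ := prod_dvd hf {i, j, k} (a := x i) (by simp [h, h'])
  have : ({i, j, k} : Finset ι).card = 3 := by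
    rw [Finset.card_eq_three]; exact ⟨i, j, k, hij, hik, hjk, rfl⟩
  rw [this] at hg
  rw [hg]; simp [derivative_pow]

omit [DecidableEq ι] in
theorem eval_root (hf : f = ∏ i, (X - C (x i))) (i : ι) : f.eval (x i) = 0 := by
  rw [hf, eval_prod]
  exact Finset.prod_eq_zero (Finset.mem_univ i) (by simp)

omit [DecidableEq ι] in
theorem exists_of_root [IsDomain R] (hf : f = ∏ i, (X - C (x i))) {a : R} (h : f.eval a = 0) :
    ∃ i, x i = a := by
  rw [hf, eval_prod, Finset.prod_eq_zero_iff] at h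
  obtain ⟨i, -, hi⟩ := h
  simp only [eval_sub, eval_X, eval_C] at hi
  exact ⟨i, (sub_eq_zero.1 hi).symm⟩

end prodroots

theorem tri_deriv_eval {R : Type*} [CommRing R] (n m r s : ℕ) (t x : R) :
    (derivative (tri n m r s t)).eval x = n * x ^ (n - 1) - t ^ r * (m * x ^ (m - 1)) := by
  unfold tri
  generalize t ^ r = a
  generalize t ^ s = b
  simp [derivative_X_pow]

section
variable {n m l r s : ℕ} (h : Num n m l r s)

include h in
/-- Near the double root, the parameter is a function of the root with vanishing first
derivative. -/
theorem t_sub_mem_sq {K S : Type*} [Field K] [CommRing S] [Algebra K S]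
    {t₁ x₀ : K} (ht₁ : t₁ ≠ 0)
    (h0 : (tri n m r s t₁).eval x₀ = 0) (h1 : (derivative (tri n m r s t₁)).eval x₀ = 0)
    (P : Ideal S) {T Y : S} (hT : T - algebraMap K S t₁ ∈ P) (hY : Y - algebraMap K S x₀ ∈ P)
    (hTY : (tri n m r s T).eval Y = 0) : T - algebraMap K S t₁ ∈ P ^ 2 := by
  obtain ⟨-, h2⟩ := double_root_rel h ht₁ h0 h1
  set c : K := s * t₁ ^ (s - 1) - r * t₁ ^ (r - 1) * x₀ ^ m with hc
  have c0 : c ≠ 0 := by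
    intro hc0
    have e1 : t₁ ^ s = t₁ ^ (s - 1) * t₁ := by
      rw [← pow_succ]; congr 1; have := h.s_pos; omega
    have e2 : t₁ ^ r = t₁ ^ (r - 1) * t₁ := by
      rw [← pow_succ]; congr 1; have := h.r_pos; omega
    have e3 : t₁ ^ s = t₁ ^ r * t₁ ^ (s - r) := by
      rw [← pow_add]; congr 1; have := h.r_lt_s; omega
    have e4 : (s : K) * l = r * n + 1 := by
      have := congrArg (Nat.cast : ℕ → K) h.bez
      push_cast at this; exact this
    have : t₁ ^ s = l * t₁ * c := by
      calc t₁ ^ s = (s * l - r * n) * t₁ ^ s := by rw [e4]; ring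
        _ = s * l * t₁ ^ s - r * t₁ ^ r * (n * t₁ ^ (s - r)) := by rw [e3]; ring
        _ = l * t₁ * c := by
          rw [← h2, hc, e1]
          rw [e2]
          ring
    rw [hc0, mul_zero] at this
    exact pow_ne_zero s ht₁ this
  set δ := Y - algebraMap K S x₀ with hδ
  set ε := T - algebraMap K S t₁ with hε
  have hYe : Y = algebraMap K S x₀ + δ := by rw [hδ]; ring
  have hTe : T = algebraMap K S t₁ + ε := by rw [hε]; ring
  rw [tri_eval] at hTY h0
  rw [tri_deriv_eval] at h1
  have h0' := congrArg (algebraMap K S) h0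
  have h1' := congrArg (algebraMap K S) h1
  have hc' := congrArg (algebraMap K S) hc
  simp only [map_add, map_sub, map_mul, map_pow, map_natCast, map_zero] at h0' h1' hc'
  rw [hYe, hTe] at hTY
  generalize hA : algebraMap K S x₀ = A at *
  generalize hB : algebraMap K S t₁ = B at *
  obtain ⟨k1, e1⟩ := powAddExpansion A δ n
  obtain ⟨k2, e2⟩ := powAddExpansion A δ m
  obtain ⟨k3, e3⟩ := powAddExpansion B ε r
  obtain ⟨k4, e4⟩ := powAddExpansion B ε s
  rw [e1, e2, e3, e4] at hTY
  have hδδ : δ * δ ∈ P ^ 2 := by rw [pow_two]; exact Ideal.mul_mem_mul hY hY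
  have hεδ : ε * δ ∈ P ^ 2 := by rw [pow_two]; exact Ideal.mul_mem_mul hT hY
  have hεε : ε * ε ∈ P ^ 2 := by rw [pow_two]; exact Ideal.mul_mem_mul hT hT
  have key : algebraMap K S c * ε = (B ^ r * k2 - k1) * (δ * δ)
      + (k3 * A ^ m - k4 + k3 * m * A ^ (m - 1) * δ + k3 * k2 * δ ^ 2) * (ε * ε)
      + (r * B ^ (r - 1) * m * A ^ (m - 1) + r * B ^ (r - 1) * k2 * δ) * (ε * δ) := by
    rw [hc']
    linear_combination hTY - h0' - δ * h1'
  have hcε : algebraMap K S c * ε ∈ P ^ 2 := by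
    rw [key]
    exact add_mem (add_mem (Ideal.mul_mem_left _ _ hδδ) (Ideal.mul_mem_left _ _ hεε))
      (Ideal.mul_mem_left _ _ hεδ)
  have : ε = algebraMap K S c⁻¹ * (algebraMap K S c * ε) := by
    rw [← mul_assoc, ← map_mul, inv_mul_cancel₀ c0, map_one, one_mul]
  rw [this]
  exact Ideal.mul_mem_left _ _ hcε

variable {K L E : Type*} [Field K] [Field L] [Field E] [Algebra K[X] L]
  [IsFractionRing K[X] L] [Algebra L E] [Algebra K[X] E] [IsScalarTower K[X] L E] [Algebra K E]
  [IsScalarTower K K[X] E]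

include h in
/-- Over a transcendental parameter the trinomial is separable. -/
theorem roots_injective (hn : (n : K) ≠ 0) {t : E} (ht : Transcendental K t) {x : Fin n → E}
    (hf : tri n m r s t = ∏ i, (X - C (x i))) : Function.Injective x := by
  intro i j hij
  by_contra hne
  have t0 : t ≠ 0 := by rintro rfl; exact ht isAlgebraic_zero
  have hnE : (n : E) ≠ 0 := by
    rw [← map_natCast (algebraMap K E)]; exact (_root_.map_ne_zero _).2 hn
  have key := double_root_t h hnE t0 (eval_root hf i) (deriv_eq_zero_of_eq hf hne hij)
  apply ht
  have : t = algebraMap K E ((m : K) ^ m * (l : K) ^ l / n ^ n) := by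
    simp only [map_div₀, map_mul, map_pow, map_natCast]
    rw [← key]; field_simp
  rw [this]
  exact isAlgebraic_algebraMap _

variable [FiniteDimensional L E] [IsGalois L E] [IsAlgClosed K]

variable (L) in
include h in
/-- The Galois group of the generic trinomial is the full symmetric group: it is doubly transitive,
and the inertia group at the double root contains a transposition. -/
theorem exists_aut_perm (hn : (n : K) ≠ 0) (hm : (m : K) ≠ 0) (hl : (l : K) ≠ 0) {x : Fin n → E}
    (hf : tri n m r s (algebraMap K[X] E X) = ∏ i, (X - C (x i)))
    (hgen : Algebra.adjoin L (Set.range x) = ⊤) (π : Equiv.Perm (Fin n)) :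
    ∃ σ : E ≃ₐ[L] E, ∀ i, σ (x i) = x (π i) := by
  classical
  have htr : Transcendental K (algebraMap K[X] E X) := t_transcendental L
  have hinj := roots_injective h hn htr hf
  have hperm : ∀ σ : E ≃ₐ[L] E, ∃ π : Equiv.Perm (Fin n), ∀ i, σ (x i) = x (π i) := by
    intro σ
    have : ∀ i, ∃ j, x j = σ (x i) := by
      intro i
      apply exists_of_root hf
      have h1 := eval_root hf i
      have h2 := congrArg σ h1
      have h3 : σ (algebraMap K[X] E X) = algebraMap K[X] E X := by
        rw [IsScalarTower.algebraMap_apply K[X] L E, σ.commutes]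
      rw [tri_eval] at h2 ⊢
      simpa [h3] using h2
    choose p hp using this
    have hpi : Function.Injective p := by
      intro i j hij
      apply hinj
      apply σ.injective
      rw [← hp, ← hp, hij]
    exact ⟨Equiv.ofBijective p (Finite.injective_iff_bijective.1 hpi), fun i => (hp i).symm⟩
  let H : Subgroup (Equiv.Perm (Fin n)) :=
    { carrier := {π | ∃ σ : E ≃ₐ[L] E, ∀ i, σ (x i) = x (π i)}
      mul_mem' := by
        rintro a b ⟨σ, hσ⟩ ⟨τ, hτ⟩
        exact ⟨σ * τ, fun i => by simp [AlgEquiv.mul_apply, hτ, hσ]⟩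
      one_mem' := ⟨1, fun i => by simp⟩
      inv_mem' := by
        rintro a ⟨σ, hσ⟩
        refine ⟨σ.symm, fun i => ?_⟩
        rw [AlgEquiv.symm_apply_eq, hσ]; simp }
  obtain ⟨a, b, hab, hswap⟩ : ∃ a b, a ≠ b ∧ Equiv.swap a b ∈ H := by
    obtain ⟨t₁, x₀, ht₁, h0, h1⟩ := exists_double_root h hn hm hl
    obtain ⟨ψ, hψ⟩ := exists_point (E := E) L t₁
    let S := integralClosure K[X] E
    have hSinj : Function.Injective (algebraMap S E) := Subtype.val_injective
    let T : S := algebraMap K[X] S X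
    have hxint : ∀ i, IsIntegral K[X] (x i) := by
      intro i
      refine ⟨tri n m r s X, tri_monic _ _ _ _ (by have := h.add; have := h.l_pos; omega) _, ?_⟩
      rw [eval₂_eq_eval_map, tri_map]
      exact eval_root hf i
    let Y : Fin n → S := fun i => ⟨x i, hxint i⟩
    have hfS : tri n m r s T = ∏ i, (X - C (Y i)) := by
      apply Polynomial.map_injective _ hSinj
      rw [tri_map, Polynomial.map_prod]
      simp only [Polynomial.map_sub, map_X, map_C]
      exact hf
    have hfK : tri n m r s t₁ = ∏ i, (X - C (ψ (Y i))) := by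
      have := congrArg (Polynomial.map (ψ : S →+* K)) hfS
      rw [tri_map, Polynomial.map_prod] at this
      simp only [Polynomial.map_sub, map_X, map_C] at this
      rw [← hψ]
      exact this
    obtain ⟨i₀, hi₀⟩ := exists_of_root hfK h0
    have hsq : algebraMap K[X] S (X - C t₁) ∈ RingHom.ker ψ ^ 2 := by
      have e : algebraMap K[X] S (C t₁) = algebraMap K S t₁ := by
        rw [IsScalarTower.algebraMap_apply K K[X] S]; rfl
      rw [map_sub, e]
      refine t_sub_mem_sq h ht₁ h0 h1 (RingHom.ker ψ) (Y := Y i₀) ?_ ?_ (eval_root hfS i₀)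
      · rw [RingHom.mem_ker, map_sub, hψ]; simp
      · rw [RingHom.mem_ker, map_sub, hi₀]; simp
    obtain ⟨σ, hσ1, hσ⟩ := exists_inertia L t₁ ψ hψ hsq
    obtain ⟨π, hπ⟩ := hperm σ
    have hψπ : ∀ i, ψ (Y (π i)) = ψ (Y i) := by
      intro i
      rw [← hσ (Y i)]
      congr 1
      apply Subtype.ext
      have := algebraMap_galRestrict_apply K[X] (B := S) σ (Y i)
      exact ((this.trans (hπ i))).symm
    have hdbl : ∀ i j, i ≠ j → ψ (Y j) = ψ (Y i) → ψ (Y i) = x₀ := by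
      intro i j hij he
      exact double_root_unique h hn hl ht₁ (eval_root hfK i)
        (deriv_eq_zero_of_eq hfK hij he.symm) h0 h1
    have htri : ∀ i j k, i ≠ j → i ≠ k → j ≠ k → ψ (Y i) = x₀ → ψ (Y j) = x₀ →
        ψ (Y k) = x₀ → False := by
      intro i j k hij hik hjk hi hj hk
      have := deriv2_eq_zero_of_eq hfK hij hik hjk (hj.trans hi.symm) (hk.trans hi.symm)
      rw [hi] at this
      exact double_root_snd h hn hl ht₁ h0 h1 this
    obtain ⟨i, hi⟩ : ∃ i, π i ≠ i := by
      by_contra hc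
      push Not at hc
      apply hσ1
      have : (σ : E →ₐ[L] E) = AlgHom.id L E := by
        apply AlgHom.ext_of_adjoin_eq_top hgen
        rintro _ ⟨i, rfl⟩
        change σ (x i) = x i
        rw [hπ, hc]
      ext a
      exact congrArg (fun φ : E →ₐ[L] E => φ a) this
    have hmv : ∀ j, π j ≠ j → ψ (Y j) = x₀ := fun j hj => hdbl j (π j) hj.symm (hψπ j)
    have hmv' : ∀ j, π j ≠ j → ψ (Y (π j)) = x₀ := fun j hj => (hψπ j).trans (hmv j hj)
    have hππ : π (π i) ≠ π i := fun hc => hi (π.injective hc)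
    refine ⟨i, π i, hi.symm, ?_⟩
    have : π = Equiv.swap i (π i) := by
      ext j
      congr 1
      by_cases hji : j = i
      · rw [hji, Equiv.swap_apply_left]
      by_cases hjp : j = π i
      · rw [hjp, Equiv.swap_apply_right]
        by_contra hc
        exact htri i (π i) (π (π i)) hi.symm (fun h => hc h.symm) hππ.symm (hmv i hi) (hmv' i hi)
          (hmv' _ hππ)
      · rw [Equiv.swap_apply_of_ne_of_ne hji hjp]
        by_contra hc
        exact htri i (π i) j hi.symm (Ne.symm hji) (Ne.symm hjp) (hmv i hi) (hmv' i hi) (hmv j hc)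
    rw [← this]
    exact ⟨σ, hπ⟩
  have htop : H = ⊤ := by
    rw [eq_top_iff, ← Equiv.Perm.closure_isSwap, Subgroup.closure_le]
    rintro τ ⟨i, j, hij, rfl⟩
    obtain ⟨σ, h1, h2⟩ := exists_aut_pair L h (eval_root hf a) (eval_root hf b) (hinj.ne hab)
      (eval_root hf i) (eval_root hf j) (hinj.ne hij)
    obtain ⟨π', hπ'⟩ := hperm σ
    have e1 : π' a = i := hinj ((hπ' a).symm.trans h1)
    have e2 : π' b = j := hinj ((hπ' b).symm.trans h2)
    have hmem : π' ∈ H := ⟨σ, hπ'⟩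
    rw [← e1, ← e2, Equiv.swap_apply_apply]
    exact H.mul_mem (H.mul_mem hmem hswap) (H.inv_mem hmem)
  have : π ∈ H := htop ▸ Subgroup.mem_top π
  exact this

end

/-! ### The generic trinomial -/

/-- A generic trinomial: `t` is transcendental over `K`, the polynomial
`Y ^ n - t ^ r * Y ^ m + t ^ s` has the roots `x 0, …, x (n - 1)` in `E`, every permutation of them
is induced by an automorphism fixing `t`, and every value of `t` is attained at some `K`-point of
the ring generated by `t` and the roots. -/
structure Generic (K : Type*) {E : Type*} [Field K] [Field E] [Algebra K E] (n m r s : ℕ)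
    (t : E) (x : ℕ → E) : Prop where
  trans : Transcendental K t
  split : tri n m r s t = ∏ i ∈ Finset.range n, (X - C (x i))
  inj : ∀ i < n, ∀ j < n, x i = x j → i = j
  perm : ∀ π : Equiv.Perm (Fin n), ∃ σ : E ≃ₐ[K] E, σ t = t ∧
    ∀ i : Fin n, σ (x i) = x (π i)
  point : ∀ t₀ : K, ∃ ψ : Algebra.adjoin K (insert t (x '' Set.Iio n)) →ₐ[K] K,
    ∀ ht, ψ ⟨t, ht⟩ = t₀

theorem exists_generic (K : Type u) [Field K] [IsAlgClosed K] {n m l r s : ℕ}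
    (h : Num n m l r s) (hn : (n : K) ≠ 0) (hm : (m : K) ≠ 0) (hl : (l : K) ≠ 0) :
    ∃ (E : Type u) (_ : Field E) (_ : Algebra K E) (t : E) (x : ℕ → E),
      Generic K n m r s t x := by
  classical
  have hmn : m < n := by have := h.add; have := h.l_pos; omega
  let L := RatFunc K
  let f : L[X] := tri n m r s (algebraMap K[X] L X)
  let E := f.SplittingField
  let t : E := algebraMap K[X] E X
  have hfm : f.Monic := tri_monic _ _ _ _ hmn _
  have htower : IsScalarTower K K[X] E := by
    refine IsScalarTower.of_algebraMap_eq fun a => ?_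
    rw [IsScalarTower.algebraMap_apply K L E, IsScalarTower.algebraMap_apply K[X] L E,
      ← IsScalarTower.algebraMap_apply K K[X] L]
  have hfE : f.map (algebraMap L E) = tri n m r s t := by
    rw [tri_map, ← IsScalarTower.algebraMap_apply]
  have hsp : (f.map (algebraMap L E)).Splits := SplittingField.splits f
  have hprod := hsp.eq_prod_roots_of_monic (hfm.map _)
  let l0 := (f.map (algebraMap L E)).roots.toList
  have hlen : l0.length = n := by
    rw [Multiset.length_toList, ← hsp.natDegree_eq_card_roots, hfE, tri_natDegree _ _ _ _ hmn]
  let x : ℕ → E := fun i => l0.getD i 0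
  have hspl : tri n m r s t = ∏ i ∈ Finset.range n, (X - C (x i)) := by
    rw [← hfE, hprod, ← hlen, Finset.prod_range]
    have h1 : ∀ i : Fin l0.length, X - C (x i) = X - C l0[i.1] := by
      intro i; simp [x]
    rw [Finset.prod_congr rfl fun i _ => h1 i, Fin.prod_univ_fun_getElem l0 (fun a => X - C a)]
    rw [← Multiset.prod_coe, ← Multiset.map_coe, Multiset.coe_toList]
  have hspl' : tri n m r s t = ∏ i : Fin n, (X - C (x i)) := by
    rw [hspl, Finset.prod_range]
  have htr : Transcendental K t := t_transcendental L
  have hinj : Function.Injective (fun i : Fin n => x i) := roots_injective h hn htr hspl'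
  have hsep : f.Separable := by
    rw [← separable_map (algebraMap L E), hfE, hspl', separable_prod_X_sub_C_iff]
    exact hinj
  have hgal : IsGalois L E := IsGalois.of_separable_splitting_field hsep
  have hgen : Algebra.adjoin L (Set.range (fun i : Fin n => x i)) = ⊤ := by
    rw [eq_top_iff, ← SplittingField.adjoin_rootSet f]
    apply Algebra.adjoin_mono
    intro a ha
    rw [mem_rootSet] at ha
    have : (tri n m r s t).eval a = 0 := by
      rw [← hfE, eval_map_algebraMap]; exact ha.2
    obtain ⟨i, hi⟩ := exists_of_root hspl' this
    exact ⟨i, hi⟩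
  refine ⟨E, inferInstance, inferInstance, t, x, htr, hspl, ?_, ?_, ?_⟩
  · intro i hi j hj hij
    have := @hinj ⟨i, hi⟩ ⟨j, hj⟩ hij
    simpa using this
  · intro π
    obtain ⟨σ, hσ⟩ := exists_aut_perm h L hn hm hl hspl' hgen π
    refine ⟨σ.restrictScalars K, ?_, hσ⟩
    change σ (algebraMap K[X] E X) = _
    rw [IsScalarTower.algebraMap_apply K[X] L E, σ.commutes]
    exact (IsScalarTower.algebraMap_apply K[X] L E X).symm
  · intro t₀
    obtain ⟨ψ, hψ⟩ := exists_point (E := E) L t₀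
    let S : Subalgebra K E := (integralClosure K[X] E).restrictScalars K
    have hle : Algebra.adjoin K (insert t (x '' Set.Iio n)) ≤ S := by
      apply Algebra.adjoin_le
      intro a ha
      rcases Set.mem_insert_iff.1 ha with rfl | ⟨i, hi, rfl⟩
      · exact isIntegral_algebraMap
      · refine ⟨tri n m r s X, tri_monic _ _ _ _ hmn _, ?_⟩
        rw [eval₂_eq_eval_map, tri_map]
        exact eval_root hspl' ⟨i, hi⟩
    let ψ' : S →ₐ[K] K := ψ
    exact ⟨ψ'.comp (Subalgebra.inclusion hle), fun ht => hψ⟩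

/-! ### The ring generated by k roots -/

section Ring

variable {K E : Type*} [Field K] [Field E] [Algebra K E]

/-- The ring `K[t, x₀, …, x_{k-1}]`, the coordinate ring of the curve parametrizing `k` roots of
the trinomial. -/
abbrev Rk (K : Type*) {E : Type*} [Field K] [Field E] [Algebra K E] (t : E) (x : ℕ → E)
    (k : ℕ) : Subalgebra K E :=
  Algebra.adjoin K (insert t (x '' Set.Iio k))

/-- The element `t` of `Rk K t x k`. -/
def tk (K : Type*) {E : Type*} [Field K] [Field E] [Algebra K E] (t : E) (x : ℕ → E) (k : ℕ) :
    Rk K t x k := ⟨t, Algebra.subset_adjoin (Set.mem_insert _ _)⟩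

/-- The elements `x_j`, `j < k`, of `Rk K t x k`, extended by zero. -/
def xk (K : Type*) {E : Type*} [Field K] [Field E] [Algebra K E] (t : E) (x : ℕ → E) (k : ℕ)
    (j : ℕ) : Rk K t x k :=
  if h : j < k then ⟨x j, Algebra.subset_adjoin (Set.mem_insert_of_mem _ ⟨j, h, rfl⟩)⟩ else 0

variable {t : E} {x : ℕ → E} {k : ℕ}

@[simp] lemma coe_tk : (tk K t x k : E) = t := rfl

lemma coe_xk {j : ℕ} (hj : j < k) : (xk K t x k j : E) = x j := by simp [xk, hj]

lemma coe_mon (i : ℕ) (I : ℕ → ℕ) :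
    ((mon (tk K t x k) (xk K t x k) k i I : Rk K t x k) : E) = mon t x k i I := by
  simp only [mon, MulMemClass.coe_mul, SubmonoidClass.coe_pow, coe_tk,
    SubmonoidClass.coe_finsetProd]
  congr 1
  exact Finset.prod_congr rfl fun j hj => by rw [coe_xk (Finset.mem_range.1 hj)]

lemma Rk_gen : Algebra.adjoin K (insert (tk K t x k) (xk K t x k '' Set.Iio k)) = ⊤ := by
  have hinj : Function.Injective (Rk K t x k).val := Subtype.val_injective
  apply Subalgebra.map_injective hinj
  rw [AlgHom.map_adjoin, Algebra.map_top, Subalgebra.range_val, Set.image_insert_eq,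
    Set.image_image]
  congr 2
  exact Set.image_congr fun j hj => coe_xk hj

/-- The polynomial obtained from the trinomial by splitting off the first `j` roots. -/
noncomputable def gk (K : Type*) {E : Type*} [Field K] [Field E] [Algebra K E] (n m r s : ℕ)
    (t : E) (x : ℕ → E) (k : ℕ) : ℕ → (Rk K t x k)[X]
  | 0 => tri n m r s (tk K t x k)
  | j + 1 => gk K n m r s t x k j /ₘ (X - C (xk K t x k j))

variable {n m l r s : ℕ}

lemma gk_map (G : Generic K n m r s t x) {j : ℕ} (hj : j ≤ k) (hk : k ≤ n) :
    (gk K n m r s t x k j).map (Rk K t x k).val.toRingHom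
      = ∏ i ∈ Finset.Ico j n, (X - C (x i)) := by
  induction j with
  | zero =>
    rw [gk, tri_map, Nat.Ico_zero_eq_range, ← G.split]; rfl
  | succ j ih =>
    rw [gk, map_divByMonic _ (monic_X_sub_C _), ih (by omega), Polynomial.map_sub, map_X, map_C]
    have : (Rk K t x k).val.toRingHom (xk K t x k j) = x j := coe_xk hj
    rw [this, Finset.prod_eq_prod_Ico_succ_bot (by omega),
      mul_divByMonic_cancel_left _ (monic_X_sub_C _)]

lemma gk_map_inj : Function.Injective
    (Polynomial.map (Rk K t x k).val.toRingHom) :=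
  map_injective _ Subtype.val_injective

lemma gk_succ (G : Generic K n m r s t x) (hk : k ≤ n) : ∀ j < k,
    gk K n m r s t x k j = (X - C (xk K t x k j)) * gk K n m r s t x k (j + 1) := by
  intro j hj
  apply gk_map_inj
  rw [Polynomial.map_mul, gk_map G hj.le hk, gk_map G hj hk, Polynomial.map_sub, map_X, map_C]
  have : (Rk K t x k).val.toRingHom (xk K t x k j) = x j := coe_xk hj
  rw [this, Finset.prod_eq_prod_Ico_succ_bot (by omega)]

lemma gk_monic (G : Generic K n m r s t x) (hk : k ≤ n) : ∀ j ≤ k,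
    (gk K n m r s t x k j).Monic := by
  intro j hj
  apply monic_of_injective (f := (Rk K t x k).val.toRingHom) Subtype.val_injective
  rw [gk_map G hj hk]
  exact monic_prod_of_monic _ _ fun i _ => monic_X_sub_C _

lemma gk_natDegree (G : Generic K n m r s t x) (hk : k ≤ n) : ∀ j ≤ k,
    (gk K n m r s t x k j).natDegree = n - j := by
  intro j hj
  rw [← natDegree_map_eq_of_injective (f := (Rk K t x k).val.toRingHom) Subtype.val_injective,
    gk_map G hj hk, natDegree_prod_of_monic _ _ fun i _ => monic_X_sub_C _]
  simp

end Ring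

section Coeff

variable {F R : Type*} [Field F] [CommRing R] [Algebra F R] {n m l r s k : ℕ} {t : R}
  {x : ℕ → R} {g : ℕ → R[X]}

/-- The coefficients of the trinomial and of its quotients are homogeneous for `Fil`. -/
lemma coeff_mem_Fil [Nontrivial R] (h : Num n m l r s) (hg0 : g 0 = tri n m r s t)
    (hg : ∀ j < k, g j = (X - C (x j)) * g (j + 1)) (hmon : ∀ j ≤ k, (g j).Monic)
    (hdeg : ∀ j ≤ k, (g j).natDegree = n - j) (hk : k ≤ n) : ∀ j ≤ k, ∀ i ≤ n - j,
    (g j).coeff i ∈ Fil F (n * l) (r * n) t x j ((r * n : ℕ) * (n - j - i : ℕ))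
      (((r * n : ℕ) + 1) * (n - j - i : ℕ)) := by
  intro j
  induction j with
  | zero =>
    intro _ i hi
    rw [hg0]
    have hadd := h.add; have hmp := h.m_pos; have hlp := h.l_pos; have hbez := h.bez
    simp only [tri, coeff_add, coeff_sub, coeff_X_pow, coeff_C_mul, coeff_C]
    rcases eq_or_ne i n with rfl | hin
    · rw [if_pos rfl, if_neg (by omega), if_neg (by omega)]
      simpa using one_mem_Fil
    · rw [if_neg hin]
      rcases eq_or_ne i m with rfl | him
      · rw [if_pos rfl, if_neg (by omega)]
        simp only [mul_one, add_zero, zero_sub]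
        refine neg_mem (Fil_mono ?_ ?_ (t_pow_mem_Fil r))
        · have : n - 0 - i = l := by omega
          rw [this]; push_cast; nlinarith
        · have : n - 0 - i = l := by omega
          rw [this]; push_cast; nlinarith
      · rw [if_neg him]
        simp only [mul_zero, sub_zero, zero_add]
        rcases eq_or_ne i 0 with rfl | hi0
        · rw [if_pos rfl]
          have e : ((n * l : ℕ) : ℤ) * s = (r * n + 1) * n := by
            have : ((s * l : ℕ) : ℤ) = (r * n + 1 : ℕ) := by exact_mod_cast hbez
            push_cast at this ⊢
            linear_combination (n : ℤ) * this
          refine Fil_mono ?_ ?_ (t_pow_mem_Fil s)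
          · rw [e]; push_cast; simp only [Nat.sub_zero]; nlinarith
          · rw [e]; push_cast; simp
        · rw [if_neg hi0]; exact zero_mem _
  | succ j ih =>
    intro hj
    have hj' : j < k := hj
    -- downward induction on `i`, with `i + d = n - (j + 1)`
    have key : ∀ d i, i + d = n - (j + 1) → (g (j + 1)).coeff i ∈
        Fil F (n * l) (r * n) t x (j + 1) ((r * n : ℕ) * d) (((r * n : ℕ) + 1) * d) := by
      intro d
      induction d with
      | zero =>
        intro i hi
        rw [add_zero] at hi
        rw [hi, ← hdeg _ hj, (hmon _ hj).coeff_natDegree]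
        simpa using one_mem_Fil
      | succ d ihd =>
        intro i hi
        have e1 : (g (j + 1)).coeff i
            = (g j).coeff (i + 1) + x j * (g (j + 1)).coeff (i + 1) := by
          rw [hg j hj', sub_mul, coeff_sub, coeff_X_mul, coeff_C_mul]; ring
        rw [e1]
        refine add_mem ?_ ?_
        · have := ih hj'.le (i + 1) (by omega)
          rw [show n - j - (i + 1) = d + 1 by omega] at this
          exact Fil_mono_k (Nat.le_succ j) this
        · have h1 := ihd (i + 1) (by omega)
          have h2 := Fil_mul (x_mem_Fil (F := F) (N := n * l) (β := r * n) (t := t) (x := x)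
            (Nat.lt_succ_self j)) h1
          exact Fil_mono (le_of_eq (by push_cast; ring)) (le_of_eq (by push_cast; ring)) h2
    intro i hi
    exact key _ i (by omega)

end Coeff

section Indep

variable {K E : Type*} [Field K] [Field E] [Algebra K E] {n m l r s : ℕ} {t : E} {x : ℕ → E}

/-- The root `x k` has degree `n - k` over the previous ones: transpositions of `x k` and a later
root show that a relation satisfied by `x k` is satisfied by all `n - k` remaining roots. -/
lemma pow_indep (G : Generic K n m r s t x) {k : ℕ} (hk : k < n) :
    LinearIndependent (Rk K t x k) (fun e : Fin (n - k) => x k ^ (e : ℕ)) := by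
  rw [Fintype.linearIndependent_iff]
  intro c hc
  let P : E[X] := ∑ e : Fin (n - k), C (c e : E) * X ^ (e : ℕ)
  have hdeg : P.natDegree < n - k := by
    have : P.degree < (n - k : ℕ) := by
      refine lt_of_le_of_lt (degree_sum_le _ _) ?_
      rw [Finset.sup_lt_iff (WithBot.bot_lt_coe _)]
      intro e _
      exact lt_of_le_of_lt (degree_C_mul_X_pow_le _ _) (by exact_mod_cast e.2)
    by_cases hP : P = 0
    · rw [hP, natDegree_zero]; omega
    · exact (natDegree_lt_iff_degree_lt hP).2 this
  have hroot : ∀ j : Fin (n - k), P.eval (x (k + j)) = 0 := by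
    intro j
    obtain ⟨σ, hσt, hσx⟩ := G.perm (Equiv.swap ⟨k, hk⟩ ⟨k + j, by omega⟩)
    have hfix : ∀ a ∈ Rk K t x k, σ a = a := by
      intro a ha
      induction ha using Algebra.adjoin_induction with
      | mem y hy =>
        rcases hy with rfl | ⟨i, hi, rfl⟩
        · exact hσt
        · have hi' : i < k := hi
          have := hσx ⟨i, by omega⟩
          rwa [Equiv.swap_apply_of_ne_of_ne (by simp; omega) (by simp; omega)] at this
      | algebraMap a => exact σ.commutes a
      | add a b _ _ ha hb => rw [map_add, ha, hb]
      | mul a b _ _ ha hb => rw [map_mul, ha, hb]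
    have hk' : σ (x k) = x (k + j) := by
      have := hσx ⟨k, hk⟩
      rwa [Equiv.swap_apply_left] at this
    have := congrArg σ hc
    rw [map_sum, map_zero] at this
    rw [← this, eval_finsetSum]
    refine Finset.sum_congr rfl fun e _ => ?_
    rw [Algebra.smul_def, map_mul, map_pow, hk', eval_mul, eval_C, eval_pow, eval_X]
    congr 1
    exact (hfix _ (c e).2).symm
  have hP : P = 0 := by
    refine eq_zero_of_natDegree_lt_card_of_eval_eq_zero P (f := fun j : Fin (n - k) => x (k + j))
      ?_ hroot (by simpa using hdeg)
    intro a b hab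
    have := G.inj _ (by omega) _ (by omega) hab
    exact Fin.ext (by omega)
  intro e
  have h1 : P.coeff e = c e := by
    simp only [P, finsetSum_coeff, coeff_C_mul_X_pow]
    rw [Finset.sum_eq_single e]
    · simp
    · intro b _ hb
      rw [if_neg]
      exact fun h => hb (Fin.ext h.symm)
    · simp
  rw [hP, coeff_zero] at h1
  exact Subtype.ext h1.symm

lemma mon_indep (G : Generic K n m r s t x) : ∀ k ≤ n,
    LinearIndependent K (fun p : ℕ × St n k => mon t x k p.1 p.2.exp) := by
  intro k
  induction k with
  | zero =>
    intro _
    have h1 : LinearIndependent K (fun i : ℕ => t ^ i) := by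
      have h0 := (Polynomial.basisMonomials K).linearIndependent.map' (aeval t).toLinearMap
        (LinearMap.ker_eq_bot.2 (transcendental_iff_injective.1 G.trans))
      have e : (fun i : ℕ => t ^ i) = (aeval t).toLinearMap ∘ (basisMonomials K) := by
        funext i; simp
      rw [e]; exact h0
    have h2 := h1.comp (fun p : ℕ × St n 0 => p.1) (by
      rintro ⟨i, ⟨⟩⟩ ⟨j, ⟨⟩⟩ hij
      exact Prod.ext hij rfl)
    convert h2 using 2 with p
    simp [mon]
  | succ k ih =>
    intro hk
    have hb : LinearIndependent K (fun p : ℕ × St n k =>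
        mon (tk K t x k) (xk K t x k) k p.1 p.2.exp) := by
      refine LinearIndependent.of_comp (Rk K t x k).val.toLinearMap ?_
      convert ih (by omega) using 2 with p
      exact coe_mon _ _
    have h2 := linearIndependent_smul hb (pow_indep G hk)
    have h3 := h2.comp (fun p : ℕ × St n (k + 1) => ((p.1, p.2.1), p.2.2)) (by
      rintro ⟨i, ⟨a, b⟩⟩ ⟨j, ⟨c, d⟩⟩ hij
      simp only [Prod.mk.injEq] at hij
      obtain ⟨⟨rfl, rfl⟩, rfl⟩ := hij
      rfl)
    convert h3 using 2 with p
    rw [St.mon_succ]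
    simp only [Function.comp, Algebra.smul_def]
    congr 1
    exact (coe_mon _ _).symm

lemma datum (h : Num n m l r s) (G : Generic K n m r s t x) {k : ℕ} (hk : k ≤ n)
    (htop : topDeg n k ≤ n * l) :
    Datum K n (n * l) (r * n) k (tk K t x k) (xk K t x k) (gk K n m r s t x k) where
  gen := Rk_gen
  g_succ := gk_succ G hk
  monic := gk_monic G hk
  natDegree := gk_natDegree G hk
  coeff := coeff_mem_Fil h rfl (gk_succ G hk) (gk_monic G hk) (gk_natDegree G hk) hk
  indep := by
    refine LinearIndependent.of_comp (Rk K t x k).val.toLinearMap ?_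
    convert mon_indep G k hk using 2 with p
    exact coe_mon _ _
  k_le := hk
  N_pos := Nat.mul_pos h.n_pos h.l_pos
  top_le := htop

end Indep

/-! ### Points of the ring -/

/-- The parameters `t₀` for which the trinomial is separable with nonzero constant term. -/
def Good {K : Type*} [Field K] (n m l : ℕ) (t₀ : K) : Prop :=
  t₀ ≠ 0 ∧ (n : K) ^ n * t₀ ≠ (m : K) ^ m * (l : K) ^ l

lemma Good.deriv_ne {K : Type*} [Field K] {n m l r s : ℕ} (h : Num n m l r s) (hn : (n : K) ≠ 0)
    {t₀ : K} (ht : Good n m l t₀) {a : K} (ha : (tri n m r s t₀).eval a = 0) :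
    (derivative (tri n m r s t₀)).eval a ≠ 0 :=
  fun h' => ht.2 (double_root_t h hn ht.1 ha h')

section Points

variable {K E : Type*} [Field K] [Field E] [Algebra K E] {n m l r s k : ℕ} {t : E} {x : ℕ → E}

lemma gk_prod (G : Generic K n m r s t x) (hk : k ≤ n) {j : ℕ} (hj : j ≤ k) :
    tri n m r s (tk K t x k) = (∏ i ∈ Finset.range j, (X - C (xk K t x k i)))
      * gk K n m r s t x k j := by
  induction j with
  | zero => simp [gk]
  | succ j ih =>
    rw [ih (by omega), Finset.prod_range_succ, gk_succ G hk j (by omega), mul_assoc]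

lemma xk_root (G : Generic K n m r s t x) (hk : k ≤ n) {j : ℕ} (hj : j < k) :
    (tri n m r s (tk K t x k)).eval (xk K t x k j) = 0 := by
  rw [gk_prod G hk hj, Finset.prod_range_succ]; simp

lemma xk_deriv (G : Generic K n m r s t x) (hk : k ≤ n) {j : ℕ} (hj : j < k) :
    (derivative (tri n m r s (tk K t x k))).eval (xk K t x k j)
      = (∏ i ∈ Finset.range j, (xk K t x k j - xk K t x k i)) *
        (gk K n m r s t x k (j + 1)).eval (xk K t x k j) := by
  rw [gk_prod G hk hj, Finset.prod_range_succ, mul_right_comm]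
  simp [eval_prod]

lemma point_root (G : Generic K n m r s t x) (hk : k ≤ n) (π : Rk K t x k →ₐ[K] K) {j : ℕ}
    (hj : j < k) : (tri n m r s (π (tk K t x k))).eval (π (xk K t x k j)) = 0 := by
  have h1 := xk_root G hk hj
  rw [tri_eval] at h1 ⊢
  have := congrArg π h1
  simpa using this

lemma point_deriv (h : Num n m l r s) (hn : (n : K) ≠ 0) (G : Generic K n m r s t x) (hk : k ≤ n)
    (π : Rk K t x k →ₐ[K] K) (hπ : Good n m l (π (tk K t x k))) {j : ℕ} (hj : j < k) :
    (∏ i ∈ Finset.range j, (π (xk K t x k j) - π (xk K t x k i))) *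
        π ((gk K n m r s t x k (j + 1)).eval (xk K t x k j)) ≠ 0 := by
  have h1 := congrArg π (xk_deriv G hk hj)
  rw [map_mul, map_prod] at h1
  simp only [map_sub] at h1
  rw [← h1]
  have h2 := hπ.deriv_ne h hn (point_root G hk π hj)
  have h3 := tri_map n m r s (π : Rk K t x k →+* K) (tk K t x k)
  have h4 : tri n m r s (π (tk K t x k)) = (tri n m r s (tk K t x k)).map
    (π : Rk K t x k →+* K) := h3.symm
  rw [h4, derivative_map] at h2
  have h5 := eval_map_apply (π : Rk K t x k →+* K) (xk K t x k j)
    (p := derivative (tri n m r s (tk K t x k)))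
  exact fun h6 => h2 (h5.trans h6)

lemma point_inj (h : Num n m l r s) (hn : (n : K) ≠ 0) (G : Generic K n m r s t x) (hk : k ≤ n)
    (π : Rk K t x k →ₐ[K] K) (hπ : Good n m l (π (tk K t x k))) :
    ∀ i < k, ∀ j < k, π (xk K t x k i) = π (xk K t x k j) → i = j := by
  have key : ∀ i < k, ∀ j < k, i < j → π (xk K t x k i) ≠ π (xk K t x k j) := by
    intro i hi j hj hij he
    refine left_ne_zero_of_mul (point_deriv h hn G hk π hπ hj) ?_
    exact Finset.prod_eq_zero (Finset.mem_range.2 hij) (by rw [he, sub_self])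
  intro i hi j hj he
  rcases lt_trichotomy i j with h1 | h1 | h1
  · exact absurd he (key i hi j hj h1)
  · exact h1
  · exact absurd he.symm (key j hj i hi h1)

lemma hom_ext {A : Type*} [Semiring A] [Algebra K A] {π π' : Rk K t x k →ₐ[K] A}
    (ht : π (tk K t x k) = π' (tk K t x k))
    (hx : ∀ j < k, π (xk K t x k j) = π' (xk K t x k j)) : π = π' := by
  refine AlgHom.ext_of_adjoin_eq_top Rk_gen ?_
  rintro _ (rfl | ⟨j, hj, rfl⟩)
  exacts [ht, hx j hj]

/-- Every tuple of distinct roots of a separable specialization is a point of `Rk K t x k`: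
full monodromy allows to permute the roots at a given point. -/
lemma exists_hom (h : Num n m l r s) (hn : (n : K) ≠ 0) (G : Generic K n m r s t x) (hk : k ≤ n)
    {t₀ : K} (ht₀ : Good n m l t₀) (α : ℕ → K) (hα : ∀ j < k, (tri n m r s t₀).eval (α j) = 0)
    (hinj : ∀ i < k, ∀ j < k, α i = α j → i = j) :
    ∃ π : Rk K t x k →ₐ[K] K, π (tk K t x k) = t₀ ∧ ∀ j < k, π (xk K t x k j) = α j := by
  classical
  obtain ⟨ψ, hψ⟩ := G.point t₀
  let ψ : Rk K t x n →ₐ[K] K := ψ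
  have hψt : ψ (tk K t x n) = t₀ := hψ _
  have hbinj := point_inj h hn G le_rfl ψ (by rwa [hψt])
  have hroot : ∀ j : Fin k, ∃ i : Fin n, ψ (xk K t x n i) = α j := by
    intro j
    have h1 := hα j j.2
    have h2 := gk_prod G le_rfl (k := n) (j := n) le_rfl
    have h3 : gk K n m r s t x n n = 1 := by
      refine (gk_monic G le_rfl n le_rfl).natDegree_eq_zero.1 ?_
      rw [gk_natDegree G le_rfl n le_rfl, Nat.sub_self]
    have h4 := congrArg (Polynomial.map (ψ : Rk K t x n →+* K)) h2
    rw [h3, mul_one, tri_map, Polynomial.map_prod] at h4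
    have h5 : (ψ : Rk K t x n →+* K) (tk K t x n) = t₀ := hψt
    rw [h5] at h4
    rw [h4, eval_prod, Finset.prod_eq_zero_iff] at h1
    obtain ⟨i, hi, h6⟩ := h1
    refine ⟨⟨i, Finset.mem_range.1 hi⟩, ?_⟩
    simp only [Polynomial.map_sub, map_X, map_C, eval_sub, eval_X, eval_C] at h6
    exact (sub_eq_zero.1 h6).symm
  choose f hf using hroot
  have hfinj : Function.Injective f := by
    intro a b hab
    have := hinj a a.2 b b.2 (by rw [← hf, ← hf, hab])
    exact Fin.ext this
  obtain ⟨e, he⟩ : ∃ e : Equiv.Perm (Fin n), ∀ j : Fin k, e (Fin.castLE hk j) = f j := by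
    let e₀ : Fin n → Fin n := fun i => if hi : i.1 < k then f ⟨i, hi⟩ else i
    obtain ⟨e, he⟩ := Set.MapsTo.exists_equiv_extend_of_card_eq (α := Fin n) (β := Fin n)
      (t := Finset.univ) (by simp) (s := {i | i.1 < k}) (f := e₀) (fun i _ => by simp) (by
        intro a ha b hb hab
        have ha' : a.1 < k := ha
        have hb' : b.1 < k := hb
        simp only [e₀, ha', hb', dif_pos] at hab
        have := hfinj hab
        exact Fin.ext (by simpa using this))
    let e' : Fin n ≃ Fin n := e.trans (Equiv.subtypeUnivEquiv (by simp))
    refine ⟨e', fun j => ?_⟩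
    have := he (Fin.castLE hk j) (by simp)
    simpa [e₀, e'] using this
  obtain ⟨σ, hσt, hσx⟩ := G.perm e
  have hmap : ∀ a ∈ Rk K t x k, σ a ∈ Rk K t x n := by
    have : Rk K t x k ≤ (Rk K t x n).comap (σ : E →ₐ[K] E) := by
      apply Algebra.adjoin_le
      rintro _ (rfl | ⟨j, hj, rfl⟩)
      · change σ _ ∈ Rk K _ x n
        rw [hσt]; exact Algebra.subset_adjoin (Set.mem_insert _ _)
      · have hj' : j < k := hj
        have := hσx (Fin.castLE hk ⟨j, hj⟩)
        change σ (x j) ∈ Rk K t x n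
        have h2 : σ (x j) = _ := this
        rw [h2]
        exact Algebra.subset_adjoin (Set.mem_insert_of_mem _ ⟨_, (e _).2, rfl⟩)
    exact fun a ha => this ha
  let τ : Rk K t x k →ₐ[K] Rk K t x n :=
    ((σ : E →ₐ[K] E).comp (Rk K t x k).val).codRestrict (Rk K t x n) fun a => hmap a a.2
  refine ⟨ψ.comp τ, ?_, ?_⟩
  · rw [← hψt]
    exact congrArg ψ (Subtype.ext hσt)
  · intro j hj
    rw [← hf ⟨j, hj⟩]
    refine congrArg ψ (Subtype.ext ?_)
    have := hσx (Fin.castLE hk ⟨j, hj⟩)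
    rw [he] at this
    rw [coe_xk (f ⟨j, hj⟩).2, ← this]
    change σ (xk K t x k j : E) = _
    rw [coe_xk hj]; rfl

/-- Good points are dense. -/
lemma exists_hom_ne [IsAlgClosed K] (h : Num n m l r s) (hn : (n : K) ≠ 0)
    (G : Generic K n m r s t x)
    (hk : k < n) (htop : topDeg n k ≤ n * l) {w : Rk K t x k} (hw : w ≠ 0) :
    ∃ π : Rk K t x k →ₐ[K] K, π w ≠ 0 ∧ Good n m l (π (tk K t x k)) := by
  classical
  by_contra! hcon
  have D := datum h G hk.le htop
  obtain ⟨A₀, hA₀⟩ := D.exists_mem_Fil w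
  have hN : (1 : ℤ) ≤ (n * l : ℕ) := by exact_mod_cast Nat.mul_pos h.n_pos h.l_pos
  have hwF := hA₀ ((n * l : ℕ) * (A₀.toNat : ℕ)) (by
    have := Int.self_le_toNat A₀
    nlinarith [Int.natCast_nonneg A₀.toNat])
  have : Infinite K := IsAlgClosed.instInfinite
  -- more good parameters than zeros of `w`
  obtain ⟨T, hTs, hTc⟩ := Infinite.exists_superset_card_eq (α := K)
    {0, (m : K) ^ m * (l : K) ^ l / (n : K) ^ n} (n.descFactorial k * A₀.toNat + 5)
    ((Finset.card_le_two).trans (by omega))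
  let T' := T \ {0, (m : K) ^ m * (l : K) ^ l / (n : K) ^ n}
  have hT' : n.descFactorial k * A₀.toNat < T'.card := by
    have := Finset.le_card_sdiff {0, (m : K) ^ m * (l : K) ^ l / (n : K) ^ n} T
    have h2 := Finset.card_le_two (a := (0 : K)) (b := (m : K) ^ m * (l : K) ^ l / (n : K) ^ n)
    change n.descFactorial k * A₀.toNat < (T \ _).card
    omega
  have hgood : ∀ t₀ : T', Good n m l (t₀ : K) := by
    rintro ⟨t₀, ht₀⟩
    simp only [T', Finset.mem_sdiff, Finset.mem_insert, Finset.mem_singleton, not_or] at ht₀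
    refine ⟨ht₀.2.1, fun h' => ht₀.2.2 ?_⟩
    rw [eq_div_iff (pow_ne_zero _ hn), mul_comm]; exact h'
  have hpt : ∀ t₀ : T', ∃ π : Rk K t x k →ₐ[K] K, π (tk K t x k) = t₀ := by
    intro t₀
    obtain ⟨ψ, hψ⟩ := G.point (t₀ : K)
    have hle : Rk K t x k ≤ Rk K t x n := Algebra.adjoin_mono
      (Set.insert_subset_insert (Set.image_mono (Set.Iio_subset_Iio hk.le)))
    exact ⟨ψ.comp (Subalgebra.inclusion hle), hψ _⟩
  choose π hπ using hpt
  have hb := D.zero_bound hk 1 π (fun a b hab => Subtype.ext (by rw [← hπ, ← hπ, hab]))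
    (fun i => by rw [hπ]; exact (hgood i).1) hw (b := 0) (a := A₀.toNat)
    (by simpa using hwF) (fun i => by
      rw [pow_one]
      by_contra hne
      exact hcon (π i) hne (by rw [hπ]; exact hgood i))
  rw [Fintype.card_coe] at hb
  omega

end Points

/-! ### Frobenius and the point count -/

section Frobenius

variable {K E : Type*} [Field K] [IsAlgClosed K] [Field E] [Algebra K E] {n m l r s k : ℕ}
  {t : E} {x : ℕ → E} {q : ℕ}

omit [IsAlgClosed K] in
lemma Good.map {t₀ : K} (ht : Good n m l t₀) (φ : K ≃+* K) : Good n m l (φ t₀) := by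
  refine ⟨(_root_.map_ne_zero φ).2 ht.1, fun h => ht.2 (φ.injective ?_)⟩
  simpa using h

omit [IsAlgClosed K] in
lemma tri_root_map {t₀ a : K} (ha : (tri n m r s t₀).eval a = 0) (φ : K ≃+* K) :
    (tri n m r s (φ t₀)).eval (φ a) = 0 := by
  rw [tri_eval] at ha ⊢
  simpa using congrArg φ ha

/-- The endomorphism `t ↦ t ^ q`, `x_j ↦ x_{ρ j} ^ q` of `K[t, x₀, …, x_{k-1}]`. It is
well defined since it maps good points to good points. -/
lemma exists_Phi (h : Num n m l r s) (hn : (n : K) ≠ 0) (G : Generic K n m r s t x)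
    (hk : k < n) (htop : topDeg n k ≤ n * l) (φ : K ≃+* K) (hφ : ∀ a, φ a = a ^ q) (ρ : ℕ → ℕ)
    (hρ : ∀ j < k, ρ j < k) (hρi : ∀ i < k, ∀ j < k, ρ i = ρ j → i = j) :
    ∃ Φ : Rk K t x k →ₐ[K] Rk K t x k, Φ (tk K t x k) = tk K t x k ^ q ∧
      ∀ j < k, Φ (xk K t x k j) = xk K t x k (ρ j) ^ q := by
  let v : Option (Fin k) → Rk K t x k := fun o => o.elim (tk K t x k) fun j => xk K t x k j
  let v' : Option (Fin k) → Rk K t x k :=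
    fun o => o.elim (tk K t x k ^ q) fun j => xk K t x k (ρ j) ^ q
  let f : MvPolynomial (Option (Fin k)) K →ₐ[K] Rk K t x k := MvPolynomial.aeval v
  let f' : MvPolynomial (Option (Fin k)) K →ₐ[K] Rk K t x k := MvPolynomial.aeval v'
  have hf : Function.Surjective f := by
    rw [← AlgHom.range_eq_top, ← Algebra.adjoin_range_eq_range_aeval, eq_top_iff, ← Rk_gen]
    apply Algebra.adjoin_mono
    rintro _ (rfl | ⟨j, hj, rfl⟩)
    · exact ⟨none, rfl⟩
    · exact ⟨some ⟨j, hj⟩, rfl⟩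
  have hker : ∀ P, P ∈ RingHom.ker f → f' P = 0 := by
    intro P hP
    by_contra hne
    obtain ⟨π, hπ, hg⟩ := exists_hom_ne h hn G hk htop hne
    obtain ⟨π', h1, h2⟩ := exists_hom h hn G hk.le (hg.map φ) (fun j => φ (π (xk K t x k (ρ j))))
      (fun j hj => tri_root_map (point_root G hk.le π (hρ j hj)) φ)
      (fun i hi j hj hij => hρi i hi j hj
        (point_inj h hn G hk.le π hg _ (hρ i hi) _ (hρ j hj) (φ.injective hij)))
    have e : π'.comp f = π.comp f' := by
      apply MvPolynomial.algHom_ext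
      rintro (_ | j)
      · simp [f, f', v, v', h1, hφ]
      · simp [f, f', v, v', h2, hφ]
    apply hπ
    have := DFunLike.congr_fun e P
    rw [AlgHom.comp_apply, AlgHom.comp_apply, (RingHom.mem_ker).1 hP, map_zero] at this
    exact this.symm
  let Φ : Rk K t x k →ₐ[K] Rk K t x k := (Ideal.Quotient.liftₐ (RingHom.ker f) f' hker).comp
    (Ideal.quotientKerAlgEquivOfSurjective hf).symm.toAlgHom
  have hΦ : ∀ P, Φ (f P) = f' P := by
    intro P
    have : (Ideal.quotientKerAlgEquivOfSurjective hf).symm (f P) = Ideal.Quotient.mk _ P := by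
      rw [AlgEquiv.symm_apply_eq]; rfl
    change Ideal.Quotient.liftₐ (RingHom.ker f) f' hker
      ((Ideal.quotientKerAlgEquivOfSurjective hf).symm (f P)) = _
    rw [this]; rfl
  refine ⟨Φ, ?_, fun j hj => ?_⟩
  · have := hΦ (MvPolynomial.X none)
    simpa [f, f', v, v'] using this
  · have := hΦ (MvPolynomial.X (some ⟨j, hj⟩))
    simpa [f, f', v, v'] using this

/-- The point count: a bound for the number of pairs `(t₀, a)` with `t₀` a good parameter fixed by the
`q`-power Frobenius and `a` a root of the trinomial with exactly `k` conjugates. -/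
theorem count_le (h : Num n m l r s) (hn : (n : K) ≠ 0) (G : Generic K n m r s t x)
    (hk0 : 0 < k) (hk : k < n) (htop : topDeg n k ≤ n * l) (p f : ℕ) [Fact p.Prime] [CharP K p]
    (hq : q = p ^ f) (M l₁ l₂ : ℕ)
    (hdim : ∑ j ∈ Finset.range M, n.descFactorial k * (l₁ + l₂ + j + 1)
      < n.descFactorial k * (l₁ - 1) * (n.descFactorial k * (l₂ - 1)))
    (hl : n.descFactorial k * l₁ < q) {ι : Type*} [Fintype ι] (T A : ι → K)
    (hTA : ∀ i j, T i = T j → A i = A j → i = j) (hgood : ∀ i, Good n m l (T i))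
    (hT : ∀ i, T i ^ q = T i) (hroot : ∀ i, (tri n m r s (T i)).eval (A i) = 0)
    (hAk : ∀ i, A i ^ q ^ k = A i)
    (hAd : ∀ i, ∀ a < k, ∀ b < k, A i ^ q ^ a = A i ^ q ^ b → a = b) :
    M * Fintype.card ι ≤ n.descFactorial k * (l₁ + q * l₂) := by
  have hpp : p.Prime := Fact.out
  have hq0 : q ≠ 0 := by rw [hq]; exact pow_ne_zero _ hpp.ne_zero
  let φ : K ≃+* K := iterateFrobeniusEquiv K p f
  have hφ : ∀ a, φ a = a ^ q := fun a => by rw [hq]; exact iterateFrobeniusEquiv_def K p f a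
  have D := datum h G hk.le htop
  let ρ : ℕ → ℕ := fun j => if j = 0 then k - 1 else j - 1
  let ρ' : ℕ → ℕ := fun i => if i = k - 1 then 0 else i + 1
  have hρ : ∀ j < k, ρ j < k := by intro j hj; simp only [ρ]; split_ifs <;> omega
  have hρ' : ∀ j < k, ρ' j < k := by intro j hj; simp only [ρ']; split_ifs <;> omega
  have hρi : ∀ i < k, ∀ j < k, ρ i = ρ j → i = j := by
    intro i hi j hj hij; simp only [ρ] at hij; split_ifs at hij <;> omega
  have hρi' : ∀ i < k, ∀ j < k, ρ' i = ρ' j → i = j := by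
    intro i hi j hj hij; simp only [ρ'] at hij; split_ifs at hij <;> omega
  have hρρ : ∀ j < k, ρ' (ρ j) = j := by
    intro j hj; simp only [ρ, ρ']; split_ifs <;> omega
  obtain ⟨Φ, hΦt, hΦx⟩ := exists_Phi h hn G hk htop φ hφ ρ hρ hρi
  have : CharP (Rk K t x k) p := charP_of_injective_algebraMap (algebraMap K _).injective p
  have hpow : ∀ v, ∃ y, Φ v = y ^ q := by
    intro v
    have hv : v ∈ Algebra.adjoin K (insert (tk K t x k) (xk K t x k '' Set.Iio k)) := by
      rw [Rk_gen]; trivial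
    induction hv using Algebra.adjoin_induction with
    | mem y hy =>
      rcases hy with rfl | ⟨j, hj, rfl⟩
      · exact ⟨_, hΦt⟩
      · exact ⟨_, hΦx j hj⟩
    | algebraMap c =>
      refine ⟨algebraMap K _ (φ.symm c), ?_⟩
      rw [Φ.commutes, ← map_pow, ← hφ, φ.apply_symm_apply]
    | add a b _ _ ha hb =>
      obtain ⟨y, hy⟩ := ha; obtain ⟨z, hz⟩ := hb
      exact ⟨y + z, by rw [map_add, hy, hz, hq, add_pow_char_pow]⟩
    | mul a b _ _ ha hb =>
      obtain ⟨y, hy⟩ := ha; obtain ⟨z, hz⟩ := hb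
      exact ⟨y * z, by rw [map_mul, hy, hz, mul_pow]⟩
  have hpts : ∀ w ≠ 0, ∃ π : Rk K t x k →ₐ[K] K, π (Φ w) ≠ 0 ∧ π (tk K t x k) ≠ 0 := by
    intro w hw
    obtain ⟨y, hy, hg⟩ := exists_hom_ne h hn G hk htop hw
    obtain ⟨π, h1, h2⟩ := exists_hom h hn G hk.le (hg.map φ.symm)
      (fun j => φ.symm (y (xk K t x k (ρ' j))))
      (fun j hj => tri_root_map (point_root G hk.le y (hρ' j hj)) φ.symm)
      (fun i hi j hj hij => hρi' i hi j hj
        (point_inj h hn G hk.le y hg _ (hρ' i hi) _ (hρ' j hj) (φ.symm.injective hij)))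
    have e : π.comp Φ = y := by
      apply hom_ext
      · rw [AlgHom.comp_apply, hΦt, map_pow, h1, ← hφ, φ.apply_symm_apply]
      · intro j hj
        rw [AlgHom.comp_apply, hΦx j hj, map_pow, h2 _ (hρ j hj), ← hφ, φ.apply_symm_apply,
          hρρ j hj]
    refine ⟨π, ?_, ?_⟩
    · rw [← AlgHom.comp_apply, e]; exact hy
    · rw [h1]; exact (hg.map φ.symm).1
  have hTφ : ∀ i, φ (T i) = T i := fun i => by rw [hφ, hT]
  have hroots : ∀ i j, (tri n m r s (T i)).eval (A i ^ q ^ j) = 0 := by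
    intro i j
    induction j with
    | zero => simpa using hroot i
    | succ j ih =>
      have := tri_root_map ih φ
      rwa [hTφ, hφ, ← pow_mul, ← pow_succ] at this
  have hex := fun i => exists_hom h hn G hk.le (hgood i) (fun j => A i ^ q ^ j)
    (fun j _ => hroots i j) (hAd i)
  choose π hπt hπx using hex
  refine D.stepanov hk q M l₁ l₂ Φ hΦt (fun j hj => ⟨ρ j, hρ j hj, hΦx j hj⟩) hpow hq0 hpts hdim
    hl π ?_ ?_ ?_ ?_
  · intro i j hij
    refine hTA i j (by rw [← hπt, ← hπt, hij]) ?_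
    have := congrArg (fun y => y (xk K t x k 0)) hij
    simpa [hπx _ 0 hk0] using this
  · intro i a
    have e : (π i).comp Φ = π i := by
      apply hom_ext
      · rw [AlgHom.comp_apply, hΦt, map_pow, hπt, hT]
      · intro j hj
        rw [AlgHom.comp_apply, hΦx j hj, map_pow, hπx _ _ (hρ j hj), hπx _ _ hj, ← pow_mul,
          ← pow_succ]
        rcases Nat.eq_zero_or_pos j with rfl | hj0
        · simp only [ρ, if_pos]
          rw [Nat.sub_add_cancel hk0, hAk, pow_zero, pow_one]
        · simp only [ρ, if_neg hj0.ne']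
          rw [Nat.sub_add_cancel hj0]
    rw [← AlgHom.comp_apply, e]
  · intro i; rw [hπt]; exact (hgood i).1
  · intro i j hj
    exact right_ne_zero_of_mul (point_deriv h hn G hk.le (π i) (by rw [hπt]; exact hgood i) hj)

end Frobenius

/-! ### Numerical estimates -/

section Numeric

lemma numeric_aux {d M a l₂ : ℕ} (hd : 2 ≤ d) (hM : 6 * d ≤ M + 1) (h2 : d * l₂ ≤ M + 1)
    (k4 : (M + 1) * (M + 1) ≤ d * a + 2 * d) :
    d * ((M + 1) * (2 * (a + 1 + l₂ + 4)) + (M + 1) * M) < d * (2 * (a * (M + 2 + d))) := by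
  zify at *
  have s1 : (0 : ℤ) ≤ 2 * (1 + d) * (d * a + 2 * d - (M + 1) * (M + 1)) :=
    mul_nonneg (by positivity) (by linarith)
  have s2 : (0 : ℤ) ≤ 2 * (M + 1) * (M + 1 - d * l₂) := mul_nonneg (by positivity) (by linarith)
  have s3 : (0 : ℤ) ≤ d * (M + 1) * (M + 1 - 12) := mul_nonneg (by positivity) (by linarith)
  have s4 : (0 : ℤ) ≤ d * (M + 1 - 6 * d) := mul_nonneg (by positivity) (by linarith)
  have s5 : (0 : ℤ) ≤ d * (d - 2) := mul_nonneg (by positivity) (by linarith)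
  have s6 : (0 : ℤ) < d := by linarith
  linarith only [s1, s2, s3, s4, s5, s6]

/-- The bound resulting from the choice of parameters `M = ⌊√q⌋`, `l₁ = ⌊(q - 1) / d⌋`,
`l₂ = ⌊M / d⌋ + 3`. -/
lemma numeric_bound {q d M A : ℕ} (hd : 2 ≤ d) (hM : 6 * d ≤ M) (hMq : M * M ≤ q)
    (hqM : q < (M + 1) * (M + 1))
    (hA : ∀ l₁ l₂ : ℕ, ∑ j ∈ Finset.range M, d * (l₁ + l₂ + j + 1) <
      d * (l₁ - 1) * (d * (l₂ - 1)) → d * l₁ < q → M * A ≤ d * (l₁ + q * l₂)) :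
    A ≤ q + (3 * d + 1) * (M + 2) := by
  have hd0 : 0 < d := by omega
  have hq0 : 0 < q := by nlinarith
  obtain ⟨l₁, hl₁⟩ : ∃ l₁, l₁ = (q - 1) / d := ⟨_, rfl⟩
  obtain ⟨l₂, hl₂⟩ : ∃ l₂, l₂ = M / d := ⟨_, rfl⟩
  have h1 : d * l₁ ≤ q - 1 := hl₁ ▸ Nat.mul_div_le _ _
  have h1' : d * l₁ + d ≥ q := by
    have := Nat.lt_mul_div_succ (q - 1) hd0
    rw [← hl₁, mul_add, mul_one] at this; omega
  have h2 : d * l₂ ≤ M := hl₂ ▸ Nat.mul_div_le _ _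
  have h2' : d * l₂ + d ≥ M + 1 := by
    have := Nat.lt_mul_div_succ M hd0
    rw [← hl₂, mul_add, mul_one] at this; omega
  have hl₁1 : 1 ≤ l₁ := by
    by_contra hc
    have : l₁ = 0 := by omega
    subst this
    nlinarith
  have hb := hA l₁ (l₂ + 3) (by
    have hsum : 2 * ∑ j ∈ Finset.range M, d * (l₁ + (l₂ + 3) + j + 1)
        = d * (M * (2 * (l₁ + l₂ + 4)) + M * (M - 1)) := by
      have e1 : ∀ j, d * (l₁ + (l₂ + 3) + j + 1) = d * (l₁ + l₂ + 4) + d * j := fun j => by ring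
      rw [Finset.sum_congr rfl fun j _ => e1 j, Finset.sum_add_distrib, Finset.sum_const,
        Finset.card_range, ← Finset.mul_sum, smul_eq_mul, mul_add, ← mul_assoc 2 d,
        mul_comm 2 d, mul_assoc d 2, mul_comm 2 (∑ i ∈ _, i), Finset.sum_range_id_mul_two]
      ring
    obtain ⟨a, rfl⟩ : ∃ a, l₁ = a + 1 := ⟨l₁ - 1, by omega⟩
    obtain ⟨M, rfl⟩ : ∃ a, M = a + 1 := ⟨M - 1, by omega⟩
    have e2 : l₂ + 3 - 1 = l₂ + 2 := by omega
    simp only [Nat.add_sub_cancel, e2] at hsum ⊢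
    have key : (M + 1) * (2 * (a + 1 + l₂ + 4)) + (M + 1) * M < 2 * (a * (d * (l₂ + 2))) := by
      have k1 : M + 2 + d ≤ d * (l₂ + 2) := by nlinarith
      have k2 : a * (M + 2 + d) ≤ a * (d * (l₂ + 2)) := Nat.mul_le_mul_left _ k1
      have k4 : (M + 1) * (M + 1) ≤ d * a + 2 * d := by nlinarith
      have k5 := numeric_aux hd hM h2 k4
      have k6 := lt_of_mul_lt_mul_left k5 (Nat.zero_le _)
      omega
    have k3 := Nat.mul_lt_mul_of_pos_left key hd0
    have k4 : 2 * (d * a * (d * (l₂ + 2))) = d * (2 * (a * (d * (l₂ + 2)))) := by ring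
    omega) (by omega)
  have h3 : q ≤ M * (M + 2) := by nlinarith
  have hM0 : 0 < M := by omega
  have h4 : M * A ≤ M * (q + (3 * d + 1) * (M + 2)) := by
    have e1 : d * (l₁ + q * (l₂ + 3)) = d * l₁ + q * (d * l₂) + 3 * d * q := by ring
    have e2 : q * (d * l₂) ≤ q * M := Nat.mul_le_mul_left _ h2
    have e3 : (3 * d + 1) * q ≤ (3 * d + 1) * (M * (M + 2)) := Nat.mul_le_mul_left _ h3
    have e4 : d * l₁ ≤ q := by omega
    calc M * A ≤ d * (l₁ + q * (l₂ + 3)) := hb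
      _ ≤ q + q * M + 3 * d * q := by rw [e1]; omega
      _ = q * M + (3 * d + 1) * q := by ring
      _ ≤ q * M + (3 * d + 1) * (M * (M + 2)) := by omega
      _ = _ := by ring
  exact Nat.le_of_mul_le_mul_left h4 hM0

lemma sum_desc_succ (n : ℕ) : ∑ k ∈ Finset.range (n + 1), (n + 2).descFactorial (k + 1)
    = (n + 2) * (1 + ∑ k ∈ Finset.range n, (n + 1).descFactorial (k + 1)) := by
  rw [Finset.sum_congr rfl fun k _ => Nat.succ_descFactorial_succ (n + 1) k, ← Finset.mul_sum,
    Finset.sum_range_succ', Nat.descFactorial_zero]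
  ring

lemma sum_desc_le (n : ℕ) : 3 * ∑ k ∈ Finset.range (n + 1), (n + 2).descFactorial (k + 1)
    + (n + 2) + 2 ≤ 6 * (n + 2).factorial := by
  induction n with
  | zero => decide
  | succ n ih =>
    rcases Nat.eq_zero_or_pos n with rfl | hn
    · decide
    rw [sum_desc_succ, Nat.factorial_succ (n + 2)]
    generalize ∑ k ∈ Finset.range (n + 1), (n + 2).descFactorial (k + 1) = a at *
    nlinarith

lemma topDeg_le {n m l k : ℕ} (hadd : n = m + l) (h2 : 2 * m ≤ n) (hk : k ≤ n) :
    topDeg n k ≤ n * l := by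
  have h1 : topDeg n k ≤ topDeg n n :=
    Finset.sum_le_sum_of_subset (Finset.range_subset_range.2 hk)
  have h3 : topDeg n n * 2 = n * (n - 1) := by
    rw [topDeg, Finset.sum_range_reflect (fun j => j) n, Finset.sum_range_id_mul_two]
  have h4 : n * (n - 1) ≤ n * (2 * l) := Nat.mul_le_mul_left _ (by omega)
  nlinarith

end Numeric

/-! ### Existence of a root with n conjugates -/

section Final

lemma card_roots_good {K : Type*} [Field K] [IsAlgClosed K] [DecidableEq K] {n m l r s : ℕ}
    (h : Num n m l r s) (hn : (n : K) ≠ 0) {t₀ : K} (ht : Good n m l t₀) :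
    (tri n m r s t₀).roots.toFinset.card = n := by
  have hmn : m < n := by have := h.add; have := h.l_pos; omega
  have h0 : tri n m r s t₀ ≠ 0 := (tri_monic _ _ _ _ hmn _).ne_zero
  rw [Multiset.toFinset_card_of_nodup, ← (IsAlgClosed.splits _).natDegree_eq_card_roots,
    tri_natDegree _ _ _ _ hmn]
  rw [Multiset.nodup_iff_count_le_one]
  intro a
  rw [count_roots]
  by_contra! hc
  rw [one_lt_rootMultiplicity_iff_isRoot h0] at hc
  exact ht.deriv_ne h hn hc.1 hc.2

variable {F : Type u} [Field F] [Fintype F] {n m l r s : ℕ}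

/-- For some nonzero `t` in `F`, the trinomial has a root with `n` distinct conjugates over `F`,
where the conjugates are taken under powers of the Frobenius of `F`. -/
def HasRoot (F : Type u) [Field F] [Fintype F] (n m r s : ℕ) : Prop :=
  ∃ t₀ : F, t₀ ≠ 0 ∧ ∃ a : AlgebraicClosure F,
    (tri n m r s (algebraMap F (AlgebraicClosure F) t₀)).eval a = 0 ∧
    ∀ i < n, ∀ j < n, a ^ Fintype.card F ^ i = a ^ Fintype.card F ^ j → i = j

/-- There are at least `n (q - 2)` pairs consisting of a good parameter in `F` and a root. If no root
had `n` conjugates, adding up the bounds of `count_le` over `k < n` would give fewer pairs. The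
assumption `2 m ≤ n` ensures `topDeg n k ≤ n (n - m)`. -/
lemma hasRoot_of_le (h : Num n m l r s) (h2m : 2 * m ≤ n) (hn : (n : F) ≠ 0) (hm : (m : F) ≠ 0)
    (hl : (l : F) ≠ 0) (hq : (6 * n.factorial) ^ 2 ≤ Fintype.card F) : HasRoot F n m r s := by
  classical
  by_contra hcon
  let K := AlgebraicClosure F
  obtain ⟨q, hqq⟩ : ∃ q, q = Fintype.card F := ⟨_, rfl⟩
  have hcast : ∀ a : ℕ, (a : F) ≠ 0 → (a : K) ≠ 0 := by
    intro a ha h'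
    apply ha
    apply (algebraMap F K).injective
    rw [map_natCast, h', map_zero]
  have hnK := hcast n hn
  obtain ⟨E, _, _, t, x, G⟩ := exists_generic K h hnK (hcast m hm) (hcast l hl)
  obtain ⟨p, _, f, hp, hpf⟩ := FiniteField.card' F
  have hF : Fact p.Prime := ⟨hp⟩
  have : CharP K p := charP_of_injective_algebraMap (algebraMap F K).injective p
  have hTq : ∀ t₀ : F, algebraMap F K t₀ ^ q = algebraMap F K t₀ := by
    intro t₀; rw [← map_pow, hqq, FiniteField.pow_card]
  let φ : K ≃+* K := iterateFrobeniusEquiv K p f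
  have hφ : ∀ a, φ a = a ^ q := fun a => by rw [hqq, hpf]; exact iterateFrobeniusEquiv_def K p f a
  let R : F → Finset K := fun t₀ => (tri n m r s (algebraMap F K t₀)).roots.toFinset
  have hmn : m < n := by have := h.add; have := h.l_pos; omega
  have hR : ∀ t₀ a, a ∈ R t₀ ↔ (tri n m r s (algebraMap F K t₀)).eval a = 0 := by
    intro t₀ a
    simp only [R, Multiset.mem_toFinset]
    rw [mem_roots (tri_monic _ _ _ _ hmn _).ne_zero]; rfl
  have hRφ : ∀ t₀ a, a ∈ R t₀ → ∀ e, a ^ q ^ e ∈ R t₀ := by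
    intro t₀ a ha e
    induction e with
    | zero => simpa using ha
    | succ e ih =>
      rw [hR] at ih ⊢
      have := tri_root_map ih φ
      rwa [hφ, hφ, hTq, ← pow_mul, ← pow_succ] at this
  let S : Finset F := Finset.univ.filter fun t₀ => Good n m l (algebraMap F K t₀)
  have hRc : ∀ t₀ ∈ S, (R t₀).card = n := by
    intro t₀ ht₀
    exact card_roots_good h hnK (Finset.mem_filter.1 ht₀).2
  have hS : q ≤ S.card + 2 := by
    have h1 : (Finset.univ \ S) ⊆ {0, (m : F) ^ m * (l : F) ^ l / (n : F) ^ n} := by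
      intro t₀ ht₀
      simp only [S, Finset.mem_sdiff, Finset.mem_univ, Finset.mem_filter, true_and] at ht₀
      by_contra hc
      simp only [Finset.mem_insert, Finset.mem_singleton, not_or] at hc
      refine ht₀ ⟨(_root_.map_ne_zero _).2 hc.1, fun h' => hc.2 ?_⟩
      rw [eq_div_iff (pow_ne_zero _ hn), mul_comm]
      apply (algebraMap F K).injective
      simpa using h'
    have h2 := Finset.card_le_card h1
    have h3 := h2.trans Finset.card_le_two
    have h4 := Finset.card_sdiff_add_card_eq_card (Finset.subset_univ S)
    rw [Finset.card_univ] at h4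
    omega
  let Z : Finset (Σ _ : F, K) := S.sigma R
  have hZ : Z.card = S.card * n := by
    rw [Finset.card_sigma, Finset.sum_congr rfl hRc, Finset.sum_const, smul_eq_mul]
  let per : (Σ _ : F, K) → ℕ := fun z => Function.minimalPeriod (fun a : K => a ^ q) z.2
  have hinj : ∀ z : (Σ _ : F, K), ∀ i < per z, ∀ j < per z, z.2 ^ q ^ i = z.2 ^ q ^ j → i = j := by
    intro z i hi j hj hij
    refine Function.iterate_injOn_Iio_minimalPeriod (f := fun a : K => a ^ q) (x := z.2) hi hj ?_
    simpa [pow_iterate] using hij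
  have hper : ∀ z : (Σ _ : F, K), z.2 ^ q ^ per z = z.2 := by
    intro z
    have := Function.isPeriodicPt_minimalPeriod (fun a : K => a ^ q) z.2
    rw [Function.IsPeriodicPt, Function.IsFixedPt, pow_iterate] at this
    exact this
  have hper_le : ∀ z ∈ Z, per z ≤ n := by
    intro z hz
    obtain ⟨hz1, hz2⟩ := Finset.mem_sigma.1 hz
    rw [← hRc z.1 hz1]
    have := Finset.card_le_card_of_injOn (s := Finset.range (per z)) (t := R z.1)
      (fun i => z.2 ^ q ^ i) (fun i _ => hRφ _ _ hz2 i) (by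
        intro i hi j hj hij
        exact hinj z i (by simpa using hi) j (by simpa using hj) hij)
    simpa using this
  have hper_pos : ∀ z ∈ Z, 0 < per z := by
    intro z hz
    obtain ⟨hz1, hz2⟩ := Finset.mem_sigma.1 hz
    obtain ⟨i, hi, j, hj, hne, hij⟩ := Finset.exists_ne_map_eq_of_card_lt_of_maps_to
      (s := Finset.range (n + 1)) (t := R z.1) (by rw [hRc _ hz1]; simp)
      (f := fun i => z.2 ^ q ^ i) (fun i _ => hRφ _ _ hz2 i)
    have key : ∀ i j : ℕ, i < j → z.2 ^ q ^ i = z.2 ^ q ^ j → 0 < per z := by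
      intro i j hlt hij
      have hφinj : Function.Injective (fun a : K => a ^ q) := by
        intro a b hab
        apply φ.injective
        rw [hφ, hφ]; exact hab
      have hi := hφinj.iterate i
      have : (fun a : K => a ^ q)^[j - i] z.2 = z.2 := by
        apply hi
        rw [← Function.iterate_add_apply, show i + (j - i) = j by omega, pow_iterate, pow_iterate]
        exact hij.symm
      exact Function.IsPeriodicPt.minimalPeriod_pos (Nat.sub_pos_of_lt hlt) this
    rcases lt_or_gt_of_ne hne with h1 | h1
    · exact key i j h1 hij
    · exact key j i h1 hij.symm
  have hper_lt : ∀ z ∈ Z, per z < n := by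
    intro z hz
    refine lt_of_le_of_ne (hper_le z hz) fun hpn => hcon ?_
    obtain ⟨hz1, hz2⟩ := Finset.mem_sigma.1 hz
    refine ⟨z.1, ?_, z.2, (hR _ _).1 hz2, ?_⟩
    · have := (Finset.mem_filter.1 hz1).2.1
      exact fun h0 => this (by rw [h0, map_zero])
    · rw [← hqq, ← hpn]; exact hinj z
  obtain ⟨n', rfl⟩ : ∃ n', n = n' + 2 := ⟨n - 2, by have := h.m_pos; omega⟩
  have hfib : Z.card = ∑ k ∈ Finset.range (n' + 1), (Z.filter fun z => per z = k + 1).card := by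
    rw [Finset.card_eq_sum_card_fiberwise (f := fun z => per z - 1) (t := Finset.range (n' + 1))]
    · refine Finset.sum_congr rfl fun k _ => ?_
      congr 1
      refine Finset.filter_congr fun z hz => ?_
      have := hper_pos z hz
      omega
    · intro z hz
      have := hper_lt z hz
      simp only [Finset.coe_range, Set.mem_Iio]
      omega
  set M := Nat.sqrt q with hMdef
  have hM : 6 * (n' + 2).factorial ≤ M := by
    rw [hMdef, Nat.le_sqrt', hqq]; exact hq
  have hMq : M * M ≤ q := Nat.sqrt_le q
  have hqM : q < (M + 1) * (M + 1) := Nat.lt_succ_sqrt q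
  have hbound : ∀ k ∈ Finset.range (n' + 1), (Z.filter fun z => per z = k + 1).card
      ≤ q + (3 * (n' + 2).descFactorial (k + 1) + 1) * (M + 2) := by
    intro k hk
    have hk' : k < n' + 1 := Finset.mem_range.1 hk
    have hd2 : 2 ≤ (n' + 2).descFactorial (k + 1) := by
      rw [Nat.succ_descFactorial_succ]
      have : (n' + 1).descFactorial k ≠ 0 := by
        rw [Ne, Nat.descFactorial_eq_zero_iff_lt]; omega
      have := Nat.pos_of_ne_zero this
      nlinarith
    have hdn : (n' + 2).descFactorial (k + 1) ≤ (n' + 2).factorial := by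
      rw [← Nat.factorial_mul_descFactorial (show k + 1 ≤ n' + 2 by omega)]
      exact Nat.le_mul_of_pos_left _ (Nat.factorial_pos _)
    refine numeric_bound hd2 (by omega) hMq hqM fun l₁ l₂ h1 h2 => ?_
    have := count_le h hnK G (Nat.succ_pos k) (by omega) (topDeg_le h.add h2m (by omega)) p f
      (hqq.trans hpf) M l₁ l₂ h1 h2
      (ι := {z // z ∈ Z.filter fun z => per z = k + 1})
      (fun z => algebraMap F K z.1.1) (fun z => z.1.2)
      (fun z w h1 h2 => Subtype.ext (Sigma.ext ((algebraMap F K).injective h1) (heq_of_eq h2)))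
      (fun z => (Finset.mem_filter.1
        (Finset.mem_sigma.1 (Finset.mem_filter.1 z.2).1).1).2)
      (fun z => hTq _)
      (fun z => (hR _ _).1 (Finset.mem_sigma.1 (Finset.mem_filter.1 z.2).1).2)
      (fun z => by
        have h3 := hper z.1
        rw [(Finset.mem_filter.1 z.2).2] at h3
        exact h3)
      (fun z => by
        have h3 := hinj z.1
        rw [(Finset.mem_filter.1 z.2).2] at h3
        exact h3)
    rwa [Fintype.card_coe] at this
  have hsum := Finset.sum_le_sum hbound
  rw [← hfib, hZ, Finset.sum_add_distrib, Finset.sum_const, Finset.card_range, ← Finset.sum_mul,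
    Finset.sum_add_distrib, ← Finset.mul_sum, Finset.sum_const, Finset.card_range] at hsum
  simp only [smul_eq_mul, mul_one] at hsum
  have hdesc := sum_desc_le n'
  have hfac : n' + 2 ≤ (n' + 2).factorial := Nat.self_le_factorial _
  generalize ∑ k ∈ Finset.range (n' + 1), (n' + 2).descFactorial (k + 1) = a at *
  have h1 : (3 * a + (n' + 1) + 3) * (M + 2) ≤ M * (M + 2) := Nat.mul_le_mul_right _ (by omega)
  have h2 : q * (n' + 2) ≤ (S.card + 2) * (n' + 2) := Nat.mul_le_mul_right _ hS
  nlinarith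

end Final

/-! ### Exchanging m and n - m, and irreducibility -/

section Symmetry

variable {F : Type u} [Field F] [Fintype F] {n m l r s : ℕ}

/-- Exchanging `m` and `n - m`: if `a` is a root of the trinomial with parameters `(n, n - m)`
and suitable exponents, then `t ^ e / a` is a root of the given one, for `e = s + 1`. -/
lemma hasRoot (h : Num n m l r s) (hn : (n : F) ≠ 0) (hm : (m : F) ≠ 0)
    (hl : (l : F) ≠ 0) (hq : (6 * n.factorial) ^ 2 ≤ Fintype.card F) : HasRoot F n m r s := by
  rcases le_total (2 * m) n with h2 | h2
  · exact hasRoot_of_le h h2 hn hm hl hq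
  have hadd := h.add; have hmp := h.m_pos; have hlp := h.l_pos; have hrp := h.r_pos
  obtain ⟨r', hr'⟩ : ∃ r', r' + s = r + (s + 1) * m := ⟨r + (s + 1) * m - s, by
    have : s ≤ (s + 1) * m := by nlinarith
    omega⟩
  obtain ⟨s', hs'⟩ : ∃ s', s' + s = (s + 1) * n := ⟨(s + 1) * n - s, by
    have : s ≤ (s + 1) * n := by nlinarith
    omega⟩
  have h' : Num n l m r' s' := by
    refine ⟨hlp, hmp, by nlinarith, by omega, h.cop.symm, ?_⟩
    have hbez := h.bez
    zify at *
    rw [hadd] at *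
    linear_combination (m : ℤ) * hs' - ((m : ℤ) + l) * hr' + hbez
  obtain ⟨t₀, ht₀, a, ha, hai⟩ := hasRoot_of_le h' (by omega) hn hl hm hq
  set τ := algebraMap F (AlgebraicClosure F) t₀ with hτ
  have hτ0 : τ ≠ 0 := (_root_.map_ne_zero _).2 ht₀
  have ha0 : a ≠ 0 := root_ne_zero h' hτ0 ha
  refine ⟨t₀, ht₀, τ ^ (s + 1) / a, ?_, ?_⟩
  · rw [tri_eval] at ha ⊢
    rw [← hτ]
    have e1 : τ ^ ((s + 1) * n) = τ ^ s' * τ ^ s := by rw [← pow_add, hs']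
    have e2 : τ ^ r * τ ^ ((s + 1) * m) = τ ^ r' * τ ^ s := by rw [← pow_add, ← pow_add, hr']
    have e3 : a ^ n = a ^ m * a ^ l := by rw [← pow_add, hadd]
    rw [div_pow, div_pow, ← pow_mul, ← pow_mul, mul_div_assoc', e1, e2, e3]
    rw [e3] at ha
    field_simp
    linear_combination τ ^ s * ha
  · intro i hi j hj hij
    apply hai i hi j hj
    have hfix : ∀ i : ℕ, (τ ^ (s + 1)) ^ Fintype.card F ^ i = τ ^ (s + 1) := by
      intro i
      rw [hτ, ← map_pow, ← map_pow, FiniteField.pow_card_pow]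
    rw [div_pow, div_pow, hfix, hfix] at hij
    have := pow_ne_zero (s + 1) hτ0
    exact inv_injective (mul_left_cancel₀ this (by simpa [div_eq_mul_inv] using hij))

/-- A root with `n` conjugates makes the trinomial its own minimal polynomial. -/
lemma irreducible_of_hasRoot (hmn : m < n) (h : HasRoot F n m r s) :
    ∃ t₀ : F, Irreducible (tri n m r s t₀) := by
  classical
  obtain ⟨t₀, -, a, ha, hai⟩ := h
  refine ⟨t₀, ?_⟩
  have hmon := tri_monic n m r s hmn t₀
  have hroot : aeval a (tri n m r s t₀) = 0 := by
    rw [aeval_def, eval₂_eq_eval_map, tri_map]; exact ha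
  have hinteg : IsIntegral F a := ⟨_, hmon, hroot⟩
  have hdvd := minpoly.dvd F a hroot
  have hconj : ∀ i, aeval (a ^ Fintype.card F ^ i) (minpoly F a) = 0 := by
    intro i
    induction i with
    | zero => simp
    | succ i ih =>
      rw [pow_succ, pow_mul, ← expand_aeval, FiniteField.expand_card, map_pow, ih,
        zero_pow Fintype.card_ne_zero]
  have hdeg : n ≤ (minpoly F a).natDegree := by
    let S : Finset (AlgebraicClosure F) :=
      (Finset.range n).image fun i => a ^ Fintype.card F ^ i
    have hS : S.card = n := by
      rw [Finset.card_image_of_injOn, Finset.card_range]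
      intro i hi j hj hij
      exact hai i (by simpa using hi) j (by simpa using hj) hij
    have h0 : (minpoly F a).map (algebraMap F (AlgebraicClosure F)) ≠ 0 :=
      ((minpoly.monic hinteg).map _).ne_zero
    rw [← hS, ← natDegree_map (algebraMap F (AlgebraicClosure F))]
    refine card_le_degree_of_subset_roots ?_
    intro b hb
    have hb' : b ∈ S := hb
    obtain ⟨i, -, rfl⟩ := Finset.mem_image.1 hb'
    rw [mem_roots h0, IsRoot, eval_map_algebraMap]
    exact hconj i
  have heq : minpoly F a = tri n m r s t₀ :=
    (eq_of_monic_of_dvd_of_natDegree_le (minpoly.monic hinteg) hmon hdvd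
      (by rw [tri_natDegree _ _ _ _ hmn]; exact hdeg)).symm
  rw [← heq]
  exact minpoly.irreducible hinteg

end Symmetry

end Trinomial

theorem stmt_8 (n m r s : ℕ) (hm : 1 ≤ m) (hmn : m < n)
    (hr : 0 < r) (hs : 0 < s)
    (hcop : Nat.Coprime m n)
    (hid : (s : ℤ) * (n - m) - r * n = 1)
    (F : Type*) [Field F] [Fintype F]
    (hchar : ¬ (ringChar F ∣ m * n * (n - m)))
    (hq : (6 * n.factorial) ^ 2 ≤ Fintype.card F) :
    ∃ t : F, Irreducible (X ^ n - C (t ^ r) * X ^ m + C (t ^ s)) := by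
  obtain ⟨l, rfl⟩ := Nat.exists_eq_add_of_lt hmn
  rw [show m + l + 1 = m + (l + 1) by ring] at *
  rw [Nat.add_sub_cancel_left] at hchar
  have hnum : Trinomial.Num (m + (l + 1)) m (l + 1) r s :=
    ⟨hm, Nat.succ_pos l, hr, rfl, by simpa using hcop, by zify; push_cast at hid; linarith⟩
  have hcast : ∀ a : ℕ, a ∣ m * (m + (l + 1)) * (l + 1) → (a : F) ≠ 0 := fun a ha h0 =>
    hchar (((ringChar.spec F a).1 h0).trans ha)
  exact Trinomial.irreducible_of_hasRoot hmn (Trinomial.hasRoot hnum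
    (hcast _ (Dvd.intro_left m rfl |>.mul_right _)) (hcast _ ((Dvd.intro _ rfl).mul_right _))
    (hcast _ (Dvd.intro_left _ rfl)) hq)
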